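/- Let ψ : ℂ[a_0, a_2, a_3, a_4, b_0, b_1, …, b_6] → ℂ[α_0,…,α_4, β_0,…,β_6, α_0^{−1}] be the map of function rings given by substituting a_i ↦ â_i and b_j ↦ b̂_j into the unique polynomial expression, and ψ̃ : ℂ[c_0, …, c_4, d_0, d_2, …, d_6] → ℂ[α_0,…,α_4, β_0,…,β_6, β_0^{−1}] the map given by substituting c_i ↦ ĉ_i and d_j ↦ d̂_j. Then ψ and ψ̃ are injective ℂ-algebra homomorphisms; the inverse of ψ on its image is given by the substitution α_i ↦ a_i (i ≠ 1), α_1 ↦ 0, β_j ↦ b_j, and the inverse of ψ̃ on its image by α_i ↦ c_i, β_j ↦ d_j (j ≠ 1), β_1 ↦ 0. Moreover, the restrictions of ψ and ψ̃ to the intersection J^{E8}_{*,*} = ℂ[a_0,a_2,a_3,a_4,b_0,…,b_6] ∩ ℂ[c_0,…,c_4,d_0,d_2,…,d_6] coincide and define an injection of J^{E8}_{*,*} into the polynomial ring ℂ[α_0,…,α_4, β_0,…,β_6]. -/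

import Mathlib

noncomputable section

open Complex Finset

namespace E8Jacobi

/-- π as a complex number. -/
def πC : ℂ := Real.pi

/-- The E8 lattice as a subset of ℝ^8. -/
def E8Lattice : Set (Fin 8 → ℝ) :=
  {x | ((∀ i, ∃ n : ℤ, x i = n) ∨ (∀ i, ∃ n : ℤ, x i = n + 1/2)) ∧ ∃ m : ℤ, ∑ i, x i = 2 * m}

/-- Complexification of a real vector. -/
def cv (x : Fin 8 → ℝ) : Fin 8 → ℂ := fun i => (x i : ℂ)

/-- The dot product on ℝ^8. -/
def dotR (x y : Fin 8 → ℝ) : ℝ := ∑ i, x i * y i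

/-- The dot product on ℂ^8. -/
def dotC (z w : Fin 8 → ℂ) : ℂ := ∑ i, z i * w i

/-- The Weyl group W(E8): orthogonal matrices preserving the E8 lattice. -/
def WeylE8 : Set (Matrix (Fin 8) (Fin 8) ℝ) :=
  {M | (∀ x y, dotR (M.mulVec x) (M.mulVec y) = dotR x y) ∧
       (∀ x ∈ E8Lattice, M.mulVec x ∈ E8Lattice) ∧
       (∀ x ∈ E8Lattice, ∃ y ∈ E8Lattice, M.mulVec y = x)}

/-- The complexified (ℂ-linear) action of a real matrix on ℂ^8. -/
def actC (M : Matrix (Fin 8) (Fin 8) ℝ) (z : Fin 8 → ℂ) : Fin 8 → ℂ :=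
  fun i => ∑ j, (M i j : ℂ) * z j

/-- A W(E8)-invariant weak Jacobi form of weight `k` and index `m`. -/
structure IsWeakJacobiFormE8 (k : ℤ) (m : ℕ) (φ : ℂ → (Fin 8 → ℂ) → ℂ) : Prop where
  holo : DifferentiableOn ℂ (fun p : ℂ × (Fin 8 → ℂ) => φ p.1 p.2) {p | 0 < p.1.im}
  weyl_inv : ∀ M ∈ WeylE8, ∀ τ : ℂ, 0 < τ.im → ∀ z, φ τ (actC M z) = φ τ z
  quasi_periodic : ∀ α ∈ E8Lattice, ∀ β ∈ E8Lattice, ∀ τ : ℂ, 0 < τ.im → ∀ z,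
    φ τ (fun i => z i + τ * (α i : ℂ) + (β i : ℂ)) =
      Complex.exp (-(m : ℂ) * πC * I * (τ * dotC (cv α) (cv α) + 2 * dotC z (cv α))) * φ τ z
  modular : ∀ a b c d : ℤ, a * d - b * c = 1 → ∀ τ : ℂ, 0 < τ.im → ∀ z,
    φ (((a : ℂ) * τ + (b : ℂ)) / ((c : ℂ) * τ + (d : ℂ))) (fun i => z i / ((c : ℂ) * τ + (d : ℂ))) =
      ((c : ℂ) * τ + (d : ℂ)) ^ k *
        Complex.exp ((m : ℂ) * πC * I * (c : ℂ) / ((c : ℂ) * τ + (d : ℂ)) * dotC z z) * φ τ z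
  fourier : ∃ co : ℕ → E8Lattice → ℂ, ∀ τ : ℂ, 0 < τ.im → ∀ z,
    φ τ z = ∑' (n : ℕ) (w : E8Lattice), co n w *
      Complex.exp (2 * πC * I * dotC (cv w.1) z) * Complex.exp (2 * πC * I * τ) ^ n

/-- Membership in the ring J^{E8}_{*,*} of W(E8)-invariant weak Jacobi forms:
a finite sum of weak Jacobi forms of various weights and indices. -/
def MemJE8 (φ : ℂ → (Fin 8 → ℂ) → ℂ) : Prop :=
  ∃ (n : ℕ) (k : Fin n → ℤ) (m : Fin n → ℕ) (ψ : Fin n → ℂ → (Fin 8 → ℂ) → ℂ),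
    (∀ i, IsWeakJacobiFormE8 (k i) (m i) (ψ i)) ∧
    ∀ τ : ℂ, 0 < τ.im → ∀ z, φ τ z = ∑ i, ψ i τ z

/-- The nome q = e^{2πiτ}. -/
def qExp (τ : ℂ) : ℂ := Complex.exp (2 * πC * I * τ)

/-- The Eisenstein series E4. -/
def E4 (τ : ℂ) : ℂ :=
  1 + 240 * ∑' n : ℕ+, (n : ℂ) ^ 3 * qExp τ ^ (n : ℕ) / (1 - qExp τ ^ (n : ℕ))

/-- The Eisenstein series E6. -/
def E6 (τ : ℂ) : ℂ :=
  1 - 504 * ∑' n : ℕ+, (n : ℂ) ^ 5 * qExp τ ^ (n : ℕ) / (1 - qExp τ ^ (n : ℕ))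

/-- The modular discriminant Δ. -/
def Dl (τ : ℂ) : ℂ := (E4 τ ^ 3 - E6 τ ^ 2) / 1728

/-- The Dedekind eta function. -/
def etaF (τ : ℂ) : ℂ := Complex.exp (2 * πC * I * τ / 24) * ∏' n : ℕ, (1 - qExp τ ^ (n + 1))

/-- The theta function of the E8 lattice. -/
def Theta (τ : ℂ) (z : Fin 8 → ℂ) : ℂ :=
  ∑' w : E8Lattice, Complex.exp (πC * I * τ * dotC (cv w.1) (cv w.1) + 2 * πC * I * dotC z (cv w.1))

/-- The Jacobi theta function θ1. -/
def th1 (z τ : ℂ) : ℂ :=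
  I * ∑' n : ℤ, (-1 : ℂ) ^ n * Complex.exp (2 * πC * I * z * ((n : ℂ) - 1/2)) *
    Complex.exp (πC * I * τ * ((n : ℂ) - 1/2) ^ 2)

/-- The Jacobi theta function θ2. -/
def th2 (z τ : ℂ) : ℂ :=
  ∑' n : ℤ, Complex.exp (2 * πC * I * z * ((n : ℂ) - 1/2)) *
    Complex.exp (πC * I * τ * ((n : ℂ) - 1/2) ^ 2)

/-- The Jacobi theta function θ3. -/
def th3 (z τ : ℂ) : ℂ :=
  ∑' n : ℤ, Complex.exp (2 * πC * I * z * (n : ℂ)) * Complex.exp (πC * I * τ * (n : ℂ) ^ 2)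

/-- The Jacobi theta function θ4. -/
def th4 (z τ : ℂ) : ℂ :=
  ∑' n : ℤ, (-1 : ℂ) ^ n * Complex.exp (2 * πC * I * z * (n : ℂ)) *
    Complex.exp (πC * I * τ * (n : ℂ) ^ 2)

/-- A1 = Θ(τ,z). -/
def A1 (τ : ℂ) (z : Fin 8 → ℂ) : ℂ := Theta τ z

/-- A_m for m = 2, 3, 5. -/
def AM (m : ℕ) (τ : ℂ) (z : Fin 8 → ℂ) : ℂ :=
  ((m : ℂ) ^ 3 / ((m : ℂ) ^ 3 + 1)) *
    (Theta ((m : ℂ) * τ) (fun i => (m : ℂ) * z i) +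
      ((m : ℂ) ^ 4)⁻¹ * ∑ k ∈ Finset.range m, Theta ((τ + (k : ℂ)) / (m : ℂ)) z)

def A2 : ℂ → (Fin 8 → ℂ) → ℂ := AM 2
def A3 : ℂ → (Fin 8 → ℂ) → ℂ := AM 3
def A5 : ℂ → (Fin 8 → ℂ) → ℂ := AM 5

/-- A4 = Θ(τ,2z). -/
def A4 (τ : ℂ) (z : Fin 8 → ℂ) : ℂ := Theta τ (fun i => 2 * z i)

def ee1 (τ : ℂ) : ℂ := (th3 0 τ ^ 4 + th4 0 τ ^ 4) / 12
def ee2 (τ : ℂ) : ℂ := (th2 0 τ ^ 4 - th4 0 τ ^ 4) / 12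
def ee3 (τ : ℂ) : ℂ := (-th2 0 τ ^ 4 - th3 0 τ ^ 4) / 12
def h0 (τ : ℂ) : ℂ := th3 0 (2*τ) * th3 0 (6*τ) + th2 0 (2*τ) * th2 0 (6*τ)

def B2 (τ : ℂ) (z : Fin 8 → ℂ) : ℂ :=
  (32/5) * (ee1 τ * Theta (2*τ) (fun i => 2 * z i)
    + (1/2^4) * ee3 τ * Theta (τ/2) z + (1/2^4) * ee2 τ * Theta ((τ+1)/2) z)

def B3 (τ : ℂ) (z : Fin 8 → ℂ) : ℂ :=
  (81/80) * (h0 τ ^ 2 * Theta (3*τ) (fun i => 3 * z i)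
    - (1/3^5) * ∑ k ∈ Finset.range 3, h0 ((τ + (k:ℂ))/3) ^ 2 * Theta ((τ + (k:ℂ))/3) z)

def B4 (τ : ℂ) (z : Fin 8 → ℂ) : ℂ :=
  (16/15) * (th4 0 (2*τ) ^ 4 * Theta (4*τ) (fun i => 4 * z i)
    - (1/2^4) * th4 0 (2*τ) ^ 4 * Theta (τ + 1/2) (fun i => 2 * z i)
    - (1/(2^2 * 4^4)) * ∑ k ∈ Finset.range 4, th2 0 ((τ + (k:ℂ))/2) ^ 4 * Theta ((τ + (k:ℂ))/4) z)

def B6 (τ : ℂ) (z : Fin 8 → ℂ) : ℂ :=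
  (9/10) * (h0 τ ^ 2 * Theta (6*τ) (fun i => 6 * z i)
    + (1/2^4) * ∑ k ∈ Finset.range 2, h0 (τ + (k:ℂ)) ^ 2 * Theta ((3*τ + 3*(k:ℂ))/2) (fun i => 3 * z i)
    - (1/(3 * 3^4)) * ∑ k ∈ Finset.range 3, h0 ((τ + (k:ℂ))/3) ^ 2 * Theta ((2*τ + 2*(k:ℂ))/3) (fun i => 2 * z i)
    - (1/(3 * 6^4)) * ∑ k ∈ Finset.range 6, h0 ((τ + (k:ℂ))/3) ^ 2 * Theta ((τ + (k:ℂ))/6) z)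

/-- The nine basic W(E8)-invariant holomorphic Jacobi forms A1,…,A5,B2,…,B6. -/
def nineForms : Fin 9 → ℂ → (Fin 8 → ℂ) → ℂ := ![A1, A2, A3, A4, A5, B2, B3, B4, B6]

/- The basic meromorphic Jacobi forms a_i, b_j (Appendix A of the paper). -/

def a0f (τ : ℂ) (_z : Fin 8 → ℂ) : ℂ := E4 τ / 12

def a2f (τ : ℂ) (z : Fin 8 → ℂ) : ℂ :=
  6 / (E4 τ * Dl τ) * (-(E4 τ) * A2 τ z + A1 τ z ^ 2)

def a3f (τ : ℂ) (z : Fin 8 → ℂ) : ℂ :=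
  1 / (9 * E4 τ ^ 2 * Dl τ ^ 2) *
    (-7 * E4 τ ^ 2 * E6 τ * A3 τ z - 20 * E4 τ ^ 3 * B3 τ z
      - 9 * E4 τ * E6 τ * A1 τ z * A2 τ z + 30 * E4 τ ^ 2 * A1 τ z * B2 τ z
      + 6 * E6 τ * A1 τ z ^ 3)

def a4f (τ : ℂ) (z : Fin 8 → ℂ) : ℂ :=
  1 / (288 * E4 τ ^ 3 * Dl τ ^ 3) *
    (576 * E4 τ ^ 3 * Dl τ * A4 τ z + 32256 * E4 τ ^ 2 * Dl τ * A1 τ z * A3 τ z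
      - 9 * E4 τ ^ 5 * A2 τ z ^ 2 - 30 * E4 τ ^ 3 * E6 τ * A2 τ z * B2 τ z
      - 25 * E4 τ ^ 4 * B2 τ z ^ 2
      + (60 * E4 τ ^ 4 - 12 * E4 τ * E6 τ ^ 2) * A1 τ z ^ 2 * A2 τ z
      + 80 * E4 τ ^ 2 * E6 τ * A1 τ z ^ 2 * B2 τ z
      + (-70 * E4 τ ^ 3 + 6 * E6 τ ^ 2) * A1 τ z ^ 4)

def b0f (τ : ℂ) (_z : Fin 8 → ℂ) : ℂ := E6 τ / 216

def b1f (τ : ℂ) (z : Fin 8 → ℂ) : ℂ := -4 / E4 τ * A1 τ z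

def b2f (τ : ℂ) (z : Fin 8 → ℂ) : ℂ :=
  5 / (6 * E4 τ ^ 2 * Dl τ) * (E4 τ ^ 2 * B2 τ z - E6 τ * A1 τ z ^ 2)

def b3f (τ : ℂ) (z : Fin 8 → ℂ) : ℂ :=
  1 / (108 * E4 τ ^ 3 * Dl τ ^ 2) *
    (-7 * E4 τ ^ 5 * A3 τ z - 20 * E4 τ ^ 3 * E6 τ * B3 τ z
      - 9 * E4 τ ^ 4 * A1 τ z * A2 τ z + 30 * E4 τ ^ 2 * E6 τ * A1 τ z * B2 τ z
      + (16 * E4 τ ^ 3 - 10 * E6 τ ^ 2) * A1 τ z ^ 3)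

def b4f (τ : ℂ) (z : Fin 8 → ℂ) : ℂ :=
  1 / (1728 * E4 τ ^ 4 * Dl τ ^ 3) *
    (-8640 * E4 τ ^ 4 * Dl τ * B4 τ z + 138240 * E4 τ ^ 3 * Dl τ * A1 τ z * B3 τ z
      + 9 * E4 τ ^ 5 * E6 τ * A2 τ z ^ 2 + 30 * E4 τ ^ 6 * A2 τ z * B2 τ z
      + 25 * E4 τ ^ 4 * E6 τ * B2 τ z ^ 2
      - 48 * E4 τ ^ 4 * E6 τ * A1 τ z ^ 2 * A2 τ z
      + (-140 * E4 τ ^ 5 + 60 * E4 τ ^ 2 * E6 τ ^ 2) * A1 τ z ^ 2 * B2 τ z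
      + (74 * E4 τ ^ 3 * E6 τ - 10 * E6 τ ^ 3) * A1 τ z ^ 4)

def b5f (τ : ℂ) (z : Fin 8 → ℂ) : ℂ :=
  1 / (72 * E4 τ ^ 5 * Dl τ ^ 3) *
    (-36288 * E4 τ ^ 4 * Dl τ * A5 τ z - 294 * E4 τ ^ 6 * A2 τ z * A3 τ z
      - 770 * E4 τ ^ 4 * E6 τ * B2 τ z * A3 τ z - 840 * E4 τ ^ 4 * E6 τ * A2 τ z * B3 τ z
      - 2200 * E4 τ ^ 5 * B2 τ z * B3 τ z + 168 * E4 τ ^ 5 * A1 τ z ^ 2 * A3 τ z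
      + 480 * E4 τ ^ 3 * E6 τ * A1 τ z ^ 2 * B3 τ z - 621 * E4 τ ^ 5 * A1 τ z * A2 τ z ^ 2
      + 3525 * E4 τ ^ 4 * A1 τ z * B2 τ z ^ 2 + 1224 * E4 τ ^ 4 * A1 τ z ^ 3 * A2 τ z
      - 240 * E4 τ ^ 2 * E6 τ * A1 τ z ^ 3 * B2 τ z
      + (-456 * E4 τ ^ 3 + 24 * E6 τ ^ 2) * A1 τ z ^ 5)

def b6f (τ : ℂ) (z : Fin 8 → ℂ) : ℂ :=
  1 / (4478976 * E4 τ ^ 6 * Dl τ ^ 5) *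
    (-19906560 * E4 τ ^ 6 * Dl τ ^ 2 * B6 τ z
      - 188116992 * E4 τ ^ 4 * E6 τ * Dl τ ^ 2 * A1 τ z * A5 τ z
      - 5184 * E4 τ ^ 7 * E6 τ * Dl τ * A2 τ z * A4 τ z
      - 8640 * E4 τ ^ 8 * Dl τ * B2 τ z * A4 τ z
      - 103680 * E4 τ ^ 8 * Dl τ * A2 τ z * B4 τ z
      - 172800 * E4 τ ^ 6 * E6 τ * Dl τ * B2 τ z * B4 τ z
      + 12672 * E4 τ ^ 6 * E6 τ * Dl τ * A1 τ z ^ 2 * A4 τ z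
      + 17280 * (5 * E4 τ ^ 7 + 9 * E4 τ ^ 4 * E6 τ ^ 2) * Dl τ * A1 τ z ^ 2 * B4 τ z
      + 112896 * E4 τ ^ 7 * E6 τ * Dl τ * A3 τ z ^ 2
      + 645120 * E4 τ ^ 8 * Dl τ * A3 τ z * B3 τ z
      + 921600 * E4 τ ^ 6 * E6 τ * Dl τ * B3 τ z ^ 2
      - 1717632 * E4 τ ^ 6 * E6 τ * Dl τ * A1 τ z * A2 τ z * A3 τ z
      - 362880 * (4 * E4 τ ^ 7 + 11 * E4 τ ^ 4 * E6 τ ^ 2) * Dl τ * A1 τ z * B2 τ z * A3 τ z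
      + 483840 * (4 * E4 τ ^ 7 - 9 * E4 τ ^ 4 * E6 τ ^ 2) * Dl τ * A1 τ z * A2 τ z * B3 τ z
      - 11404800 * E4 τ ^ 5 * E6 τ * Dl τ * A1 τ z * B2 τ z * B3 τ z
      + 1161216 * E4 τ ^ 5 * E6 τ * Dl τ * A1 τ z ^ 3 * A3 τ z
      - 92160 * (37 * E4 τ ^ 6 - 9 * E4 τ ^ 3 * E6 τ ^ 2) * Dl τ * A1 τ z ^ 3 * B3 τ z
      + (135 * E4 τ ^ 9 * E6 τ + 54 * E4 τ ^ 6 * E6 τ ^ 3) * A2 τ z ^ 3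
      + (405 * E4 τ ^ 10 + 540 * E4 τ ^ 7 * E6 τ ^ 2) * A2 τ z ^ 2 * B2 τ z
      + 1575 * E4 τ ^ 8 * E6 τ * A2 τ z * B2 τ z ^ 2
      + (375 * E4 τ ^ 9 + 500 * E4 τ ^ 6 * E6 τ ^ 2) * B2 τ z ^ 3
      + (-3159 * E4 τ ^ 8 * E6 τ + 1701 * E4 τ ^ 5 * E6 τ ^ 3) * A1 τ z ^ 2 * A2 τ z ^ 2
      + (-3060 * E4 τ ^ 9 - 1800 * E4 τ ^ 6 * E6 τ ^ 2) * A1 τ z ^ 2 * A2 τ z * B2 τ z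
      + (6975 * E4 τ ^ 7 * E6 τ - 11025 * E4 τ ^ 4 * E6 τ ^ 3) * A1 τ z ^ 2 * B2 τ z ^ 2
      + (6768 * E4 τ ^ 7 * E6 τ - 3024 * E4 τ ^ 4 * E6 τ ^ 3) * A1 τ z ^ 4 * A2 τ z
      + (4260 * E4 τ ^ 8 + 1800 * E4 τ ^ 5 * E6 τ ^ 2 + 180 * E4 τ ^ 2 * E6 τ ^ 4) * A1 τ z ^ 4 * B2 τ z
      + (-3692 * E4 τ ^ 6 * E6 τ + 504 * E4 τ ^ 3 * E6 τ ^ 3 - 12 * E6 τ ^ 5) * A1 τ z ^ 6)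

/-- The Seiberg–Witten coefficients a_0, …, a_4 (a_1 = 0). -/
def aSW : ℕ → ℂ → (Fin 8 → ℂ) → ℂ
  | 0 => a0f
  | 2 => a2f
  | 3 => a3f
  | 4 => a4f
  | _ => fun _ _ => 0

/-- The Seiberg–Witten coefficients b_0, …, b_6. -/
def bSW : ℕ → ℂ → (Fin 8 → ℂ) → ℂ
  | 0 => b0f
  | 1 => b1f
  | 2 => b2f
  | 3 => b3f
  | 4 => b4f
  | 5 => b5f
  | 6 => b6f
  | _ => fun _ _ => 0

/-- The translation parameter −b₁/(6b₀). -/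
def uShift (τ : ℂ) (z : Fin 8 → ℂ) : ℂ := -(bSW 1 τ z) / (6 * bSW 0 τ z)

/-- The coefficients c_i. -/
def cSW (i : ℕ) (τ : ℂ) (z : Fin 8 → ℂ) : ℂ :=
  ∑ j ∈ Finset.range (i+1), aSW j τ z * (Nat.choose (4-j) (4-i) : ℂ) * uShift τ z ^ (i-j)

/-- The coefficients d_j. -/
def dSW (j : ℕ) (τ : ℂ) (z : Fin 8 → ℂ) : ℂ :=
  ∑ l ∈ Finset.range (j+1), bSW l τ z * (Nat.choose (6-l) (6-j) : ℂ) * uShift τ z ^ (j-l)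

/-- Points of the upper half-plane avoiding the zeros of E4, E6 and Δ
(where all the meromorphic Jacobi forms above are defined). -/
def GoodTau (τ : ℂ) : Prop := 0 < τ.im ∧ E4 τ ≠ 0 ∧ E6 τ ≠ 0 ∧ Dl τ ≠ 0

/-- The eleven generators a_0, a_2, a_3, a_4, b_0, …, b_6 of R. -/
def abGens : Fin 11 → ℂ → (Fin 8 → ℂ) → ℂ :=
  ![aSW 0, aSW 2, aSW 3, aSW 4, bSW 0, bSW 1, bSW 2, bSW 3, bSW 4, bSW 5, bSW 6]

/-- The eleven generators c_0, …, c_4, d_0, d_2, …, d_6 of R̃. -/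
def cdGens : Fin 11 → ℂ → (Fin 8 → ℂ) → ℂ :=
  ![cSW 0, cSW 1, cSW 2, cSW 3, cSW 4, dSW 0, dSW 2, dSW 3, dSW 4, dSW 5, dSW 6]

/-- Membership in the polynomial ring R = ℂ[a_0,a_2,a_3,a_4,b_0,…,b_6]
(as meromorphic functions on ℍ × ℂ^8). -/
def MemR (φ : ℂ → (Fin 8 → ℂ) → ℂ) : Prop :=
  ∃ P : MvPolynomial (Fin 11) ℂ, ∀ τ : ℂ, GoodTau τ → ∀ z,
    φ τ z = MvPolynomial.eval (fun i => abGens i τ z) P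

/-- Membership in the polynomial ring R̃ = ℂ[c_0,…,c_4,d_0,d_2,…,d_6]
(as meromorphic functions on ℍ × ℂ^8). -/
def MemRt (φ : ℂ → (Fin 8 → ℂ) → ℂ) : Prop :=
  ∃ P : MvPolynomial (Fin 11) ℂ, ∀ τ : ℂ, GoodTau τ → ∀ z,
    φ τ z = MvPolynomial.eval (fun i => cdGens i τ z) P

/- Invariant theory of binary forms. -/

/-- `BinTrans n T α α'` says that `α'` is the coefficient family of the degree-`n`
binary form with coefficients `α` transformed by `T ∈ SL2(ℂ)`. -/
def BinTrans (n : ℕ) (T : Matrix (Fin 2) (Fin 2) ℂ) (α α' : ℕ → ℂ) : Prop :=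
  ∀ u v : ℂ,
    ∑ j ∈ Finset.range (n+1), α' j * u ^ (n - j) * v ^ j
      = ∑ i ∈ Finset.range (n+1), α i * (T 0 0 * u + T 0 1 * v) ^ (n - i) *
          (T 1 0 * u + T 1 1 * v) ^ i

/-- Variables for polynomials in the coefficients of a binary quartic and sextic. -/
abbrev SV := Fin 5 ⊕ Fin 7

/-- Evaluation of a polynomial in the coefficients of the quartic and sextic. -/
def evalSV (Φ : MvPolynomial SV ℂ) (α β : ℕ → ℂ) : ℂ :=
  MvPolynomial.eval (Sum.elim (fun i : Fin 5 => α i.1) (fun j : Fin 7 => β j.1)) Φ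

/-- Membership in the ring of joint semiinvariants ℂ[V4 ⊕ V6]^{U2(ℂ)}. -/
def IsSemiinvRingElem (Φ : MvPolynomial SV ℂ) : Prop :=
  ∀ κ : ℂ, ∀ α α' β β' : ℕ → ℂ,
    BinTrans 4 !![1, κ; 0, 1] α α' → BinTrans 6 !![1, κ; 0, 1] β β' →
      evalSV Φ α' β' = evalSV Φ α β

/-- Membership in the ring of joint invariants ℂ[V4 ⊕ V6]^{SL2(ℂ)}. -/
def IsInvRingElem (Φ : MvPolynomial SV ℂ) : Prop :=
  ∀ T : Matrix (Fin 2) (Fin 2) ℂ, T.det = 1 → ∀ α α' β β' : ℕ → ℂ,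
    BinTrans 4 T α α' → BinTrans 6 T β β' → evalSV Φ α' β' = evalSV Φ α β

/-- Variables for joint covariants: coefficients of the two forms together with (u,v). -/
abbrev CVV := (Fin 5 ⊕ Fin 7) ⊕ Fin 2

/-- Evaluation of a polynomial in the coefficients and (u,v). -/
def evalCov (Ψ : MvPolynomial CVV ℂ) (α β : ℕ → ℂ) (u v : ℂ) : ℂ :=
  MvPolynomial.eval
    (Sum.elim (Sum.elim (fun i : Fin 5 => α i.1) (fun j : Fin 7 => β j.1))
      (fun p : Fin 2 => if p = 0 then u else v)) Ψ

/-- Membership in the ring of joint covariants ℂ[V4 ⊕ V6 ⊕ ℂ²]^{SL2(ℂ)}. -/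
def IsCovRingElem (Ψ : MvPolynomial CVV ℂ) : Prop :=
  ∀ T : Matrix (Fin 2) (Fin 2) ℂ, T.det = 1 → ∀ α α' β β' : ℕ → ℂ,
    BinTrans 4 T α α' → BinTrans 6 T β β' → ∀ u v : ℂ,
      evalCov Ψ α' β' u v = evalCov Ψ α β (T 0 0 * u + T 0 1 * v) (T 1 0 * u + T 1 1 * v)

/-- â_i in ℂ[α, β, α₀⁻¹]. -/
def ahat (α : ℕ → ℂ) (i : ℕ) : ℂ :=
  ∑ j ∈ Finset.range (i+1), α j * (Nat.choose (4-j) (4-i) : ℂ) * (-(α 1)/(4 * α 0)) ^ (i-j)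

/-- b̂_i in ℂ[α, β, α₀⁻¹]. -/
def bhat (α β : ℕ → ℂ) (i : ℕ) : ℂ :=
  ∑ j ∈ Finset.range (i+1), β j * (Nat.choose (6-j) (6-i) : ℂ) * (-(α 1)/(4 * α 0)) ^ (i-j)

/-- ĉ_i in ℂ[α, β, β₀⁻¹]. -/
def chat (α β : ℕ → ℂ) (i : ℕ) : ℂ :=
  ∑ j ∈ Finset.range (i+1), α j * (Nat.choose (4-j) (4-i) : ℂ) * (-(β 1)/(6 * β 0)) ^ (i-j)

/-- d̂_i in ℂ[α, β, β₀⁻¹]. -/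
def dhat (β : ℕ → ℂ) (i : ℕ) : ℂ :=
  ∑ j ∈ Finset.range (i+1), β j * (Nat.choose (6-j) (6-i) : ℂ) * (-(β 1)/(6 * β 0)) ^ (i-j)

/-- The images of the eleven generators of R under ψ. -/
def hatGens (α β : ℕ → ℂ) : Fin 11 → ℂ :=
  ![ahat α 0, ahat α 2, ahat α 3, ahat α 4, bhat α β 0, bhat α β 1, bhat α β 2,
    bhat α β 3, bhat α β 4, bhat α β 5, bhat α β 6]

/-- The images of the eleven generators of R̃ under ψ̃. -/
def cdhatGens (α β : ℕ → ℂ) : Fin 11 → ℂ :=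
  ![chat α β 0, chat α β 1, chat α β 2, chat α β 3, chat α β 4, dhat β 0, dhat β 2,
    dhat β 3, dhat β 4, dhat β 5, dhat β 6]

/-- Weights picking out the a-variables among the eleven generators. -/
def wA : Fin 11 → ℕ := ![1, 1, 1, 1, 0, 0, 0, 0, 0, 0, 0]

/-- Weights picking out the b-variables among the eleven generators. -/
def wB : Fin 11 → ℕ := ![0, 0, 0, 0, 1, 1, 1, 1, 1, 1, 1]

/-- Weights picking out the α-variables. -/
def wSVα : SV → ℕ := Sum.elim (fun _ => 1) (fun _ => 0)

/-- Weights picking out the β-variables. -/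
def wSVβ : SV → ℕ := Sum.elim (fun _ => 0) (fun _ => 1)

/-- A joint semiinvariant of the quartic and sextic, of degrees (da, db) and order ω. -/
def IsSemiinvOf (Φ : MvPolynomial SV ℂ) (da db : ℕ) (ω : ℤ) : Prop :=
  MvPolynomial.IsWeightedHomogeneous wSVα Φ da ∧
  MvPolynomial.IsWeightedHomogeneous wSVβ Φ db ∧
  IsSemiinvRingElem Φ ∧
  ∀ l : ℂ, l ≠ 0 → ∀ α α' β β' : ℕ → ℂ,
    BinTrans 4 !![l, 0; 0, l⁻¹] α α' → BinTrans 6 !![l, 0; 0, l⁻¹] β β' →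
      evalSV Φ α' β' = l ^ ω * evalSV Φ α β

/-- Substitution α_i ↦ a_i (with a_1 = 0), β_j ↦ b_j into a polynomial in (α, β). -/
def subAB (Φ : MvPolynomial SV ℂ) : ℂ → (Fin 8 → ℂ) → ℂ :=
  fun τ z => MvPolynomial.eval
    (Sum.elim (fun i : Fin 5 => aSW i.1 τ z) (fun j : Fin 7 => bSW j.1 τ z)) Φ

/-- The graph of the map ψ_J : a Jacobi form φ = Q(a_i, b_j) is sent to the
polynomial Φ = Q(â_i, b̂_j). -/
def PsiJRel (φ : ℂ → (Fin 8 → ℂ) → ℂ) (Φ : MvPolynomial SV ℂ) : Prop :=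
  ∃ Q : MvPolynomial (Fin 11) ℂ,
    (∀ τ : ℂ, GoodTau τ → ∀ z, φ τ z = MvPolynomial.eval (fun i => abGens i τ z) Q) ∧
    (∀ α β : ℕ → ℂ, α 0 ≠ 0 → evalSV Φ α β = MvPolynomial.eval (hatGens α β) Q)

/-! The families `a, b`, `c, d` and the substitutions `â, b̂`, `ĉ, d̂` are the coefficients of the
same pair of a quartic and a sextic in `u`, up to a translation of `u` normalizing one of the two.
Normalizing twice is the same as normalizing once, which inverts `ψ` and `ψ̃`, and an element
`Q(a, b) = Q'(c, d)` of the intersection gives the identity `Q(â, b̂) = Q'(ĉ, d̂)` as soon as the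
eleven functions `a, b` are algebraically independent. Its two sides have as denominators powers of
`α 0` and of `β 0`, which are coprime, so both are polynomials.

For the independence, fix `τ`. By quasi-periodicity in `z` a relation is homogeneous for the
index, so it holds on the cone over the image of the nine forms `A_m, B_m`. This cone contains an
open set because the Jacobian determinant of the nine forms does not vanish at a suitable `z` near
the cusp: its formal expansion in `q` is nonzero modulo 37. Since the generators other than
`a_0, b_0` take arbitrary values as the nine forms vary, a relation can only involve `E4` and `E6`,
and these are algebraically independent by modularity. -/

/-! ### Functions with polynomial numerators -/

section Cleared

variable {X σ k : Type*} [Field k]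

/-- `f` belongs to the localization `k[σ][d⁻¹]`, where a point `x : X` has coordinates `pt x`:
some `d ^ N * f` is given by a polynomial wherever `d` does not vanish. -/
def IsCleared (pt : X → σ → k) (d : MvPolynomial σ k) (f : X → k) : Prop :=
  ∃ (N : ℕ) (P : MvPolynomial σ k), ∀ x, MvPolynomial.eval (pt x) d ≠ 0 →
    MvPolynomial.eval (pt x) d ^ N * f x = MvPolynomial.eval (pt x) P

theorem eq_of_eval_eq_of_eval_ne_zero [Infinite k] {d : MvPolynomial σ k} (hd : d ≠ 0)
    {P Q : MvPolynomial σ k}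
    (h : ∀ v, MvPolynomial.eval v d ≠ 0 → MvPolynomial.eval v P = MvPolynomial.eval v Q) :
    P = Q := by
  refine mul_left_cancel₀ hd (MvPolynomial.funext fun v => ?_)
  by_cases hv : MvPolynomial.eval v d = 0
  · simp [hv]
  · simp [h v hv]

namespace IsCleared

variable {pt : X → σ → k} {d e : MvPolynomial σ k} {f g : X → k}

theorem eval (P : MvPolynomial σ k) : IsCleared pt d (fun x => MvPolynomial.eval (pt x) P) :=
  ⟨0, P, fun x _ => by simp⟩

theorem const (c : k) : IsCleared pt d (fun _ => c) := by simpa using eval (MvPolynomial.C c)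

theorem add (hf : IsCleared pt d f) (hg : IsCleared pt d g) :
    IsCleared pt d (fun x => f x + g x) := by
  obtain ⟨N, P, hP⟩ := hf
  obtain ⟨M, Q, hQ⟩ := hg
  refine ⟨N + M, d ^ M * P + d ^ N * Q, fun x hx => ?_⟩
  simp only [map_add, map_mul, map_pow, ← hP x hx, ← hQ x hx]
  ring

theorem mul (hf : IsCleared pt d f) (hg : IsCleared pt d g) :
    IsCleared pt d (fun x => f x * g x) := by
  obtain ⟨N, P, hP⟩ := hf
  obtain ⟨M, Q, hQ⟩ := hg
  refine ⟨N + M, P * Q, fun x hx => ?_⟩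
  simp only [map_mul, ← hP x hx, ← hQ x hx]
  ring

theorem pow (hf : IsCleared pt d f) (n : ℕ) : IsCleared pt d (fun x => f x ^ n) := by
  induction n with
  | zero => simpa using const 1
  | succ n ih => simpa only [pow_succ] using ih.mul hf

theorem sum {ι : Type*} (s : Finset ι) {F : ι → X → k} (h : ∀ i ∈ s, IsCleared pt d (F i)) :
    IsCleared pt d (fun x => ∑ i ∈ s, F i x) := by
  classical
  induction s using Finset.induction_on with
  | empty => simpa using const 0
  | insert a s ha ih =>
    simp only [sum_insert ha]
    exact (h a (mem_insert_self a s)).add (ih fun i hi => h i (mem_insert_of_mem hi))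

theorem inv_denom : IsCleared pt d (fun x => (MvPolynomial.eval (pt x) d)⁻¹) :=
  ⟨1, 1, fun x hx => by simp [hx]⟩

theorem eval_comp {ι : Type*} {G : X → ι → k} (hG : ∀ i, IsCleared pt d (fun x => G x i))
    (Q : MvPolynomial ι k) : IsCleared pt d (fun x => MvPolynomial.eval (G x) Q) := by
  induction Q using MvPolynomial.induction_on with
  | C a => simpa using const a
  | add p q hp hq => simpa using hp.add hq
  | mul_X p i hp => simpa using hp.mul (hG i)

theorem exists_eval_eq_of_isRelPrime [Infinite k] (hpt : pt.Surjective) (hf : IsCleared pt d f)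
    (hg : IsCleared pt e g) (hd : d ≠ 0) (he : e ≠ 0) (hde : IsRelPrime d e)
    (hfg : ∀ x, MvPolynomial.eval (pt x) d ≠ 0 → MvPolynomial.eval (pt x) e ≠ 0 → f x = g x) :
    ∃ Φ : MvPolynomial σ k, ∀ x, MvPolynomial.eval (pt x) d ≠ 0 →
      MvPolynomial.eval (pt x) Φ = f x := by
  obtain ⟨N, P, hP⟩ := hf
  obtain ⟨M, Q, hQ⟩ := hg
  have hPQ : e ^ M * P = d ^ N * Q := by
    refine eq_of_eval_eq_of_eval_ne_zero (mul_ne_zero hd he) fun v hv => ?_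
    obtain ⟨x, rfl⟩ := hpt v
    rw [map_mul] at hv
    have hdx := left_ne_zero_of_mul hv
    have hex := right_ne_zero_of_mul hv
    simp only [map_mul, map_pow, ← hP x hdx, ← hQ x hex, hfg x hdx hex]
    ring
  obtain ⟨Φ, rfl⟩ : d ^ N ∣ P := hde.pow.dvd_of_dvd_mul_left ⟨Q, hPQ⟩
  refine ⟨Φ, fun x hx => ?_⟩
  have := hP x hx
  rw [map_mul, map_pow] at this
  exact (mul_left_cancel₀ (pow_ne_zero N hx) this).symm

end IsCleared

end Cleared

/-! ### Translation of the variable of a polynomial -/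

section Translate

variable {R : Type*} [CommSemiring R]

/-- The coefficients of `F (u + s)`, in decreasing order, where
`F u = ∑ j ≤ n, α j * u ^ (n - j)`. -/
def translate (n : ℕ) (α : ℕ → R) (s : R) (i : ℕ) : R :=
  ∑ j ∈ range (i + 1), α j * ((n - j).choose (n - i) : R) * s ^ (i - j)

/-- The polynomial of degree at most `n` with coefficients `α 0, …, α n`, in decreasing order. -/
def descPolynomial (n : ℕ) (α : ℕ → R) : Polynomial R :=
  ∑ j ∈ range (n + 1), Polynomial.monomial (n - j) (α j)

theorem descPolynomial_coeff {n : ℕ} {P : Polynomial R} (hP : P.natDegree ≤ n) :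
    descPolynomial n (fun i => P.coeff (n - i)) = P := by
  conv_rhs => rw [P.as_sum_range' (n + 1) (Nat.lt_succ_of_le hP), ← sum_range_reflect]
  rfl

theorem natDegree_descPolynomial_le (n : ℕ) (α : ℕ → R) : (descPolynomial n α).natDegree ≤ n :=
  Polynomial.natDegree_sum_le_of_forall_le _ _ fun _ _ =>
    (Polynomial.natDegree_monomial_le _).trans (Nat.sub_le _ _)

theorem descPolynomial_congr {n : ℕ} {α α' : ℕ → R} (h : ∀ i ≤ n, α i = α' i) :
    descPolynomial n α = descPolynomial n α' :=
  sum_congr rfl fun j hj => by rw [h j (mem_range_succ_iff.1 hj)]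

theorem coeff_taylor_descPolynomial (α : ℕ → R) (s : R) {n i : ℕ} (hi : i ≤ n) :
    (Polynomial.taylor s (descPolynomial n α)).coeff (n - i) = translate n α s i := by
  have hterm (j : ℕ) : (Polynomial.taylor s (Polynomial.monomial (n - j) (α j))).coeff (n - i) =
      α j * ((n - j).choose (n - i) : R) * s ^ (n - j - (n - i)) := by
    rw [Polynomial.taylor_monomial, Polynomial.coeff_C_mul, Polynomial.coeff_X_add_C_pow]
    ring
  simp only [descPolynomial, map_sum, Polynomial.finsetSum_coeff, hterm, translate]
  refine (sum_subset_zero_on_sdiff (range_mono (by lia)) (fun j hj => ?_) fun j hj => ?_).symm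
  · rw [mem_sdiff, mem_range, mem_range] at hj
    simp [Nat.choose_eq_zero_of_lt (show n - j < n - i by lia)]
  · rw [show n - j - (n - i) = i - j by have := mem_range.1 hj; lia]

theorem taylor_descPolynomial (n : ℕ) (α : ℕ → R) (s : R) :
    Polynomial.taylor s (descPolynomial n α) = descPolynomial n (translate n α s) := by
  rw [← descPolynomial_coeff ((Polynomial.natDegree_taylor _ s).trans_le
    (natDegree_descPolynomial_le n α))]
  exact descPolynomial_congr fun i hi => coeff_taylor_descPolynomial α s hi

theorem translate_translate (α : ℕ → R) (s t : R) {n i : ℕ} (hi : i ≤ n) :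
    translate n (translate n α s) t i = translate n α (s + t) i := by
  rw [← coeff_taylor_descPolynomial _ _ hi, ← taylor_descPolynomial, Polynomial.taylor_taylor,
    coeff_taylor_descPolynomial _ _ hi, add_comm]

theorem translate_index_zero (n : ℕ) (α : ℕ → R) (s : R) : translate n α s 0 = α 0 := by
  simp [translate]

theorem translate_index_one {n : ℕ} (hn : n ≠ 0) (α : ℕ → R) (s : R) :
    translate n α s 1 = n * α 0 * s + α 1 := by
  obtain ⟨m, rfl⟩ := Nat.exists_eq_succ_of_ne_zero hn
  simp [translate, sum_range_succ, mul_comm]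

end Translate

section Centroid

variable {k : Type*} [Field k]

/-- The mean of the roots of `∑ j ≤ n, α j * u ^ (n - j)`; translating by it kills the coefficient
of `u ^ (n - 1)`. -/
def centroid (n : ℕ) (α : ℕ → k) : k := -α 1 / (n * α 0)

variable [CharZero k] {n : ℕ} {α : ℕ → k}

theorem centroid_translate (hn : n ≠ 0) (hα : α 0 ≠ 0) (s : k) :
    centroid n (translate n α s) = centroid n α - s := by
  have : (n : k) ≠ 0 := Nat.cast_ne_zero.2 hn
  rw [centroid, centroid, translate_index_zero, translate_index_one hn]
  field_simp
  ring

theorem translate_centroid_index_one (hn : n ≠ 0) (hα : α 0 ≠ 0) :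
    translate n α (centroid n α) 1 = 0 := by
  have : (n : k) ≠ 0 := Nat.cast_ne_zero.2 hn
  rw [translate_index_one hn, centroid]
  field_simp
  ring

theorem translate_centroid_translate (hn : n ≠ 0) (hα : α 0 ≠ 0) (β : ℕ → k) (s : k) {m i : ℕ}
    (hi : i ≤ m) :
    translate m (translate m β s) (centroid n (translate n α s)) i =
      translate m β (centroid n α) i := by
  rw [centroid_translate hn hα, translate_translate _ _ _ hi, add_sub_cancel]

theorem IsCleared.centroid {X σ : Type*} {pt : X → σ → k} {d : MvPolynomial σ k}
    {α : X → ℕ → k} (n : ℕ) (hα : IsCleared pt d (fun x => α x 1))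
    (hd : ∀ x, MvPolynomial.eval (pt x) d = α x 0) :
    IsCleared pt d (fun x => centroid n (α x)) := by
  have h := (hα.mul (const (-(n : k)⁻¹))).mul (inv_denom (pt := pt) (d := d))
  simp only [hd] at h
  refine (congrArg (IsCleared pt d) (funext fun x => ?_)).mp h
  rw [E8Jacobi.centroid, div_eq_mul_inv, mul_inv]
  ring

end Centroid

theorem IsCleared.translate {X σ k : Type*} [Field k] {pt : X → σ → k} {d : MvPolynomial σ k}
    {α : X → ℕ → k} {s : X → k} {n i : ℕ} (hα : ∀ j ≤ n, IsCleared pt d (fun x => α x j))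
    (hs : IsCleared pt d s) (hi : i ≤ n) :
    IsCleared pt d (fun x => translate n (α x) (s x) i) :=
  .sum _ fun j hj =>
    ((hα j ((mem_range_succ_iff.1 hj).trans hi)).mul (.const _)).mul (hs.pow _)

/-! ### The two normalizations of a quartic and a sextic -/

theorem ahat_eq_translate (α : ℕ → ℂ) (i : ℕ) : ahat α i = translate 4 α (centroid 4 α) i := by
  simp [ahat, translate, centroid]

theorem bhat_eq_translate (α β : ℕ → ℂ) (i : ℕ) :
    bhat α β i = translate 6 β (centroid 4 α) i := by
  simp [bhat, translate, centroid]

theorem chat_eq_translate (α β : ℕ → ℂ) (i : ℕ) :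
    chat α β i = translate 4 α (centroid 6 β) i := by
  simp [chat, translate, centroid]

theorem dhat_eq_translate (β : ℕ → ℂ) (i : ℕ) : dhat β i = translate 6 β (centroid 6 β) i := by
  simp [dhat, translate, centroid]

theorem cSW_eq_translate (i : ℕ) (τ : ℂ) (z : Fin 8 → ℂ) :
    cSW i τ z = translate 4 (aSW · τ z) (centroid 6 (bSW · τ z)) i := by
  simp [cSW, translate, centroid, uShift]

theorem dSW_eq_translate (i : ℕ) (τ : ℂ) (z : Fin 8 → ℂ) :
    dSW i τ z = translate 6 (bSW · τ z) (centroid 6 (bSW · τ z)) i := by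
  simp [dSW, translate, centroid, uShift]

theorem hatGens_translate {α : ℕ → ℂ} (hα : α 0 ≠ 0) (β : ℕ → ℂ) (s : ℂ) :
    hatGens (translate 4 α s) (translate 6 β s) = hatGens α β := by
  funext i
  fin_cases i <;> simp only [hatGens, ahat_eq_translate, bhat_eq_translate] <;>
    exact translate_centroid_translate four_ne_zero hα _ s (by norm_num)

theorem cdhatGens_translate (α : ℕ → ℂ) {β : ℕ → ℂ} (hβ : β 0 ≠ 0) (s : ℂ) :
    cdhatGens (translate 4 α s) (translate 6 β s) = cdhatGens α β := by
  funext i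
  fin_cases i <;> simp only [cdhatGens, chat_eq_translate, dhat_eq_translate] <;>
    exact translate_centroid_translate (by norm_num) hβ _ s (by norm_num)

theorem hatGens_of_α_one {α : ℕ → ℂ} (h : α 1 = 0) (β : ℕ → ℂ) :
    hatGens α β = ![α 0, α 2, α 3, α 4, β 0, β 1, β 2, β 3, β 4, β 5, β 6] := by
  simp [hatGens, ahat, bhat, sum_range_succ, h]

theorem cdhatGens_of_β_one (α : ℕ → ℂ) {β : ℕ → ℂ} (h : β 1 = 0) :
    cdhatGens α β = ![α 0, α 1, α 2, α 3, α 4, β 0, β 2, β 3, β 4, β 5, β 6] := by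
  simp [cdhatGens, chat, dhat, sum_range_succ, h]

theorem exists_hatGens_eq (x : Fin 11 → ℂ) : ∃ α β, α 0 = x 0 ∧ hatGens α β = x := by
  refine ⟨fun i => [x 0, 0, x 1, x 2, x 3].getD i 0,
    fun j => [x 4, x 5, x 6, x 7, x 8, x 9, x 10].getD j 0, rfl, ?_⟩
  rw [hatGens_of_α_one rfl]
  funext i
  fin_cases i <;> rfl

theorem exists_cdhatGens_eq (x : Fin 11 → ℂ) : ∃ α β, β 0 = x 5 ∧ cdhatGens α β = x := by
  refine ⟨fun i => [x 0, x 1, x 2, x 3, x 4].getD i 0,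
    fun j => [x 5, 0, x 6, x 7, x 8, x 9, x 10].getD j 0, rfl, ?_⟩
  rw [cdhatGens_of_β_one _ rfl]
  funext i
  fin_cases i <;> rfl

theorem eq_of_eval_hatGens_eq {Q Q' : MvPolynomial (Fin 11) ℂ}
    (h : ∀ α β : ℕ → ℂ, α 0 ≠ 0 →
      MvPolynomial.eval (hatGens α β) Q = MvPolynomial.eval (hatGens α β) Q') : Q = Q' := by
  refine eq_of_eval_eq_of_eval_ne_zero (MvPolynomial.X_ne_zero 0) fun x hx => ?_
  obtain ⟨α, β, hα, rfl⟩ := exists_hatGens_eq x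
  exact h α β (by rwa [hα, ← MvPolynomial.eval_X (f := hatGens α β) 0])

theorem eq_of_eval_cdhatGens_eq {Q Q' : MvPolynomial (Fin 11) ℂ}
    (h : ∀ α β : ℕ → ℂ, β 0 ≠ 0 →
      MvPolynomial.eval (cdhatGens α β) Q = MvPolynomial.eval (cdhatGens α β) Q') : Q = Q' := by
  refine eq_of_eval_eq_of_eval_ne_zero (MvPolynomial.X_ne_zero 5) fun x hx => ?_
  obtain ⟨α, β, hβ, rfl⟩ := exists_cdhatGens_eq x
  exact h α β (by rwa [hβ, ← MvPolynomial.eval_X (f := cdhatGens α β) 5])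

section ClearedGens

variable {X σ : Type*} {pt : X → σ → ℂ} {d : MvPolynomial σ ℂ} {α β : X → ℕ → ℂ}

theorem isCleared_hatGens (hα : ∀ i ≤ 4, IsCleared pt d (fun x => α x i))
    (hβ : ∀ j ≤ 6, IsCleared pt d (fun x => β x j))
    (hd : ∀ x, MvPolynomial.eval (pt x) d = α x 0) (i : Fin 11) :
    IsCleared pt d (fun x => hatGens (α x) (β x) i) := by
  have hs := IsCleared.centroid 4 (hα 1 (by norm_num)) hd
  fin_cases i <;> simp only [hatGens, ahat_eq_translate, bhat_eq_translate] <;>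
    first
      | exact .translate hα hs (by norm_num)
      | exact .translate hβ hs (by norm_num)

theorem isCleared_cdhatGens (hα : ∀ i ≤ 4, IsCleared pt d (fun x => α x i))
    (hβ : ∀ j ≤ 6, IsCleared pt d (fun x => β x j))
    (hd : ∀ x, MvPolynomial.eval (pt x) d = β x 0) (i : Fin 11) :
    IsCleared pt d (fun x => cdhatGens (α x) (β x) i) := by
  have hs := IsCleared.centroid 6 (hβ 1 (by norm_num)) hd
  fin_cases i <;> simp only [cdhatGens, chat_eq_translate, dhat_eq_translate] <;>
    first
      | exact .translate hα hs (by norm_num)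
      | exact .translate hβ hs (by norm_num)

end ClearedGens

theorem hatGens_SW (τ : ℂ) (z : Fin 8 → ℂ) :
    hatGens (aSW · τ z) (bSW · τ z) = (abGens · τ z) := by
  rw [hatGens_of_α_one rfl]
  funext i
  fin_cases i <;> rfl

theorem cdhatGens_SW (τ : ℂ) (z : Fin 8 → ℂ) :
    cdhatGens (aSW · τ z) (bSW · τ z) = (cdGens · τ z) := by
  funext i
  fin_cases i <;> rfl

theorem GoodTau.bSW_zero_ne_zero {τ : ℂ} (h : GoodTau τ) (z : Fin 8 → ℂ) : bSW 0 τ z ≠ 0 :=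
  div_ne_zero h.2.2.1 (by norm_num)

theorem cdhatGens_cSW_dSW {τ : ℂ} (h : GoodTau τ) (z : Fin 8 → ℂ) :
    cdhatGens (cSW · τ z) (dSW · τ z) = (cdGens · τ z) := by
  simp only [cSW_eq_translate, dSW_eq_translate, ← cdhatGens_SW]
  exact cdhatGens_translate _ (h.bSW_zero_ne_zero z) _

/-- The generators `a_i, b_j` as functions on the locus where all of them are defined. -/
def abFun (i : Fin 11) (p : {τ // GoodTau τ} × (Fin 8 → ℂ)) : ℂ := abGens i p.1 p.2

theorem eval_abFun (Q : MvPolynomial (Fin 11) ℂ) (p : {τ // GoodTau τ} × (Fin 8 → ℂ)) :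
    MvPolynomial.aeval abFun Q p = MvPolynomial.eval (abGens · p.1 p.2) Q := by
  induction Q using MvPolynomial.induction_on with
  | C a => simp
  | add P Q hP hQ => simp [hP, hQ]
  | mul_X P i hP => simp [hP, abFun]

section Intersection

variable {Q Q' : MvPolynomial (Fin 11) ℂ}

theorem eval_hatGens_eq_eval_cdhatGens_of_α_one (hind : AlgebraicIndependent ℂ abFun)
    (h : ∀ τ, GoodTau τ → ∀ z, MvPolynomial.eval (abGens · τ z) Q =
      MvPolynomial.eval (cdGens · τ z) Q')
    {α β : ℕ → ℂ} (hα : α 1 = 0) (hβ : β 0 ≠ 0) :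
    MvPolynomial.eval (hatGens α β) Q = MvPolynomial.eval (cdhatGens α β) Q' := by
  let pt (p : {α : ℕ → ℂ // α 1 = 0} × (ℕ → ℂ)) : Fin 11 → ℂ := hatGens p.1 p.2
  have hα₁ (p : {α : ℕ → ℂ // α 1 = 0} × (ℕ → ℂ)) : p.1.1 1 = 0 := p.1.2
  have hpt p : pt p = _ := hatGens_of_α_one p.1.2 p.2
  have hpt4 p : pt p 4 = p.2 0 := by rw [hpt]; rfl
  have coord (i : Fin 11) {d} : IsCleared pt d (fun p => pt p i) := by
    simpa using IsCleared.eval (.X i)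
  simp only [hpt] at coord
  obtain ⟨M, P, hP⟩ : IsCleared pt (.X 4)
      (fun p => MvPolynomial.eval (cdhatGens p.1 p.2) Q') := by
    refine .eval_comp (isCleared_cdhatGens (fun i hi => ?_) (fun j hj => ?_)
      fun p => by simp [hpt4]) Q'
    · interval_cases i
      exacts [coord 0, by simpa only [hα₁] using IsCleared.const 0, coord 1, coord 2, coord 3]
    · interval_cases j
      exacts [coord 4, coord 5, coord 6, coord 7, coord 8, coord 9, coord 10]
  simp only [MvPolynomial.eval_X, hpt4] at hP
  have hPQ : .X 4 ^ M * Q = P := by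
    refine hind (funext fun p => ?_)
    have := hP ⟨⟨(aSW · p.1 p.2), rfl⟩, (bSW · p.1 p.2)⟩ (p.1.2.bSW_zero_ne_zero p.2)
    simp only [cdhatGens_SW, ← h _ p.1.2, pt, hatGens_SW] at this
    rw [eval_abFun, eval_abFun, ← this]
    simp [abGens]
  have := hP ⟨⟨α, hα⟩, β⟩ hβ
  simp only [← hPQ, map_mul, map_pow, MvPolynomial.eval_X, hpt4] at this
  exact (mul_left_cancel₀ (pow_ne_zero M hβ) this).symm

theorem eval_hatGens_eq_eval_cdhatGens (hind : AlgebraicIndependent ℂ abFun)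
    (h : ∀ τ, GoodTau τ → ∀ z, MvPolynomial.eval (abGens · τ z) Q =
      MvPolynomial.eval (cdGens · τ z) Q')
    {α β : ℕ → ℂ} (hα : α 0 ≠ 0) (hβ : β 0 ≠ 0) :
    MvPolynomial.eval (hatGens α β) Q = MvPolynomial.eval (cdhatGens α β) Q' := by
  rw [← hatGens_translate hα β (centroid 4 α), ← cdhatGens_translate α hβ (centroid 4 α)]
  exact eval_hatGens_eq_eval_cdhatGens_of_α_one hind h
    (translate_centroid_index_one four_ne_zero hα) (by rwa [translate_index_zero])

theorem exists_evalSV_eq_eval_hatGens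
    (h : ∀ α β : ℕ → ℂ, α 0 ≠ 0 → β 0 ≠ 0 →
      MvPolynomial.eval (hatGens α β) Q = MvPolynomial.eval (cdhatGens α β) Q') :
    ∃ Φ : MvPolynomial SV ℂ, ∀ α β : ℕ → ℂ, α 0 ≠ 0 →
      evalSV Φ α β = MvPolynomial.eval (hatGens α β) Q := by
  let pt (p : (ℕ → ℂ) × (ℕ → ℂ)) : SV → ℂ :=
    Sum.elim (fun i : Fin 5 => p.1 i) (fun j : Fin 7 => p.2 j)
  have hpt : pt.Surjective := fun v =>
    ⟨⟨fun i => v (.inl (Fin.ofNat 5 i)), fun j => v (.inr (Fin.ofNat 7 j))⟩, by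
      ext (i | j) <;> simp [pt]⟩
  have hα (d) (i : ℕ) (hi : i ≤ 4) : IsCleared pt d (fun p => p.1 i) := by
    simpa [pt] using IsCleared.eval (pt := pt) (.X (.inl ⟨i, Nat.lt_succ_of_le hi⟩))
  have hβ (d) (j : ℕ) (hj : j ≤ 6) : IsCleared pt d (fun p => p.2 j) := by
    simpa [pt] using IsCleared.eval (pt := pt) (.X (.inr ⟨j, Nat.lt_succ_of_le hj⟩))
  have hrel : IsRelPrime (.X (.inl 0) : MvPolynomial SV ℂ) (.X (.inr 0)) := by
    rw [MvPolynomial.X_prime.irreducible.isRelPrime_iff_not_dvd]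
    simp
  have hf := IsCleared.eval_comp (isCleared_hatGens (hα (.X (.inl 0))) (hβ _) (by simp [pt])) Q
  have hg := IsCleared.eval_comp (isCleared_cdhatGens (hα (.X (.inr 0))) (hβ _) (by simp [pt])) Q'
  obtain ⟨Φ, hΦ⟩ := hf.exists_eval_eq_of_isRelPrime hpt hg (MvPolynomial.X_ne_zero _)
    (MvPolynomial.X_ne_zero _) hrel
    fun p hp hp' => h p.1 p.2 (by simpa [pt] using hp) (by simpa [pt] using hp')
  exact ⟨Φ, fun α β hα => hΦ (α, β) (by simpa [pt] using hα)⟩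

end Intersection

/-! ### Operations on power series -/

section SeriesOperations

variable {k l : Type*} [CommRing k] [CommRing l]

/-- The `m`-section `∑ c (m n) X ^ n` of a power series `∑ c n X ^ n`. -/
def multisect (m : ℕ) (F : PowerSeries k) : PowerSeries k :=
  PowerSeries.mk fun n => PowerSeries.coeff (m * n) F

/-- The series `∑ d r X ^ g r`, for an injection `g` with `r ≤ g r`, which is what makes the
coefficients finite sums. -/
def sparse (g : ℕ → ℕ) (d : ℕ → k) : PowerSeries k :=
  PowerSeries.mk fun n => ∑ r ∈ range (n + 1), if g r = n then d r else 0

theorem map_multisect (φ : k →+* l) (m : ℕ) (F : PowerSeries k) :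
    PowerSeries.map φ (multisect m F) = multisect m (PowerSeries.map φ F) := by
  ext n
  simp [multisect]

theorem map_sparse (φ : k →+* l) (g : ℕ → ℕ) (d : ℕ → k) :
    PowerSeries.map φ (sparse g d) = sparse g fun r => φ (d r) := by
  ext n
  simp only [sparse, PowerSeries.coeff_map, PowerSeries.coeff_mk, map_sum, apply_ite φ, map_zero]

theorem coeff_sparse {g : ℕ → ℕ} (hg : StrictMono g) (d : ℕ → k) (r : ℕ) :
    PowerSeries.coeff (g r) (sparse g d) = d r := by
  have hr : r ∈ range (g r + 1) := mem_range.2 (Nat.lt_succ_of_le (hg.id_le r))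
  simp only [sparse, PowerSeries.coeff_mk, hg.injective.eq_iff, sum_ite_eq' _ r, if_pos hr]

theorem coeff_sparse_of_notMem_range {g : ℕ → ℕ} {n : ℕ} (hn : n ∉ Set.range g) (d : ℕ → k) :
    PowerSeries.coeff n (sparse g d) = 0 := by
  rw [sparse, PowerSeries.coeff_mk]
  exact sum_eq_zero fun r _ => if_neg fun hr => hn ⟨r, hr⟩

end SeriesOperations

/-! ### Evaluation of convergent power series -/

/-- The power series `F` converges (absolutely) at `y`, with value `v`. -/
def HasEv (y : ℂ) (F : PowerSeries ℂ) (v : ℂ) : Prop :=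
  HasSum (fun n => PowerSeries.coeff n F * y ^ n) v

namespace HasEv

variable {y v w : ℂ} {F G : PowerSeries ℂ}

theorem add (hF : HasEv y F v) (hG : HasEv y G w) : HasEv y (F + G) (v + w) := by
  simpa [HasEv, add_mul] using HasSum.add hF hG

theorem sub (hF : HasEv y F v) (hG : HasEv y G w) : HasEv y (F - G) (v - w) := by
  simpa [HasEv, sub_mul] using HasSum.sub hF hG

theorem mul (hF : HasEv y F v) (hG : HasEv y G w) : HasEv y (F * G) (v * w) := by
  have hcauchy : (fun n => PowerSeries.coeff n (F * G) * y ^ n) = fun n =>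
      ∑ kl ∈ antidiagonal n, PowerSeries.coeff kl.1 F * y ^ kl.1 *
        (PowerSeries.coeff kl.2 G * y ^ kl.2) := by
    funext n
    rw [PowerSeries.coeff_mul, Finset.sum_mul]
    refine Finset.sum_congr rfl fun kl hkl => ?_
    rw [← mem_antidiagonal.1 hkl, pow_add]
    ring
  have hF' := hF.summable.norm
  have hG' := hG.summable.norm
  rw [HasEv, hcauchy, ← hF.tsum_eq, ← hG.tsum_eq,
    tsum_mul_tsum_eq_tsum_sum_antidiagonal_of_summable_norm hF' hG']
  exact (summable_norm_sum_mul_antidiagonal_of_summable_norm hF' hG').of_norm.hasSum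

theorem C (c : ℂ) : HasEv y (PowerSeries.C c) c := by
  have := hasSum_single (f := fun n => PowerSeries.coeff n (PowerSeries.C c) * y ^ n) 0
    fun n hn => by simp [PowerSeries.coeff_C, hn]
  simpa [HasEv] using this

theorem one : HasEv y 1 1 := by simpa using HasEv.C (y := y) 1

theorem X : HasEv y PowerSeries.X y := by
  have := hasSum_single (f := fun n => PowerSeries.coeff n (PowerSeries.X : PowerSeries ℂ) * y ^ n)
    1 fun n hn => by simp [PowerSeries.coeff_X, hn]
  simpa [HasEv] using this

theorem natCast (n : ℕ) : HasEv y (n : PowerSeries ℂ) n := by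
  simpa using HasEv.C (y := y) (n : ℂ)

theorem pow (hF : HasEv y F v) (n : ℕ) : HasEv y (F ^ n) (v ^ n) := by
  induction n with
  | zero => simpa using one
  | succ n ih => simpa only [pow_succ] using ih.mul hF

theorem prod {ι : Type*} (s : Finset ι) {F : ι → PowerSeries ℂ} {v : ι → ℂ}
    (h : ∀ i, HasEv y (F i) (v i)) : HasEv y (∏ i ∈ s, F i) (∏ i ∈ s, v i) := by
  classical
  induction s using Finset.induction_on with
  | empty => simpa using one
  | insert a s ha ih => simpa only [Finset.prod_insert ha] using (h a).mul ih

theorem sum {ι : Type*} (s : Finset ι) {F : ι → PowerSeries ℂ} {v : ι → ℂ}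
    (h : ∀ i, HasEv y (F i) (v i)) : HasEv y (∑ i ∈ s, F i) (∑ i ∈ s, v i) := by
  simpa only [HasEv, map_sum, Finset.sum_mul] using hasSum_sum fun i _ => h i

theorem det {ι : Type*} [Fintype ι] [DecidableEq ι] {M : Matrix ι ι (PowerSeries ℂ)}
    {m : Matrix ι ι ℂ} (h : ∀ i j, HasEv y (M i j) (m i j)) : HasEv y M.det m.det := by
  rw [Matrix.det_apply', Matrix.det_apply']
  refine sum _ fun σ => HasEv.mul ?_ (prod _ fun i => h _ _)
  simpa using HasEv.C (y := y) ((Equiv.Perm.sign σ : ℤ) : ℂ)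

theorem rescale {a : ℂ} (h : HasEv (a * y) F v) : HasEv y (PowerSeries.rescale a F) v := by
  refine HasSum.congr_fun h fun n => ?_
  rw [PowerSeries.coeff_rescale, mul_pow]
  ring

theorem expand {b : ℕ} (hb : b ≠ 0) (h : HasEv (y ^ b) F v) :
    HasEv y (PowerSeries.expand b hb F) v := by
  refine ((mul_right_injective₀ hb).hasSum_iff fun n hn => ?_).1 (HasSum.congr_fun h fun n => ?_)
  · rw [PowerSeries.coeff_expand_of_not_dvd _ _ _ fun ⟨c, hc⟩ => hn ⟨c, hc.symm⟩, zero_mul]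
  · simp only [Function.comp_apply, PowerSeries.coeff_expand_mul, pow_mul]

theorem sparse {g : ℕ → ℕ} (hg : StrictMono g) {d : ℕ → ℂ}
    (h : HasSum (fun r => d r * y ^ g r) v) : HasEv y (sparse g d) v := by
  refine (hg.injective.hasSum_iff fun n hn => ?_).1 (HasSum.congr_fun h fun r => ?_)
  · rw [coeff_sparse_of_notMem_range hn, zero_mul]
  · rw [Function.comp_apply, coeff_sparse hg]

end HasEv

theorem sum_primitiveRoot_pow_pow {R : Type*} [CommRing R] [IsDomain R] {ζ : R}
    {m : ℕ} (hζ : IsPrimitiveRoot ζ m) (n : ℕ) :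
    ∑ i ∈ range m, (ζ ^ i) ^ n = if m ∣ n then (m : R) else 0 := by
  simp only [← pow_mul, mul_comm _ n]
  simp only [pow_mul]
  split_ifs with hd
  · simp [(hζ.pow_eq_one_iff_dvd n).2 hd]
  · have hgeom := geom_sum_mul (ζ ^ n) m
    rw [← pow_mul, mul_comm n m, pow_mul, hζ.pow_eq_one, one_pow, sub_self] at hgeom
    exact (mul_eq_zero.1 hgeom).resolve_right
      (sub_ne_zero.2 fun h => hd ((hζ.pow_eq_one_iff_dvd n).1 h))

theorem HasEv.multisect {y : ℂ} {F : PowerSeries ℂ} {m : ℕ} (hm : m ≠ 0) {ζ : ℂ}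
    (hζ : IsPrimitiveRoot ζ m) {v : ℕ → ℂ} (h : ∀ i < m, HasEv (ζ ^ i * y) F (v i)) :
    HasEv (y ^ m) (multisect m F) ((m : ℂ)⁻¹ * ∑ i ∈ range m, v i) := by
  have hsum : HasSum (fun n => ∑ i ∈ range m, PowerSeries.coeff n F * (ζ ^ i * y) ^ n)
      (∑ i ∈ range m, v i) :=
    hasSum_sum fun i hi => h i (mem_range.1 hi)
  have hterm (n : ℕ) : ∑ i ∈ range m, PowerSeries.coeff n F * (ζ ^ i * y) ^ n =
      PowerSeries.coeff n F * y ^ n * if m ∣ n then (m : ℂ) else 0 := by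
    rw [← sum_primitiveRoot_pow_pow hζ, mul_sum]
    refine sum_congr rfl fun i _ => ?_
    rw [mul_pow]
    ring
  simp only [hterm] at hsum
  have hmul := (((mul_right_injective₀ hm).hasSum_iff fun n hn => ?_).2 hsum).mul_left (m : ℂ)⁻¹
  · refine HasSum.congr_fun hmul fun n => ?_
    rw [E8Jacobi.multisect, PowerSeries.coeff_mk, Function.comp_apply, if_pos (dvd_mul_right m n),
      pow_mul]
    have : (m : ℂ) ≠ 0 := Nat.cast_ne_zero.2 hm
    field_simp
  · rw [if_neg fun ⟨c, hc⟩ => hn ⟨c, hc.symm⟩, mul_zero]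

open Topology in
theorem HasEv.eventually_ne_zero {F : PowerSeries ℂ} (hF : F ≠ 0)
    (h : ∀ᶠ y in 𝓝[≠] 0, ∃ v, HasEv y F v) : ∀ᶠ y in 𝓝[≠] 0, ∀ v, HasEv y F v → v ≠ 0 := by
  let f : ℂ → ℂ := fun y => ∑' n, PowerSeries.coeff n F * y ^ n
  let p := FormalMultilinearSeries.ofScalars ℂ fun n => PowerSeries.coeff n F
  have hp : HasFPowerSeriesAt f p 0 := by
    rw [hasFPowerSeriesAt_iff]
    filter_upwards [eventually_nhdsWithin_iff.1 h] with y hy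
    have hs : Summable fun n => PowerSeries.coeff n F * y ^ n := by
      rcases eq_or_ne y 0 with rfl | hy0
      · exact (hasSum_single 0 fun n hn => by simp [hn]).summable
      · obtain ⟨v, hv⟩ := hy hy0
        exact hv.summable
    rw [zero_add]
    refine HasSum.congr_fun hs.hasSum fun n => ?_
    simp [p, FormalMultilinearSeries.coeff_ofScalars, mul_comm]
  have hp0 : p ≠ 0 := fun h0 => hF <| by
    ext n
    have hn : p.coeff n = 0 := FormalMultilinearSeries.coeff_eq_zero.2 (by rw [h0]; rfl)
    simpa only [p, FormalMultilinearSeries.coeff_ofScalars, map_zero] using hn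
  filter_upwards [hp.locally_ne_zero hp0] with y hy v hv
  rwa [← hv.tsum_eq]

/-! ### One-variable theta functions with characteristics -/

/-- The `n`-th term `exp (2 π i (e n + u (n - δ)) + π i τ (n - δ) ^ 2)` of the theta function with
characteristics `e` and `δ`, split into factors in the same way as the Jacobi theta functions. -/
def thetaCharTerm (e δ u τ : ℂ) (n : ℤ) : ℂ :=
  exp (2 * πC * I * e * n) * exp (2 * πC * I * u * ((n : ℂ) - δ)) *
    exp (πC * I * τ * ((n : ℂ) - δ) ^ 2)

/-- The theta function with characteristics `e` and `δ`, as a multiple of a translate of the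
two-variable Jacobi theta function. -/
def thetaChar (e δ u τ : ℂ) : ℂ :=
  exp (πC * I * τ * δ ^ 2 - 2 * πC * I * δ * u) * jacobiTheta₂ (u + e - τ * δ) τ

/-- The derivative of `thetaChar e δ u τ` with respect to the elliptic variable `u`. -/
def thetaCharDeriv (e δ u τ : ℂ) : ℂ :=
  exp (πC * I * τ * δ ^ 2 - 2 * πC * I * δ * u) *
    (jacobiTheta₂' (u + e - τ * δ) τ - 2 * πC * I * δ * jacobiTheta₂ (u + e - τ * δ) τ)

theorem thetaCharTerm_eq (e δ u τ : ℂ) (n : ℤ) : thetaCharTerm e δ u τ n =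
    exp (πC * I * τ * δ ^ 2 - 2 * πC * I * δ * u) * jacobiTheta₂_term n (u + e - τ * δ) τ := by
  rw [thetaCharTerm, jacobiTheta₂_term, ← Complex.exp_add, ← Complex.exp_add, ← Complex.exp_add]
  congr 1
  simp only [πC]
  ring

theorem hasSum_thetaCharTerm (e δ u : ℂ) {τ : ℂ} (hτ : 0 < τ.im) :
    HasSum (thetaCharTerm e δ u τ) (thetaChar e δ u τ) :=
  HasSum.congr_fun ((hasSum_jacobiTheta₂_term (u + e - τ * δ) hτ).mul_left _)
    (thetaCharTerm_eq e δ u τ)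

theorem hasSum_thetaCharTerm_deriv (e δ u : ℂ) {τ : ℂ} (hτ : 0 < τ.im) :
    HasSum (fun n : ℤ => 2 * πC * I * ((n : ℂ) - δ) * thetaCharTerm e δ u τ n)
      (thetaCharDeriv e δ u τ) := by
  refine HasSum.congr_fun (((hasSum_jacobiTheta₂'_term (u + e - τ * δ) hτ).sub
    ((hasSum_jacobiTheta₂_term (u + e - τ * δ) hτ).mul_left (2 * πC * I * δ))).mul_left _)
    fun n => ?_
  rw [thetaCharTerm_eq, jacobiTheta₂'_term]
  simp only [πC]
  ring

theorem hasDerivAt_thetaChar (e δ u : ℂ) {τ : ℂ} (hτ : 0 < τ.im) :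
    HasDerivAt (fun u => thetaChar e δ u τ) (thetaCharDeriv e δ u τ) u := by
  have htheta : HasDerivAt (fun u => jacobiTheta₂ (u + e - τ * δ) τ)
      (jacobiTheta₂' (u + e - τ * δ) τ) u := by
    have hlin : HasDerivAt (fun u : ℂ => u + e - τ * δ) 1 u :=
      ((hasDerivAt_id u).add_const e).sub_const _
    exact mul_one (jacobiTheta₂' _ τ) ▸ (hasDerivAt_jacobiTheta₂_fst _ hτ).comp u hlin
  have hexp : HasDerivAt (fun u => exp (πC * I * τ * δ ^ 2 - 2 * πC * I * δ * u))
      (exp (πC * I * τ * δ ^ 2 - 2 * πC * I * δ * u) * (-(2 * πC * I * δ))) u := by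
    refine HasDerivAt.cexp ?_
    simpa using ((hasDerivAt_id u).const_mul (2 * πC * I * δ)).const_sub (πC * I * τ * δ ^ 2)
  refine (hexp.mul htheta).congr_deriv ?_
  rw [thetaCharDeriv]
  ring

theorem πC_ne_zero : πC ≠ 0 := by simp [πC, Real.pi_ne_zero]

theorem exp_two_pi_I_mul_half : exp (2 * πC * I * (1 / 2)) = -1 := by
  rw [← Complex.exp_pi_mul_I, πC]
  congr 1
  ring

theorem exp_mul_intCast {c w : ℂ} (h : exp c = w) (n : ℤ) : exp (c * n) = w ^ n := by
  rw [mul_comm, Complex.exp_int_mul, h]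

theorem exp_two_pi_I_zero : exp (2 * πC * I * 0) = 1 := by simp

/-! ### The theta function of the lattice as a sum of products -/

theorem hasSum_mul_prod {ι κ : Type*} {f : ι → ℂ} {g : κ → ℂ} {a b : ℂ} (hf : HasSum f a)
    (hg : HasSum g b) : HasSum (fun x : ι × κ => f x.1 * g x.2) (a * b) :=
  hf.mul hg (summable_mul_of_summable_norm hf.summable.norm hg.summable.norm)

theorem hasSum_prod_pi {κ : Type*} {N : ℕ} {f : Fin N → κ → ℂ} {v : Fin N → ℂ}
    (h : ∀ j, HasSum (f j) (v j)) : HasSum (fun n : Fin N → κ => ∏ j, f j (n j)) (∏ j, v j) := by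
  induction N with
  | zero =>
    simp only [Fin.prod_univ_zero]
    exact hasSum_unique _
  | succ N ih =>
    rw [Fin.prod_univ_succ, ← (Fin.consEquiv fun _ : Fin (N + 1) => κ).hasSum_iff]
    refine HasSum.congr_fun (hasSum_mul_prod (h 0) (ih fun j => h j.succ)) fun n => ?_
    simp only [Function.comp_apply, Fin.consEquiv_apply, Fin.prod_univ_succ, Fin.cons_zero,
      Fin.cons_succ]

/-- The integral vectors with even coordinate sum. -/
abbrev EvenVec := {n : Fin 8 → ℤ // Even (∑ i, n i)}

/-- The parametrization of the lattice by two copies of `EvenVec`: the integral vectors, and the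
half-integral ones as shifts of integral ones by `-1 / 2`. -/
def latticeOfEven : EvenVec ⊕ EvenVec → E8Lattice
  | Sum.inl n => ⟨fun i => n.1 i, Or.inl fun i => ⟨n.1 i, rfl⟩, by
      obtain ⟨m, hm⟩ := n.2
      refine ⟨m, ?_⟩
      rw [← Int.cast_sum, hm]
      push_cast
      ring⟩
  | Sum.inr n => ⟨fun i => n.1 i - 1 / 2, Or.inr fun i => ⟨n.1 i - 1, by push_cast; ring⟩, by
      obtain ⟨m, hm⟩ := n.2
      refine ⟨m - 2, ?_⟩
      rw [sum_sub_distrib, ← Int.cast_sum, hm]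
      norm_num
      ring⟩

theorem latticeOfEven_injective : Function.Injective latticeOfEven := by
  have half (a b : ℤ) : (a : ℝ) ≠ b - 1 / 2 := fun h => by
    have : 2 * a = 2 * b - 1 := by exact_mod_cast (by linarith : (2 * a : ℝ) = 2 * b - 1)
    omega
  rintro (m | m) (n | n) h <;> have hcoord := fun i => congrFun (congrArg Subtype.val h) i
  · congr 1
    ext i
    simpa [latticeOfEven] using hcoord i
  · exact absurd (hcoord 0) (half _ _)
  · exact absurd (hcoord 0).symm (half _ _)
  · congr 1
    ext i
    simpa [latticeOfEven] using hcoord i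

theorem latticeOfEven_surjective : Function.Surjective latticeOfEven := by
  rintro ⟨w, hw | hw, m, hm⟩ <;> obtain ⟨n, hn⟩ := Classical.axiomOfChoice hw
  · have hsum : ∑ i, n i = 2 * m := by
      have : ((∑ i, n i : ℤ) : ℝ) = 2 * m := by simp only [← hm, Int.cast_sum, hn]
      exact_mod_cast this
    refine ⟨Sum.inl ⟨n, m, hsum.trans (two_mul m)⟩, ?_⟩
    ext i
    simp [latticeOfEven, hn]
  · have hsum : ∑ i, n i + 4 = 2 * m := by
      have : ((∑ i, n i : ℤ) : ℝ) + 4 = 2 * m := by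
        simp only [← hm, hn, sum_add_distrib]
        norm_num
      exact_mod_cast this
    refine ⟨Sum.inr ⟨fun i => n i + 1, m + 2, ?_⟩, ?_⟩
    · simp only [sum_add_distrib, sum_const, card_univ, Fintype.card_fin, nsmul_eq_mul]
      push_cast
      linarith
    · ext i
      simp only [latticeOfEven, hn]
      push_cast
      ring

theorem latticeOfEven_bijective : Function.Bijective latticeOfEven :=
  ⟨latticeOfEven_injective, latticeOfEven_surjective⟩

theorem prod_zpow_eq_zpow_sum {ι K : Type*} [Field K] {a : K} (ha : a ≠ 0) (s : Finset ι)
    (n : ι → ℤ) : ∏ i ∈ s, a ^ n i = a ^ ∑ i ∈ s, n i := by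
  induction s using Finset.cons_induction with
  | empty => simp
  | cons i s hi ih => rw [prod_cons, sum_cons, ih, zpow_add₀ ha]

theorem prod_thetaCharTerm {ι : Type*} [Fintype ι] (δ τ : ℂ) (z : ι → ℂ) (n : ι → ℤ) :
    ∏ j, thetaCharTerm 0 δ (z j) τ (n j) =
      exp (πC * I * τ * (∑ i, ((n i : ℂ) - δ) * ((n i : ℂ) - δ)) +
        2 * πC * I * ∑ i, z i * ((n i : ℂ) - δ)) := by
  simp only [thetaCharTerm, ← Complex.exp_add]
  rw [← Complex.exp_sum, mul_sum, mul_sum, ← sum_add_distrib]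
  congr 1
  refine sum_congr rfl fun i _ => ?_
  ring

theorem prod_thetaCharTerm_half {ι : Type*} [Fintype ι] (δ τ : ℂ) (z : ι → ℂ) (n : ι → ℤ) :
    ∏ j, thetaCharTerm (1 / 2) δ (z j) τ (n j) =
      (-1) ^ (∑ i, n i) * ∏ j, thetaCharTerm 0 δ (z j) τ (n j) := by
  have hsign (u : ℂ) (m : ℤ) :
      thetaCharTerm (1 / 2) δ u τ m = (-1) ^ m * thetaCharTerm 0 δ u τ m := by
    simp only [thetaCharTerm, exp_mul_intCast exp_two_pi_I_mul_half,
      exp_mul_intCast exp_two_pi_I_zero, one_zpow]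
    ring
  simp only [hsign, prod_mul_distrib,
    prod_zpow_eq_zpow_sum (neg_ne_zero.2 (one_ne_zero (α := ℂ)))]

theorem hasSum_evenVec (δ : ℂ) {τ : ℂ} (hτ : 0 < τ.im) (z : Fin 8 → ℂ) :
    HasSum (fun n : EvenVec => ∏ j, thetaCharTerm 0 δ (z j) τ (n.1 j))
      (1 / 2 * (∏ j, thetaChar 0 δ (z j) τ + ∏ j, thetaChar (1 / 2) δ (z j) τ)) := by
  have hall := ((hasSum_prod_pi fun j => hasSum_thetaCharTerm 0 δ (z j) hτ).add
    (hasSum_prod_pi fun j => hasSum_thetaCharTerm (1 / 2) δ (z j) hτ)).mul_left (1 / 2)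
  simp only [prod_thetaCharTerm_half] at hall
  refine HasSum.congr_fun ((Subtype.val_injective.hasSum_iff fun n hn => ?_).2 hall) fun n => ?_
  · have hodd := Int.not_even_iff_odd.1 fun h => hn ⟨⟨n, h⟩, rfl⟩
    rw [hodd.neg_one_zpow]
    ring
  · rw [Function.comp_apply, n.2.neg_one_zpow]
    ring

theorem hasSum_Theta {τ : ℂ} (hτ : 0 < τ.im) (z : Fin 8 → ℂ) :
    HasSum (fun w : E8Lattice => exp (πC * I * τ * dotC (cv w.1) (cv w.1) +
        2 * πC * I * dotC z (cv w.1)))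
      (1 / 2 * (∏ j, thetaChar 0 0 (z j) τ + ∏ j, thetaChar (1 / 2) 0 (z j) τ) +
       1 / 2 * (∏ j, thetaChar 0 (1 / 2) (z j) τ + ∏ j, thetaChar (1 / 2) (1 / 2) (z j) τ)) := by
  rw [← (Equiv.ofBijective _ latticeOfEven_bijective).hasSum_iff]
  refine HasSum.sum (HasSum.congr_fun (hasSum_evenVec 0 hτ z) fun n => ?_)
    (HasSum.congr_fun (hasSum_evenVec (1 / 2) hτ z) fun n => ?_) <;>
  · rw [prod_thetaCharTerm]
    simp [dotC, cv, latticeOfEven]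

/-! ### Formal theta series -/

section FormalTheta

variable {k l : Type*} [CommRing k] [CommRing l]

/-- The triangular numbers `0, 1, 3, 6, …`, the exponents of theta series with half-integral
characteristic. -/
def tri (r : ℕ) : ℕ := r * (r + 1) / 2

/-- The series `∑ x ^ (2 n) X ^ (n ^ 2)` over the integers `n`, where `y` stands for `x⁻¹`
(for `d = false`), or its image under `x d/dx` (for `d = true`). -/
def evenThetaSeries (d : Bool) (x y : k) : PowerSeries k :=
  sparse (fun r => r ^ 2) fun r => if d then 2 * r * (x ^ (2 * r) - y ^ (2 * r))
    else if r = 0 then 1 else x ^ (2 * r) + y ^ (2 * r)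

/-- The series `∑ ε ^ n x ^ (2 n - 1) X ^ (n (n - 1) / 2)` over the integers `n`, where `y` stands
for `x⁻¹` and `ε = ±1` (for `d = false`), or its image under `x d/dx` (for `d = true`). -/
def oddThetaSeries (ε : k) (d : Bool) (x y : k) : PowerSeries k :=
  sparse tri fun r => if d then
      ε ^ r * (2 * r + 1) * (ε * x ^ (2 * r + 1) - y ^ (2 * r + 1))
    else ε ^ r * (ε * x ^ (2 * r + 1) + y ^ (2 * r + 1))

/-- Twice the formal theta series of the lattice at `(X, b z)`, where `x j` stands for
`exp (π i z j)` and `y j` for its inverse (for `s = 0`), or its derivative in the direction of the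
coordinate `j`, divided by `π i` (for `s = j.succ`). -/
def thetaSeries (x y : Fin 8 → k) (s : Fin 9) (b : ℕ) : PowerSeries k :=
  (if s = 0 then 1 else (b : PowerSeries k)) *
    (2 * multisect 2 (∏ j : Fin 8, evenThetaSeries (s = j.succ) (x j ^ b) (y j ^ b)) +
      PowerSeries.X * (∏ j : Fin 8, oddThetaSeries 1 (s = j.succ) (x j ^ b) (y j ^ b) +
        ∏ j : Fin 8, oddThetaSeries (-1) (s = j.succ) (x j ^ b) (y j ^ b)))

theorem map_evenThetaSeries (φ : k →+* l) (d : Bool) (x y : k) :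
    PowerSeries.map φ (evenThetaSeries d x y) = evenThetaSeries d (φ x) (φ y) := by
  rw [evenThetaSeries, map_sparse, evenThetaSeries]
  congr 1
  funext r
  split_ifs <;> simp [map_ofNat φ]

theorem map_oddThetaSeries (φ : k →+* l) (ε : k) (d : Bool) (x y : k) :
    PowerSeries.map φ (oddThetaSeries ε d x y) = oddThetaSeries (φ ε) d (φ x) (φ y) := by
  rw [oddThetaSeries, map_sparse, oddThetaSeries]
  congr 1
  funext r
  split_ifs <;> simp [map_ofNat φ]

theorem map_thetaSeries (φ : k →+* l) (x y : Fin 8 → k) (s : Fin 9) (b : ℕ) :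
    PowerSeries.map φ (thetaSeries x y s b) =
      thetaSeries (fun j => φ (x j)) (fun j => φ (y j)) s b := by
  have h : PowerSeries.map φ (if s = 0 then 1 else (b : PowerSeries k)) =
      if s = 0 then 1 else (b : PowerSeries l) := by split_ifs <;> simp
  simp only [thetaSeries, map_mul, map_add, map_multisect, map_prod, map_evenThetaSeries,
    map_oddThetaSeries, h, PowerSeries.map_X, map_pow, map_one, map_neg, map_ofNat]

end FormalTheta

theorem tri_strictMono : StrictMono tri := strictMono_nat_of_lt_succ fun r => by
  have h : (r + 1) * (r + 1 + 1) = r * (r + 1) + 2 * (r + 1) := by ring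
  rw [tri, tri, h, Nat.add_mul_div_left _ _ two_pos]
  omega

theorem two_mul_tri (r : ℕ) : 2 * tri r = r * (r + 1) :=
  Nat.mul_div_cancel' (Nat.even_mul_succ_self r).two_dvd

theorem sq_strictMono : StrictMono fun r : ℕ => r ^ 2 :=
  fun _ _ h => Nat.pow_lt_pow_left h two_ne_zero

/-! ### Convergence of the formal theta series -/

/-- A theta function with characteristics (for `d = false`), or its derivative divided by `π i`
(for `d = true`). -/
def thetaCharJet (d : Bool) (e δ u τ : ℂ) : ℂ :=
  if d then (πC * I)⁻¹ * thetaCharDeriv e δ u τ else thetaChar e δ u τ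

theorem hasSum_thetaCharJet (d : Bool) (e δ u : ℂ) {τ : ℂ} (hτ : 0 < τ.im) :
    HasSum (fun n : ℤ => (if d then 2 * ((n : ℂ) - δ) else 1) * thetaCharTerm e δ u τ n)
      (thetaCharJet d e δ u τ) := by
  cases d
  · simpa [thetaCharJet] using hasSum_thetaCharTerm e δ u hτ
  · refine HasSum.congr_fun ((hasSum_thetaCharTerm_deriv e δ u hτ).mul_left (πC * I)⁻¹)
      fun n => ?_
    have := πC_ne_zero
    simp only [if_true]
    field_simp

theorem qExp_eq_sq (τ : ℂ) : qExp τ = exp (πC * I * τ) ^ 2 := by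
  rw [qExp, ← Complex.exp_nat_mul]
  congr 1
  push_cast
  ring

theorem qExp_pow_tri (τ : ℂ) (r : ℕ) : qExp τ ^ tri r = exp (πC * I * τ) ^ (r * (r + 1)) := by
  rw [qExp_eq_sq, ← pow_mul, two_mul_tri]

section Characteristics

variable {e ε : ℂ} (he : exp (2 * πC * I * e) = ε)
include he

theorem exp_mul_thetaCharTerm_half_eq (u τ : ℂ) (n : ℤ) :
    exp (-(πC * I * τ / 4)) * thetaCharTerm e (1 / 2) u τ n =
      ε ^ n * exp (πC * I * u) ^ (2 * n - 1) * exp (πC * I * τ) ^ (n * (n - 1)) := by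
  have hsq : exp (-(πC * I * τ / 4)) * exp (πC * I * τ * ((n : ℂ) - 1 / 2) ^ 2) =
      exp (πC * I * τ) ^ (n * (n - 1)) := by
    rw [← Complex.exp_add, ← Complex.exp_int_mul]
    congr 1
    push_cast
    ring
  rw [thetaCharTerm, exp_mul_intCast he, ← hsq, ← Complex.exp_int_mul]
  push_cast
  ring_nf

variable (hε : ε ^ 2 = 1)
include hε

theorem thetaCharTerm_zero_eq (u τ : ℂ) (n : ℤ) : thetaCharTerm e 0 u τ n =
    exp (πC * I * u) ^ (2 * n) * (ε * exp (πC * I * τ)) ^ (n ^ 2) := by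
  have hparity : ε ^ (n ^ 2) = ε ^ n := by
    obtain ⟨m, hm⟩ := (Int.even_mul_pred_self n)
    have hε0 : ε ≠ 0 := he ▸ Complex.exp_ne_zero _
    rw [show n ^ 2 = n + 2 * m by linear_combination hm, zpow_add₀ hε0, zpow_mul]
    simp [hε]
  rw [thetaCharTerm, exp_mul_intCast he, mul_zpow, hparity, ← Complex.exp_int_mul,
    ← Complex.exp_int_mul]
  push_cast
  ring_nf

theorem hasEv_evenThetaSeries (d : Bool) (u : ℂ) {τ : ℂ} (hτ : 0 < τ.im) :
    HasEv (ε * exp (πC * I * τ))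
      (evenThetaSeries d (exp (πC * I * u)) (exp (-(πC * I * u)))) (thetaCharJet d e 0 u τ) := by
  have hpos (r : ℕ) : thetaCharTerm e 0 u τ r =
      exp (πC * I * u) ^ (2 * r) * (ε * exp (πC * I * τ)) ^ r ^ 2 := by
    rw [thetaCharTerm_zero_eq he hε]
    norm_cast
  have hneg (r : ℕ) : thetaCharTerm e 0 u τ (-r) =
      exp (-(πC * I * u)) ^ (2 * r) * (ε * exp (πC * I * τ)) ^ r ^ 2 := by
    rw [thetaCharTerm_zero_eq he hε, neg_sq, mul_neg, zpow_neg, ← inv_zpow, ← Complex.exp_neg]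
    norm_cast
  have hsum := (hasSum_thetaCharJet d e 0 u hτ).nat_add_neg.sub (hasSum_ite_eq (0 : ℕ)
    ((if d then 2 * (((0 : ℤ) : ℂ) - 0) else 1) * thetaCharTerm e 0 u τ 0))
  rw [add_sub_cancel_right] at hsum
  refine HasEv.sparse sq_strictMono (HasSum.congr_fun hsum fun r => ?_)
  rw [hpos, hneg]
  rcases eq_or_ne r 0 with rfl | hr
  · cases d <;> simp [thetaCharTerm]
  · cases d <;> simp only [hr, Bool.false_eq_true, if_true, if_false] <;> push_cast <;> ring

theorem hasEv_oddThetaSeries (d : Bool) (u : ℂ) {τ : ℂ} (hτ : 0 < τ.im) :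
    HasEv (qExp τ) (oddThetaSeries ε d (exp (πC * I * u)) (exp (-(πC * I * u))))
      (exp (-(πC * I * τ / 4)) * thetaCharJet d e (1 / 2) u τ) := by
  have hinv : ε⁻¹ = ε := inv_eq_of_mul_eq_one_left (by rw [← sq, hε])
  have hpos (r : ℕ) : exp (-(πC * I * τ / 4)) * thetaCharTerm e (1 / 2) u τ (r + 1) =
      ε ^ r * ε * exp (πC * I * u) ^ (2 * r + 1) * qExp τ ^ tri r := by
    rw [exp_mul_thetaCharTerm_half_eq he, qExp_pow_tri, ← pow_succ, add_sub_cancel_right,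
      show 2 * ((r : ℤ) + 1) - 1 = 2 * r + 1 by ring, mul_comm (r + 1 : ℤ)]
    norm_cast
  have hneg (r : ℕ) : exp (-(πC * I * τ / 4)) * thetaCharTerm e (1 / 2) u τ (-r) =
      ε ^ r * exp (-(πC * I * u)) ^ (2 * r + 1) * qExp τ ^ tri r := by
    rw [exp_mul_thetaCharTerm_half_eq he, qExp_pow_tri, zpow_neg, ← inv_zpow, hinv,
      show 2 * -(r : ℤ) - 1 = -(2 * r + 1) by ring, zpow_neg, ← inv_zpow, ← Complex.exp_neg,
      show -(r : ℤ) * (-r - 1) = r * (r + 1) by ring]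
    norm_cast
  have hsum := hasSum_thetaCharJet d e (1 / 2) u hτ
  rw [← (Equiv.addRight (1 : ℤ)).hasSum_iff] at hsum
  refine HasEv.sparse tri_strictMono
    (HasSum.congr_fun (hsum.nat_add_neg_add_one.mul_left _) fun r => ?_)
  simp only [Function.comp_apply, Equiv.coe_addRight, show (-((r : ℤ) + 1) + 1 : ℤ) = -r by ring]
  cases d
  · simp only [Bool.false_eq_true, if_false]
    linear_combination -hpos r - hneg r
  · simp only [if_true]
    push_cast
    linear_combination -(2 * r + 1) * hpos r + (2 * r + 1) * hneg r

end Characteristics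

/-! ### The lattice theta function and its derivatives -/

/-- Twice the value of the theta function of the lattice at `(τ, b z)` (for `s = 0`), or of its
derivative in the direction of the coordinate `j`, divided by `π i` (for `s = j.succ`). -/
def thetaJet (z : Fin 8 → ℂ) (s : Fin 9) (b : ℕ) (τ : ℂ) : ℂ :=
  (if s = 0 then 1 else (b : ℂ)) *
    ((∏ j : Fin 8, thetaCharJet (s = j.succ) 0 0 (b * z j) τ +
        ∏ j : Fin 8, thetaCharJet (s = j.succ) (1 / 2) 0 (b * z j) τ) +
      (∏ j : Fin 8, thetaCharJet (s = j.succ) 0 (1 / 2) (b * z j) τ +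
        ∏ j : Fin 8, thetaCharJet (s = j.succ) (1 / 2) (1 / 2) (b * z j) τ))

theorem thetaJet_zero (z : Fin 8 → ℂ) (b : ℕ) {τ : ℂ} (hτ : 0 < τ.im) :
    thetaJet z 0 b τ = 2 * Theta τ fun i => b * z i := by
  rw [Theta, (hasSum_Theta hτ _).tsum_eq]
  have h (j : Fin 8) : ¬ (0 : Fin 9) = j.succ := (Fin.succ_ne_zero j).symm
  simp only [thetaJet, thetaCharJet, h, if_true, decide_false, Bool.false_eq_true, if_false]
  ring

theorem hasDerivAt_prod_update {ι : Type*} [Fintype ι] [DecidableEq ι] {f g : ℂ → ℂ}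
    (hf : ∀ u, HasDerivAt f (g u) u) (b : ℂ) (z : ι → ℂ) (j : ι) :
    HasDerivAt (fun u => ∏ i, f (b * Function.update z j u i))
      (b * ∏ i, if j = i then g (b * z i) else f (b * z i)) (z j) := by
  have hsplit (c : ℂ) : ∏ i, Function.update (fun i => f (b * z i)) j c i =
      c * ∏ i ∈ univ \ {j}, f (b * z i) := prod_update_of_mem (mem_univ j) _ c
  have hvalue (u : ℂ) : ∏ i, f (b * Function.update z j u i) =
      f (b * u) * ∏ i ∈ univ \ {j}, f (b * z i) := by
    rw [← hsplit]
    exact prod_congr rfl fun i _ => Function.apply_update (fun _ v => f (b * v)) z j u i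
  have hderiv : (∏ i, if j = i then g (b * z i) else f (b * z i)) =
      g (b * z j) * ∏ i ∈ univ \ {j}, f (b * z i) := by
    rw [← hsplit]
    refine prod_congr rfl fun i _ => ?_
    rcases eq_or_ne j i with rfl | hij
    · simp
    · rw [if_neg hij, Function.update_of_ne hij.symm]
  simp only [hvalue, hderiv]
  have hcomp : HasDerivAt (fun u => f (b * u)) (g (b * z j) * b) (z j) :=
    (hf (b * z j)).comp (z j) (by simpa using (hasDerivAt_id (z j)).const_mul b)
  exact (hcomp.mul_const _).congr_deriv (by ring)

theorem prod_ite_thetaCharDeriv (e δ b τ : ℂ) (z : Fin 8 → ℂ) (j : Fin 8) :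
    (∏ i, if j = i then thetaCharDeriv e δ (b * z i) τ else thetaChar e δ (b * z i) τ) =
      πC * I * ∏ i : Fin 8, thetaCharJet (j.succ = i.succ) e δ (b * z i) τ := by
  rw [← mul_prod_erase _ _ (mem_univ j), ← mul_prod_erase _ _ (mem_univ j), if_pos rfl,
    ← mul_assoc]
  congr 1
  · simp only [thetaCharJet, decide_true, if_true]
    rw [mul_inv_cancel_left₀ (mul_ne_zero πC_ne_zero I_ne_zero)]
  · refine prod_congr rfl fun i hi => ?_
    have hij : j ≠ i := (ne_of_mem_erase hi).symm
    simp [thetaCharJet, hij]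

theorem hasDerivAt_Theta (z : Fin 8 → ℂ) (j : Fin 8) (b : ℕ) {τ : ℂ} (hτ : 0 < τ.im) :
    HasDerivAt (fun u => Theta τ fun i => b * Function.update z j u i)
      (πC * I / 2 * thetaJet z j.succ b τ) (z j) := by
  have h (e δ : ℂ) := hasDerivAt_prod_update (fun u => hasDerivAt_thetaChar e δ u hτ) b z j
  have hTheta := funext fun u => (hasSum_Theta hτ fun i => b * Function.update z j u i).tsum_eq
  simp only [Theta, hTheta]
  refine ((((h 0 0).add (h (1 / 2) 0)).const_mul (1 / 2)).add
    (((h 0 (1 / 2)).add (h (1 / 2) (1 / 2))).const_mul (1 / 2))).congr_deriv ?_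
  simp only [prod_ite_thetaCharDeriv, thetaJet, if_neg (Fin.succ_ne_zero j)]
  ring

theorem hasEv_multisect_prod_evenThetaSeries (d : Fin 8 → Bool) (u : Fin 8 → ℂ) {τ : ℂ}
    (hτ : 0 < τ.im) :
    HasEv (qExp τ) (2 * multisect 2
        (∏ j, evenThetaSeries (d j) (exp (πC * I * u j)) (exp (-(πC * I * u j)))))
      (∏ j, thetaCharJet (d j) 0 0 (u j) τ + ∏ j, thetaCharJet (d j) (1 / 2) 0 (u j) τ) := by
  have hsign : ∀ i < 2, HasEv ((-1) ^ i * exp (πC * I * τ))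
      (∏ j, evenThetaSeries (d j) (exp (πC * I * u j)) (exp (-(πC * I * u j))))
      (∏ j, thetaCharJet (d j) (if i = 0 then 0 else 1 / 2) 0 (u j) τ) := by
    intro i hi
    refine HasEv.prod _ fun j => hasEv_evenThetaSeries ?_ ?_ (d j) (u j) hτ
    · interval_cases i
      exacts [by simp, by simpa using exp_two_pi_I_mul_half]
    · rw [← pow_mul, mul_comm, pow_mul, neg_one_sq, one_pow]
  have h := (HasEv.natCast 2).mul (HasEv.multisect two_ne_zero
    (IsPrimitiveRoot.neg_one 0 (by norm_num)) hsign)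
  rw [← qExp_eq_sq] at h
  convert h using 1
  · rw [Nat.cast_ofNat]
  rw [sum_range_succ, sum_range_one, if_pos rfl, if_neg one_ne_zero]
  push_cast
  ring

theorem hasEv_X_mul_prod_oddThetaSeries {e ε : ℂ} (he : exp (2 * πC * I * e) = ε)
    (hε : ε ^ 2 = 1) (d : Fin 8 → Bool) (u : Fin 8 → ℂ) {τ : ℂ} (hτ : 0 < τ.im) :
    HasEv (qExp τ) (PowerSeries.X *
        ∏ j, oddThetaSeries ε (d j) (exp (πC * I * u j)) (exp (-(πC * I * u j))))
      (∏ j, thetaCharJet (d j) e (1 / 2) (u j) τ) := by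
  have hq : qExp τ * exp (-(πC * I * τ / 4)) ^ 8 = 1 := by
    rw [qExp, ← Complex.exp_nat_mul, ← Complex.exp_add, ← Complex.exp_zero]
    congr 1
    push_cast
    ring
  have h := HasEv.X.mul (HasEv.prod univ fun j => hasEv_oddThetaSeries he hε (d j) (u j) hτ)
  rwa [prod_mul_distrib, prod_const, card_univ, Fintype.card_fin, ← mul_assoc, hq, one_mul] at h

theorem hasEv_thetaSeries (z : Fin 8 → ℂ) (s : Fin 9) (b : ℕ) {τ : ℂ} (hτ : 0 < τ.im) :
    HasEv (qExp τ) (thetaSeries (fun j => exp (πC * I * z j)) (fun j => exp (-(πC * I * z j))) s b)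
      (thetaJet z s b τ) := by
  have hx (j : Fin 8) : exp (πC * I * z j) ^ b = exp (πC * I * (b * z j)) := by
    rw [← Complex.exp_nat_mul, mul_left_comm]
  have hy (j : Fin 8) : exp (-(πC * I * z j)) ^ b = exp (-(πC * I * (b * z j))) := by
    rw [← Complex.exp_nat_mul, mul_neg, mul_left_comm]
  simp only [thetaSeries, hx, hy, mul_add PowerSeries.X]
  refine HasEv.mul ?_ ((hasEv_multisect_prod_evenThetaSeries _ _ hτ).add
    ((hasEv_X_mul_prod_oddThetaSeries exp_two_pi_I_zero (one_pow 2) _ _ hτ).add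
      (hasEv_X_mul_prod_oddThetaSeries exp_two_pi_I_mul_half neg_one_sq _ _ hτ)))
  split_ifs
  exacts [HasEv.one, HasEv.natCast b]

/-! ### The nine forms as combinations of theta functions -/

/-- The form `A_m` as a combination of values `Φ b τ'` standing for `Theta τ' (b z)`. -/
def amComb (m : ℕ) (τ : ℂ) (Φ : ℕ → ℂ → ℂ) : ℂ :=
  ((m : ℂ) ^ 3 / ((m : ℂ) ^ 3 + 1)) * (Φ m (m * τ) +
    ((m : ℂ) ^ 4)⁻¹ * ∑ k ∈ range m, Φ 1 ((τ + (k : ℂ)) / (m : ℂ)))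

/-- The nine forms as combinations of values `Φ b τ'` standing for `Theta τ' (b z)`. -/
def formComb (τ : ℂ) (Φ : ℕ → ℂ → ℂ) : Fin 9 → ℂ :=
  ![Φ 1 τ, amComb 2 τ Φ, amComb 3 τ Φ, Φ 2 τ, amComb 5 τ Φ,
    (32/5) * (ee1 τ * Φ 2 (2*τ)
      + (1/2^4) * ee3 τ * Φ 1 (τ/2) + (1/2^4) * ee2 τ * Φ 1 ((τ+1)/2)),
    (81/80) * (h0 τ ^ 2 * Φ 3 (3*τ)
      - (1/3^5) * ∑ k ∈ range 3, h0 ((τ + (k:ℂ))/3) ^ 2 * Φ 1 ((τ + (k:ℂ))/3)),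
    (16/15) * (th4 0 (2*τ) ^ 4 * Φ 4 (4*τ)
      - (1/2^4) * th4 0 (2*τ) ^ 4 * Φ 2 (τ + 1/2)
      - (1/(2^2 * 4^4)) * ∑ k ∈ range 4, th2 0 ((τ + (k:ℂ))/2) ^ 4 * Φ 1 ((τ + (k:ℂ))/4)),
    (9/10) * (h0 τ ^ 2 * Φ 6 (6*τ)
      + (1/2^4) * ∑ k ∈ range 2, h0 (τ + (k:ℂ)) ^ 2 * Φ 3 ((3*τ + 3*(k:ℂ))/2)
      - (1/(3 * 3^4)) * ∑ k ∈ range 3, h0 ((τ + (k:ℂ))/3) ^ 2 * Φ 2 ((2*τ + 2*(k:ℂ))/3)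
      - (1/(3 * 6^4)) * ∑ k ∈ range 6, h0 ((τ + (k:ℂ))/3) ^ 2 * Φ 1 ((τ + (k:ℂ))/6))]

/-- The indices of the nine forms. -/
def formIndex : Fin 9 → ℕ := ![1, 2, 3, 4, 5, 2, 3, 4, 6]

theorem nineForms_eq_formComb (i : Fin 9) (τ : ℂ) (z : Fin 8 → ℂ) :
    nineForms i τ z = formComb τ (fun b τ' => Theta τ' fun j => b * z j) i := by
  fin_cases i <;>
    simp [nineForms, formComb, A1, A2, A3, A4, A5, AM, amComb, B2, B3, B4, B6]

theorem natCast_mul_im_pos {m : ℕ} (hm : m ≠ 0) {τ : ℂ} (hτ : 0 < τ.im) :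
    0 < ((m : ℂ) * τ).im := by
  simp [Nat.pos_of_ne_zero hm, hτ]

theorem add_natCast_div_im_pos {m : ℕ} (hm : m ≠ 0) (k : ℕ) {τ : ℂ} (hτ : 0 < τ.im) :
    0 < ((τ + k) / (m : ℂ)).im := by
  rw [Complex.div_natCast_im, Complex.add_im, Complex.natCast_im, add_zero]
  positivity

/-- Linear combinations of the values `Φ b τ'` with `b τ = A τ' + C` and `A b = m`. For the theta
function these are the values with the same quasi-periodicity, that of index `m`. -/
inductive ThetaComb (τ : ℂ) (m : ℕ) : ((ℕ → ℂ → ℂ) → ℂ) → Prop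
  | term (b : ℕ) (τ' : ℂ) (hτ' : 0 < τ'.im) (A : ℕ) (C : ℤ) (h : b * τ = A * τ' + C)
      (hm : A * b = m) : ThetaComb τ m fun Φ => Φ b τ'
  | zero : ThetaComb τ m fun _ => 0
  | add {L L' : (ℕ → ℂ → ℂ) → ℂ} : ThetaComb τ m L → ThetaComb τ m L' →
      ThetaComb τ m fun Φ => L Φ + L' Φ
  | mul (c : ℂ) {L : (ℕ → ℂ → ℂ) → ℂ} : ThetaComb τ m L → ThetaComb τ m fun Φ => c * L Φ

namespace ThetaComb

variable {τ : ℂ} {m : ℕ} {L L' : (ℕ → ℂ → ℂ) → ℂ}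

theorem sub (h : ThetaComb τ m L) (h' : ThetaComb τ m L') :
    ThetaComb τ m fun Φ => L Φ - L' Φ := by
  simpa [sub_eq_add_neg] using h.add (h'.mul (-1))

theorem sum_range (N : ℕ) {L : ℕ → (ℕ → ℂ → ℂ) → ℂ} (h : ∀ k, ThetaComb τ m (L k)) :
    ThetaComb τ m fun Φ => ∑ k ∈ range N, L k Φ := by
  induction N with
  | zero => exact zero
  | succ N ih =>
    simp only [sum_range_succ]
    exact ih.add (h N)

theorem hasDerivAt (hL : ThetaComb τ m L) {Φ : ℂ → ℕ → ℂ → ℂ} {Φ' : ℕ → ℂ → ℂ} {u : ℂ}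
    (h : ∀ b τ', 0 < τ'.im → HasDerivAt (fun u => Φ u b τ') (Φ' b τ') u) :
    HasDerivAt (fun u => L (Φ u)) (L Φ') u := by
  induction hL with
  | term b τ' hτ' => exact h b τ' hτ'
  | zero => exact hasDerivAt_const u 0
  | add _ _ ih ih' => exact ih.add ih'
  | mul c _ ih => exact ih.const_mul c

theorem contDiff (hL : ThetaComb τ m L) {E : Type*} [NormedAddCommGroup E] [NormedSpace ℂ E]
    {Φ : E → ℕ → ℂ → ℂ} (h : ∀ b τ', 0 < τ'.im → ContDiff ℂ 1 fun x => Φ x b τ') :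
    ContDiff ℂ 1 fun x => L (Φ x) := by
  induction hL with
  | term b τ' hτ' => exact h b τ' hτ'
  | zero => exact contDiff_const
  | add _ _ ih ih' => exact ih.add ih'
  | mul c _ ih => exact contDiff_const.mul ih

theorem scale (hL : ThetaComb τ m L) {Φ Ψ : ℕ → ℂ → ℂ} {t : ℂ}
    (h : ∀ (b : ℕ) (τ' : ℂ), 0 < τ'.im → ∀ (A : ℕ) (C : ℤ), b * τ = A * τ' + C →
      Ψ b τ' = t ^ (A * b) * Φ b τ') : L Ψ = t ^ m * L Φ := by
  induction hL with
  | term b τ' hτ' A C heq hm => simp only [h b τ' hτ' A C heq, hm]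
  | zero => exact (mul_zero _).symm
  | add _ _ ih ih' => simp only [ih, ih', mul_add]
  | mul c _ ih => simp only [ih, mul_left_comm c]

theorem const_mul_arg (hL : ThetaComb τ m L) (c : ℂ) {Φ Ψ : ℕ → ℂ → ℂ}
    (h : ∀ b τ', 0 < τ'.im → Ψ b τ' = c * Φ b τ') : L Ψ = c * L Φ := by
  induction hL with
  | term b τ' hτ' => exact h b τ' hτ'
  | zero => exact (mul_zero c).symm
  | add _ _ ih ih' => simp only [ih, ih', mul_add]
  | mul c' _ ih => simp only [ih, mul_left_comm c']

theorem amComb {m : ℕ} (hm : m ≠ 0) (hτ : 0 < τ.im) : ThetaComb τ m (amComb m τ) := by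
  have hmC : (m : ℂ) ≠ 0 := Nat.cast_ne_zero.2 hm
  refine mul _ (add (term m _ (natCast_mul_im_pos hm hτ) 1 0 (by simp) (one_mul m))
    (mul _ (sum_range m fun k =>
      term 1 _ (add_natCast_div_im_pos hm k hτ) m (-k) ?_ (mul_one m))))
  field_simp
  push_cast
  ring

theorem formComb (hτ : 0 < τ.im) (i : Fin 9) :
    ThetaComb τ (formIndex i) fun Φ => formComb τ Φ i := by
  have multiple {b : ℕ} (hb : b ≠ 0) : ThetaComb τ b fun Φ => Φ b (b * τ) :=
    term b _ (natCast_mul_im_pos hb hτ) 1 0 (by simp) (one_mul b)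
  have quotient {a b : ℕ} (ha : a ≠ 0) (hb : b ≠ 0) (k : ℕ) {τ' : ℂ}
      (hτ' : τ' = b * ((τ + k) / (a : ℂ))) : ThetaComb τ (a * b) fun Φ => Φ b τ' := by
    subst hτ'
    refine term b _ (natCast_mul_im_pos hb (add_natCast_div_im_pos ha k hτ)) a (-(b * k)) ?_ rfl
    have haC : (a : ℂ) ≠ 0 := Nat.cast_ne_zero.2 ha
    field_simp
    push_cast
    ring
  fin_cases i
  · exact term 1 τ hτ 1 0 (by simp) rfl
  · exact amComb two_ne_zero hτ
  · exact amComb three_ne_zero hτ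
  · exact term 2 τ hτ 2 0 (by simp) rfl
  · exact amComb (OfNat.ofNat_ne_zero 5) hτ
  · exact mul _ (add (add (mul _ (multiple two_ne_zero))
      (mul _ (quotient two_ne_zero one_ne_zero 0 (by simp))))
      (mul _ (quotient two_ne_zero one_ne_zero 1 (by simp))))
  · exact mul _ (sub (mul _ (multiple three_ne_zero)) (mul _ (sum_range 3 fun k =>
      mul _ (quotient three_ne_zero one_ne_zero k (by simp)))))
  · exact mul _ (sub (sub (mul _ (multiple four_ne_zero))
      (mul _ (term 2 _ (by simpa using hτ) 2 (-1) (by push_cast; ring) rfl)))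
      (mul _ (sum_range 4 fun k => mul _ (quotient four_ne_zero one_ne_zero k (by simp)))))
  · exact mul _ (sub (sub (add (mul _ (multiple (OfNat.ofNat_ne_zero 6)))
      (mul _ (sum_range 2 fun k =>
        mul _ (quotient two_ne_zero three_ne_zero k (by push_cast; ring)))))
      (mul _ (sum_range 3 fun k =>
        mul _ (quotient three_ne_zero two_ne_zero k (by push_cast; ring)))))
      (mul _ (sum_range 6 fun k =>
        mul _ (quotient (OfNat.ofNat_ne_zero 6) one_ne_zero k (by simp)))))

end ThetaComb

/-! ### Expansions at the cusp -/

/-- The function `f` on the upper half-plane is given by the power series `F` in `qExp τ`. -/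
def IsQExpansion (F : PowerSeries ℂ) (f : ℂ → ℂ) : Prop :=
  ∀ ⦃τ : ℂ⦄, 0 < τ.im → HasEv (qExp τ) F (f τ)

namespace IsQExpansion

variable {F G : PowerSeries ℂ} {f g : ℂ → ℂ}

theorem congr (h : IsQExpansion F f) (hfg : ∀ τ, 0 < τ.im → f τ = g τ) : IsQExpansion F g :=
  fun τ hτ => hfg τ hτ ▸ h hτ

theorem add (hF : IsQExpansion F f) (hG : IsQExpansion G g) :
    IsQExpansion (F + G) fun τ => f τ + g τ :=
  fun _ hτ => (hF hτ).add (hG hτ)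

theorem sub (hF : IsQExpansion F f) (hG : IsQExpansion G g) :
    IsQExpansion (F - G) fun τ => f τ - g τ :=
  fun _ hτ => (hF hτ).sub (hG hτ)

theorem mul (hF : IsQExpansion F f) (hG : IsQExpansion G g) :
    IsQExpansion (F * G) fun τ => f τ * g τ :=
  fun _ hτ => (hF hτ).mul (hG hτ)

theorem pow (hF : IsQExpansion F f) (n : ℕ) : IsQExpansion (F ^ n) fun τ => f τ ^ n :=
  fun _ hτ => (hF hτ).pow n

theorem natCast (n : ℕ) : IsQExpansion (n : PowerSeries ℂ) fun _ => n :=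
  fun _ _ => HasEv.natCast n

theorem ofNat (n : ℕ) [n.AtLeastTwo] :
    IsQExpansion (OfNat.ofNat n : PowerSeries ℂ) fun _ => OfNat.ofNat n := by
  exact_mod_cast natCast (OfNat.ofNat n)

theorem X : IsQExpansion PowerSeries.X qExp :=
  fun _ _ => HasEv.X

theorem expand (h : IsQExpansion F f) {b : ℕ} (hb : b ≠ 0) :
    IsQExpansion (PowerSeries.expand b hb F) fun τ => f (b * τ) := by
  intro τ hτ
  refine HasEv.expand hb ?_
  have hq : qExp τ ^ b = qExp (b * τ) := by
    rw [qExp, ← Complex.exp_nat_mul, mul_left_comm, qExp]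
  exact hq ▸ h (natCast_mul_im_pos hb hτ)

theorem multisect (h : IsQExpansion F f) {m : ℕ} (hm : m ≠ 0) :
    IsQExpansion (multisect m F) fun τ => (m : ℂ)⁻¹ * ∑ k ∈ range m, f ((τ + k) / m) := by
  intro τ hτ
  have hmC : (m : ℂ) ≠ 0 := Nat.cast_ne_zero.2 hm
  have hq : qExp (τ / m) ^ m = qExp τ := by
    rw [qExp, ← Complex.exp_nat_mul, qExp]
    congr 1
    field_simp
  have hroot (k : ℕ) : exp (2 * Real.pi * I / m) ^ k * qExp (τ / m) = qExp ((τ + k) / m) := by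
    rw [qExp, qExp, ← Complex.exp_nat_mul, ← Complex.exp_add]
    congr 1
    simp only [πC]
    field_simp
    ring
  exact hq ▸ HasEv.multisect hm (Complex.isPrimitiveRoot_exp m hm)
    fun k _ => hroot k ▸ h (add_natCast_div_im_pos hm k hτ)

theorem rescale_neg_one (h : IsQExpansion F f) :
    IsQExpansion (PowerSeries.rescale (-1) F) fun τ => f (τ + 1 / 2) := by
  intro τ hτ
  refine HasEv.rescale ?_
  have hq : -1 * qExp τ = qExp (τ + 1 / 2) := by
    rw [qExp, qExp, mul_add, Complex.exp_add, exp_two_pi_I_mul_half, mul_comm]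
  exact hq ▸ h (by simpa using hτ)

end IsQExpansion

/-! ### The Jacobi theta functions -/

section Formal

variable {k l : Type*} [CommRing k] [CommRing l]

/-- The series `∑ X ^ (n ^ 2)` over the integers `n`, the expansion of `th3 0 (2 τ)`. -/
def th3Series : PowerSeries k := evenThetaSeries false 1 1

/-- The series `∑ X ^ (n ^ 2 - n)` over the integers `n`, which up to the factor `X ^ (1 / 4)` is
the expansion of `th2 0 (2 τ)`. -/
def th2Series : PowerSeries k := PowerSeries.expand 2 two_ne_zero (oddThetaSeries 1 false 1 1)

/-- The expansion of `h0`. -/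
def h0Series : PowerSeries k :=
  th3Series * PowerSeries.expand 3 three_ne_zero th3Series +
    PowerSeries.X * (th2Series * PowerSeries.expand 3 three_ne_zero th2Series)

theorem map_th3Series (φ : k →+* l) : PowerSeries.map φ th3Series = th3Series := by
  simp [th3Series, map_evenThetaSeries]

theorem map_th2Series (φ : k →+* l) : PowerSeries.map φ th2Series = th2Series := by
  simp [th2Series, map_oddThetaSeries, PowerSeries.map_expand]

theorem map_h0Series (φ : k →+* l) : PowerSeries.map φ h0Series = h0Series := by
  simp [h0Series, map_th3Series, map_th2Series, PowerSeries.map_expand]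

end Formal

theorem isQExpansion_th3Series : IsQExpansion th3Series fun τ => th3 0 (2 * τ) := by
  intro τ hτ
  have hτ2 : 0 < (2 * τ).im := by simpa using hτ
  have hjet : th3 0 (2 * τ) = thetaCharJet false 0 0 0 (2 * τ) := by
    rw [← (hasSum_thetaCharJet false 0 0 0 hτ2).tsum_eq]
    simp [th3, thetaCharTerm]
  have h := hasEv_evenThetaSeries exp_two_pi_I_zero (one_pow 2) false 0 hτ2
  rw [one_mul, show πC * I * (2 * τ) = 2 * πC * I * τ by ring] at h
  simpa [hjet, th3Series, qExp] using h

theorem isQExpansion_th2Series :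
    IsQExpansion th2Series fun τ => exp (-(πC * I * τ / 2)) * th2 0 (2 * τ) := by
  have h : IsQExpansion (oddThetaSeries 1 false 1 1) fun τ =>
      exp (-(πC * I * τ / 4)) * th2 0 τ := by
    intro τ hτ
    have hjet : th2 0 τ = thetaCharJet false 0 (1 / 2) 0 τ := by
      rw [← (hasSum_thetaCharJet false 0 (1 / 2) 0 hτ).tsum_eq]
      simp [th2, thetaCharTerm]
    simpa [hjet] using hasEv_oddThetaSeries exp_two_pi_I_zero (one_pow 2) false 0 hτ
  refine (h.expand two_ne_zero).congr fun τ _ => ?_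
  push_cast
  ring_nf

theorem isQExpansion_th2_pow_four :
    IsQExpansion (PowerSeries.X * th2Series ^ 4) fun τ => th2 0 (2 * τ) ^ 4 := by
  refine (IsQExpansion.X.mul (isQExpansion_th2Series.pow 4)).congr fun τ _ => ?_
  have hq : qExp τ * exp (-(πC * I * τ / 2)) ^ 4 = 1 := by
    rw [qExp, ← Complex.exp_nat_mul, ← Complex.exp_add, ← Complex.exp_zero]
    congr 1
    push_cast
    ring
  rw [mul_pow, ← mul_assoc, hq, one_mul]

theorem isQExpansion_h0Series : IsQExpansion h0Series h0 := by
  refine ((isQExpansion_th3Series.mul (isQExpansion_th3Series.expand three_ne_zero)).add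
    (IsQExpansion.X.mul
      (isQExpansion_th2Series.mul (isQExpansion_th2Series.expand three_ne_zero)))).congr
    fun τ _ => ?_
  have hq : qExp τ * (exp (-(πC * I * τ / 2)) * exp (-(πC * I * (3 * τ) / 2))) = 1 := by
    rw [qExp, ← Complex.exp_add, ← Complex.exp_add, ← Complex.exp_zero]
    congr 1
    ring
  rw [h0, Nat.cast_ofNat, show 2 * (3 * τ) = 6 * τ by ring]
  linear_combination th2 0 (2 * τ) * th2 0 (6 * τ) * hq

theorem th3_add_one (τ : ℂ) : th3 0 (τ + 1) = th4 0 τ := by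
  refine tsum_congr fun n => ?_
  have hparity : exp (πC * I * (n : ℂ) ^ 2) = (-1) ^ n := by
    have hn : Even (n ^ 2) ↔ Even n := Int.even_pow' two_ne_zero
    rw [show πC * I * (n : ℂ) ^ 2 = 2 * πC * I * (1 / 2) * (n ^ 2 : ℤ) by push_cast; ring,
      exp_mul_intCast exp_two_pi_I_mul_half]
    rcases Int.even_or_odd n with h | h
    · rw [h.neg_one_zpow, (hn.2 h).neg_one_zpow]
    · rw [h.neg_one_zpow, h.pow.neg_one_zpow]
  rw [show πC * I * (τ + 1) * (n : ℂ) ^ 2 = πC * I * n ^ 2 + πC * I * τ * n ^ 2 by ring,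
    Complex.exp_add, hparity]
  simp

theorem th2_add_one (τ : ℂ) : th2 0 (τ + 1) = exp (πC * I / 4) * th2 0 τ := by
  rw [th2, th2, ← tsum_mul_left]
  refine tsum_congr fun n => ?_
  have hexponent : πC * I * (τ + 1) * ((n : ℂ) - 1 / 2) ^ 2 =
      (n * (n - 1) / 2 : ℤ) * (2 * Real.pi * I) + πC * I / 4 +
        πC * I * τ * ((n : ℂ) - 1 / 2) ^ 2 := by
    obtain ⟨c, hc⟩ : (2 : ℤ) ∣ n * (n - 1) := (Int.even_mul_pred_self n).two_dvd
    have hcC : (n : ℂ) * (n - 1) = 2 * c := by exact_mod_cast congrArg (Int.cast (R := ℂ)) hc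
    rw [hc, Int.mul_ediv_cancel_left _ two_ne_zero, πC]
    linear_combination Real.pi * I * hcC
  rw [hexponent, Complex.exp_add, Complex.exp_add, Complex.exp_int_mul_two_pi_mul_I]
  ring

theorem th2_add_one_pow_four (τ : ℂ) : th2 0 (τ + 1) ^ 4 = -th2 0 τ ^ 4 := by
  have h : exp (πC * I / 4) ^ 4 = -1 := by
    rw [← exp_two_pi_I_mul_half, ← Complex.exp_nat_mul]
    congr 1
    push_cast
    ring
  rw [th2_add_one, mul_pow, h, neg_one_mul]

/-! ### The formal expansions of the nine forms -/

section Formal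

variable {k l : Type*} [CommRing k] [CommRing l]

/-- The expansion of `(m ^ 3 + 1) A_m`, given the expansions `F b` of the functions
`Theta τ (b z)`. -/
def amSeries {m : ℕ} (hm : m ≠ 0) (F : ℕ → PowerSeries k) : PowerSeries k :=
  ((m ^ 3 : ℕ) : PowerSeries k) * PowerSeries.expand m hm (F m) + multisect m (F 1)

/-- The expansions of the multiples `formScale i * nineForms i` of the nine forms, given the
expansions `F b` of the functions `Theta τ (b z)`. -/
def formSeries (F : ℕ → PowerSeries k) : Fin 9 → PowerSeries k :=
  ![F 1, amSeries two_ne_zero F, amSeries three_ne_zero F, F 2,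
    amSeries (OfNat.ofNat_ne_zero 5) F,
    16 * (multisect 2 (th3Series ^ 4) * PowerSeries.expand 2 two_ne_zero (F 2)) -
      multisect 2 ((PowerSeries.X * th2Series ^ 4 + th3Series ^ 4) * F 1),
    81 * (h0Series ^ 2 * PowerSeries.expand 3 three_ne_zero (F 3)) -
      multisect 3 (h0Series ^ 2 * F 1),
    256 * (PowerSeries.rescale (-1) (th3Series ^ 4) * PowerSeries.expand 4 four_ne_zero (F 4)) -
      16 * PowerSeries.rescale (-1) (th3Series ^ 4 * F 2) -
      multisect 4 (PowerSeries.X * th2Series ^ 4 * F 1),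
    648 * (h0Series ^ 2 * PowerSeries.expand 6 (OfNat.ofNat_ne_zero 6) (F 6)) +
      81 * multisect 2 (PowerSeries.expand 2 two_ne_zero (h0Series ^ 2) *
        PowerSeries.expand 3 three_ne_zero (F 3)) -
      8 * multisect 3 (h0Series ^ 2 * PowerSeries.expand 2 two_ne_zero (F 2)) -
      multisect 6 (PowerSeries.expand 2 two_ne_zero (h0Series ^ 2) * F 1)]

/-- The factors by which `formSeries` differs from the expansions of the nine forms, chosen so
that its coefficients are integral combinations of those of the theta functions. -/
def formScale : Fin 9 → ℂ := ![1, 9, 28, 1, 126, 15, 80, 240, 720]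

theorem map_formSeries (φ : k →+* l) (F : ℕ → PowerSeries k) (i : Fin 9) :
    PowerSeries.map φ (formSeries F i) = formSeries (fun b => PowerSeries.map φ (F b)) i := by
  fin_cases i <;>
    simp [formSeries, amSeries, map_th3Series, map_th2Series, map_h0Series,
      PowerSeries.map_expand, map_multisect, ← PowerSeries.rescale_map,
      map_ofNat (PowerSeries.map φ)]

end Formal

section

variable {F : ℕ → PowerSeries ℂ} {Φ : ℕ → ℂ → ℂ} (h : ∀ b, IsQExpansion (F b) (Φ b))
include h

theorem isQExpansion_amSeries {m : ℕ} (hm : m ≠ 0) :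
    IsQExpansion (amSeries hm F) fun τ => ((m : ℂ) ^ 3 + 1) * amComb m τ Φ := by
  refine (((IsQExpansion.natCast (m ^ 3)).mul ((h m).expand hm)).add
    ((h 1).multisect hm)).congr fun τ _ => ?_
  have hsum : ((m : ℂ) ^ 3 + 1) ≠ 0 := by exact_mod_cast Nat.succ_ne_zero (m ^ 3)
  have hmC : (m : ℂ) ≠ 0 := Nat.cast_ne_zero.2 hm
  rw [amComb]
  push_cast
  field_simp

theorem isQExpansion_formSeries_B2 :
    IsQExpansion (formSeries F 5) fun τ => formScale 5 * formComb τ Φ 5 := by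
  have hth3 := isQExpansion_th3Series.pow 4
  refine (((IsQExpansion.ofNat 16).mul
    ((hth3.multisect two_ne_zero).mul ((h 2).expand two_ne_zero))).sub
    (((isQExpansion_th2_pow_four.add hth3).mul (h 1)).multisect two_ne_zero)).congr fun τ _ => ?_
  have harg (k : ℕ) : 2 * ((τ + k) / ((2 : ℕ) : ℂ)) = τ + k := by push_cast; ring
  simp only [formScale, formComb, harg, ee1, ee2, ee3, sum_range_succ, sum_range_zero,
    Nat.cast_one, th3_add_one, th2_add_one_pow_four]
  simp
  ring

theorem isQExpansion_formSeries_B3 :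
    IsQExpansion (formSeries F 6) fun τ => formScale 6 * formComb τ Φ 6 := by
  refine (((IsQExpansion.ofNat 81).mul
    ((isQExpansion_h0Series.pow 2).mul ((h 3).expand three_ne_zero))).sub
    (((isQExpansion_h0Series.pow 2).mul (h 1)).multisect three_ne_zero)).congr fun τ _ => ?_
  simp [formScale, formComb]
  ring

theorem isQExpansion_formSeries_B4 :
    IsQExpansion (formSeries F 7) fun τ => formScale 7 * formComb τ Φ 7 := by
  have hth3 := isQExpansion_th3Series.pow 4
  refine ((((IsQExpansion.ofNat 256).mul
    (hth3.rescale_neg_one.mul ((h 4).expand four_ne_zero))).sub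
    ((IsQExpansion.ofNat 16).mul (hth3.mul (h 2)).rescale_neg_one)).sub
    ((isQExpansion_th2_pow_four.mul (h 1)).multisect four_ne_zero)).congr fun τ _ => ?_
  have hhalf : 2 * (τ + 1 / 2) = 2 * τ + 1 := by ring
  have hquarter (k : ℕ) : 2 * ((τ + k) / ((4 : ℕ) : ℂ)) = (τ + k) / 2 := by push_cast; ring
  simp only [formScale, formComb, hhalf, hquarter, th3_add_one]
  simp
  ring

theorem isQExpansion_formSeries_B6 :
    IsQExpansion (formSeries F 8) fun τ => formScale 8 * formComb τ Φ 8 := by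
  have hh0 := isQExpansion_h0Series.pow 2
  have hh0' := hh0.expand two_ne_zero
  refine (((((IsQExpansion.ofNat 648).mul (hh0.mul ((h 6).expand _))).add
    ((IsQExpansion.ofNat 81).mul
      ((hh0'.mul ((h 3).expand three_ne_zero)).multisect two_ne_zero))).sub
    ((IsQExpansion.ofNat 8).mul
      ((hh0.mul ((h 2).expand two_ne_zero)).multisect three_ne_zero))).sub
    ((hh0'.mul (h 1)).multisect (OfNat.ofNat_ne_zero 6))).congr fun τ _ => ?_
  have harg2 (k : ℕ) : 2 * ((τ + k) / 2) = τ + k := by ring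
  have harg3 (k : ℕ) : 3 * ((τ + k) / 2) = (3 * τ + 3 * k) / 2 := by ring
  have harg23 (k : ℕ) : 2 * ((τ + k) / 3) = (2 * τ + 2 * k) / 3 := by ring
  have harg26 (k : ℕ) : 2 * ((τ + k) / 6) = (τ + k) / 3 := by ring
  simp only [formScale, formComb, Nat.cast_ofNat, harg2, harg3, harg23, harg26]
  simp
  ring

theorem isQExpansion_formSeries (i : Fin 9) :
    IsQExpansion (formSeries F i) fun τ => formScale i * formComb τ Φ i := by
  have ham {m : ℕ} (hm : m ≠ 0) (c : ℂ) (hc : (m : ℂ) ^ 3 + 1 = c) :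
      IsQExpansion (amSeries hm F) fun τ => c * amComb m τ Φ :=
    hc ▸ isQExpansion_amSeries h hm
  fin_cases i
  · exact (h 1).congr fun _ _ => (one_mul _).symm
  · exact ham two_ne_zero 9 (by norm_num)
  · exact ham three_ne_zero 28 (by norm_num)
  · exact (h 2).congr fun _ _ => (one_mul _).symm
  · exact ham (OfNat.ofNat_ne_zero 5) 126 (by norm_num)
  · exact isQExpansion_formSeries_B2 h
  · exact isQExpansion_formSeries_B3 h
  · exact isQExpansion_formSeries_B4 h
  · exact isQExpansion_formSeries_B6 h

end

/-! ### Truncated power series modulo 37 -/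

/-- The list `l` consists of the first coefficients of `F`. The arithmetic below is carried out on
lists of natural numbers because these can be evaluated by the kernel. -/
def Rep (l : List ℕ) (F : PowerSeries (ZMod 37)) : Prop :=
  ∀ i < l.length, PowerSeries.coeff i F = (l.getD i 0 : ℕ)

/-- The list of the first `n` values of `f`. -/
def tabL (n : ℕ) (f : ℕ → ℕ) : List ℕ := (List.range n).map f

/-- The sum of truncated power series. -/
def addL (a b : List ℕ) : List ℕ := List.zipWith (fun x y => (x + y) % 37) a b

/-- The difference of truncated power series. -/
def subL (a b : List ℕ) : List ℕ := List.zipWith (fun x y => (x + 36 * y) % 37) a b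

/-- A multiple of a truncated power series. -/
def smulL (c : ℕ) (a : List ℕ) : List ℕ := a.map fun x => c * x % 37

/-- The product of truncated power series. The branch for `0` makes products with sparse series
cheap. -/
def mulL : List ℕ → List ℕ → List ℕ
  | [], _ => []
  | 0 :: as, b => 0 :: mulL as b
  | a :: as, b => addL (smulL a b) (0 :: mulL as b)

/-- The power series `1`, truncated. -/
def oneL (n : ℕ) : List ℕ := 1 :: List.replicate n 0

/-- The product of a list of truncated power series. -/
def prodL (n : ℕ) : List (List ℕ) → List ℕ
  | [] => oneL n
  | a :: as => mulL a (prodL n as)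

/-- The truncation of `multisect m`. -/
def multisectL (m : ℕ) (l : List ℕ) : List ℕ :=
  tabL ((l.length + m - 1) / m) fun i => l.getD (m * i) 0

/-- The truncation of `PowerSeries.expand b`. -/
def expandL (b : ℕ) (l : List ℕ) : List ℕ :=
  tabL (b * l.length) fun i => if i % b = 0 then l.getD (i / b) 0 else 0

/-- The truncation of `PowerSeries.rescale (-1)`. -/
def negL (l : List ℕ) : List ℕ :=
  tabL l.length fun i => 36 ^ i * l.getD i 0 % 37

/-- The truncation of `sparse g d`. -/
def sparseL (n : ℕ) (g d : ℕ → ℕ) : List ℕ :=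
  tabL n fun i => (∑ r ∈ range (i + 1), if g r = i then d r else 0) % 37

theorem length_tabL (n : ℕ) (f : ℕ → ℕ) : (tabL n f).length = n := by simp [tabL]

theorem getD_tabL {n i : ℕ} (f : ℕ → ℕ) (h : i < n) : (tabL n f).getD i 0 = f i := by
  simp [tabL, h]

theorem natCast_thirtySix : ((36 : ℕ) : ZMod 37) = -1 := by decide

namespace Rep

variable {a b l : List ℕ} {F G : PowerSeries (ZMod 37)}

theorem coeff_eq_getElem (h : Rep l F) {i : ℕ} (hi : i < l.length) :
    PowerSeries.coeff i F = (l[i] : ℕ) := by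
  rw [h i hi, List.getD_eq_getElem _ _ hi]

theorem of_getElem (h : ∀ (i : ℕ) (hi : i < l.length), PowerSeries.coeff i F = (l[i] : ℕ)) :
    Rep l F := fun i hi => by
  rw [h i hi, List.getD_eq_getElem _ _ hi]

theorem tab {n : ℕ} {f : ℕ → ℕ} (h : ∀ i < n, PowerSeries.coeff i F = (f i : ℕ)) :
    Rep (tabL n f) F := by
  intro i hi
  rw [length_tabL] at hi
  rw [getD_tabL f hi, h i hi]

theorem add (ha : Rep a F) (hb : Rep b G) : Rep (addL a b) (F + G) := by
  refine of_getElem fun i hi => ?_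
  obtain ⟨hia, hib⟩ := lt_min_iff.1 (List.length_zipWith.symm.trans_gt hi)
  simp only [addL, List.getElem_zipWith]
  rw [map_add, ha.coeff_eq_getElem hia, hb.coeff_eq_getElem hib, ZMod.natCast_mod, Nat.cast_add]

theorem sub (ha : Rep a F) (hb : Rep b G) : Rep (subL a b) (F - G) := by
  refine of_getElem fun i hi => ?_
  obtain ⟨hia, hib⟩ := lt_min_iff.1 (List.length_zipWith.symm.trans_gt hi)
  simp only [subL, List.getElem_zipWith]
  rw [map_sub, ha.coeff_eq_getElem hia, hb.coeff_eq_getElem hib, ZMod.natCast_mod, Nat.cast_add,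
    Nat.cast_mul, natCast_thirtySix, neg_one_mul, sub_eq_add_neg]

theorem smul (c : ℕ) (ha : Rep a F) : Rep (smulL c a) (c * F) := by
  refine of_getElem fun i hi => ?_
  simp only [smulL, List.getElem_map]
  rw [ZMod.natCast_mod, Nat.cast_mul, ← ha.coeff_eq_getElem, ← map_natCast (PowerSeries.C),
    PowerSeries.coeff_C_mul]

theorem ofNat_mul (c : ℕ) [c.AtLeastTwo] (ha : Rep a F) :
    Rep (smulL c a) ((OfNat.ofNat c : PowerSeries (ZMod 37)) * F) := smul c ha

theorem X_mul (ha : Rep a F) : Rep (0 :: a) (PowerSeries.X * F) := by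
  intro i hi
  cases i with
  | zero => simp
  | succ i =>
    rw [PowerSeries.coeff_succ_X_mul, List.getD_cons_succ]
    exact ha i (by simpa using hi)

theorem mul (ha : Rep a F) (hb : Rep b G) : Rep (mulL a b) (F * G) := by
  induction a generalizing F with
  | nil => exact fun i hi => absurd hi (Nat.not_lt_zero i)
  | cons c as ih =>
    set F' : PowerSeries (ZMod 37) := PowerSeries.mk fun p => PowerSeries.coeff (p + 1) F
    have htail : Rep as F' := by
      intro i hi
      rw [PowerSeries.coeff_mk, ha (i + 1) (by simpa using hi), List.getD_cons_succ]
    have hhead : PowerSeries.constantCoeff F = (c : ZMod 37) := by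
      simpa using ha 0 (by simp)
    have hFG : F * G = (c : PowerSeries (ZMod 37)) * G + PowerSeries.X * (F' * G) := by
      rw [← mul_assoc, ← add_mul, add_comm, ← map_natCast PowerSeries.C, ← hhead,
        ← PowerSeries.eq_X_mul_shift_add_const F]
    rw [hFG]
    rcases c with _ | c
    · simpa [mulL] using X_mul (ih htail)
    · simpa only [mulL] using (smul (c + 1) hb).add (X_mul (ih htail))

theorem one (n : ℕ) : Rep (oneL n) 1 := by
  intro i _
  cases i with
  | zero => simp [oneL]
  | succ i => simp [PowerSeries.coeff_one, oneL]

theorem prod (n : ℕ) {ls : List (List ℕ)} {Fs : List (PowerSeries (ZMod 37))}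
    (h : List.Forall₂ Rep ls Fs) : Rep (prodL n ls) Fs.prod := by
  induction h with
  | nil => exact one n
  | cons h _ ih => rw [List.prod_cons]; exact h.mul ih

theorem prod_ofFn (n : ℕ) {m : ℕ} {f : Fin m → List ℕ} {F : Fin m → PowerSeries (ZMod 37)}
    (h : ∀ i, Rep (f i) (F i)) : Rep (prodL n (List.ofFn f)) (∏ i, F i) := by
  rw [← List.prod_ofFn]
  exact prod n (List.forall₂_iff_get.2 ⟨by simp, fun i _ _ => by simpa using h _⟩)

theorem pow (n m : ℕ) (h : Rep l F) : Rep (prodL n (List.replicate m l)) (F ^ m) := by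
  induction m with
  | zero => exact (pow_zero F).symm ▸ one n
  | succ m ih => rw [pow_succ', List.replicate_succ]; exact h.mul ih

theorem sum_ofFn (n : ℕ) {m : ℕ} {f : Fin m → List ℕ} {F : Fin m → PowerSeries (ZMod 37)}
    (h : ∀ i, Rep (f i) (F i)) :
    Rep ((List.ofFn f).foldr addL (List.replicate n 0)) (∑ i, F i) := by
  induction m with
  | zero => intro i _; simp
  | succ m ih =>
    rw [List.ofFn_succ, List.foldr_cons, Fin.sum_univ_succ]
    exact (h 0).add (ih fun i => h i.succ)

theorem multisect {m : ℕ} (hm : m ≠ 0) (h : Rep l F) : Rep (multisectL m l) (multisect m F) := by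
  refine tab fun i hi => ?_
  rw [E8Jacobi.multisect, PowerSeries.coeff_mk]
  refine h _ ?_
  have hlen := (Nat.le_div_iff_mul_le (Nat.pos_of_ne_zero hm)).1 (Nat.succ_le_of_lt hi)
  rw [Nat.succ_mul, mul_comm] at hlen
  omega

theorem expand {b : ℕ} (hb : b ≠ 0) (h : Rep l F) :
    Rep (expandL b l) (PowerSeries.expand b hb F) := by
  refine tab fun i hi => ?_
  rw [PowerSeries.coeff_expand]
  simp only [Nat.dvd_iff_mod_eq_zero]
  split_ifs
  · exact h _ (Nat.div_lt_of_lt_mul hi)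
  · exact Nat.cast_zero.symm

theorem rescale_neg_one (h : Rep l F) : Rep (negL l) (PowerSeries.rescale (-1) F) := by
  refine tab fun i hi => ?_
  rw [PowerSeries.coeff_rescale, h i hi, ZMod.natCast_mod, Nat.cast_mul, Nat.cast_pow,
    natCast_thirtySix]

theorem sparse (n : ℕ) (g : ℕ → ℕ) {d : ℕ → ℕ} {d' : ℕ → ZMod 37} (hd : ∀ r, d' r = d r) :
    Rep (sparseL n g d) (sparse g d') := by
  refine tab fun i _ => ?_
  rw [E8Jacobi.sparse, PowerSeries.coeff_mk, ZMod.natCast_mod]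
  push_cast
  simp only [hd]

end Rep

/-! ### The Jacobian matrix modulo 37 -/

/-- The truncation of `evenThetaSeries`. -/
def evenL (n : ℕ) (d : Bool) (x y : ℕ) : List ℕ :=
  sparseL n (fun r => r ^ 2) fun r => if d then 2 * r * (x ^ (2 * r) + 36 * y ^ (2 * r))
    else if r = 0 then 1 else x ^ (2 * r) + y ^ (2 * r)

/-- The truncation of `oddThetaSeries`. -/
def oddL (n : ℕ) (ε : ℕ) (d : Bool) (x y : ℕ) : List ℕ :=
  sparseL n tri fun r => if d then
      ε ^ r * (2 * r + 1) * (ε * x ^ (2 * r + 1) + 36 * y ^ (2 * r + 1))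
    else ε ^ r * (ε * x ^ (2 * r + 1) + y ^ (2 * r + 1))

/-- The exponents of the evaluation point, whose coordinates `exp (π i z j)` are the powers
`2 ^ evExp j`. -/
def evExp : Fin 8 → ℕ := ![0, 1, 2, 3, 4, 5, 6, 8]

/-- The precision to which the theta series at `b z` are needed. -/
def thetaPrec : ℕ → ℕ
  | 1 => 25
  | 2 => 8
  | 3 => 3
  | 4 => 2
  | _ => 1

/-- The truncation of `thetaSeries` at the evaluation point; `19` is the inverse of `2`. -/
def thetaL (s : Fin 9) (b : ℕ) : List ℕ :=
  let n := thetaPrec b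
  smulL (if s = 0 then 1 else b)
    (addL (smulL 2 (multisectL 2 (prodL (2 * n) (List.ofFn fun j : Fin 8 =>
        evenL (2 * n) (s = j.succ) ((2 ^ evExp j) ^ b % 37) ((19 ^ evExp j) ^ b % 37)))))
      (0 :: addL
        (prodL n (List.ofFn fun j : Fin 8 =>
          oddL n 1 (s = j.succ) ((2 ^ evExp j) ^ b % 37) ((19 ^ evExp j) ^ b % 37)))
        (prodL n (List.ofFn fun j : Fin 8 =>
          oddL n 36 (s = j.succ) ((2 ^ evExp j) ^ b % 37) ((19 ^ evExp j) ^ b % 37)))))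

/-- The truncation of `th3Series`. -/
def th3L : List ℕ := evenL 25 false 1 1

/-- The truncation of `th2Series`. -/
def th2L : List ℕ := expandL 2 (oddL 13 1 false 1 1)

/-- The truncation of `h0Series`. -/
def h0L : List ℕ :=
  addL (mulL th3L (expandL 3 th3L)) (0 :: mulL th2L (expandL 3 th2L))

/-- The truncation of `amSeries`. -/
def amL (m : ℕ) (F : ℕ → List ℕ) : List ℕ :=
  addL (smulL (m ^ 3) (expandL m (F m))) (multisectL m (F 1))

/-- The truncation of `formSeries`, from truncations of `th3Series ^ 4`, `X * th2Series ^ 4` and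
`h0Series ^ 2`. -/
def formL (A B H : List ℕ) (F : ℕ → List ℕ) : Fin 9 → List ℕ :=
  ![F 1, amL 2 F, amL 3 F, F 2, amL 5 F,
    subL (smulL 16 (mulL (multisectL 2 A) (expandL 2 (F 2))))
      (multisectL 2 (mulL (addL B A) (F 1))),
    subL (smulL 81 (mulL H (expandL 3 (F 3)))) (multisectL 3 (mulL H (F 1))),
    subL (subL (smulL 256 (mulL (negL A) (expandL 4 (F 4)))) (smulL 16 (negL (mulL A (F 2)))))
      (multisectL 4 (mulL B (F 1))),
    subL (subL (addL (smulL 648 (mulL H (expandL 6 (F 6))))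
        (smulL 81 (multisectL 2 (mulL (expandL 2 H) (expandL 3 (F 3))))))
      (smulL 8 (multisectL 3 (mulL H (expandL 2 (F 2))))))
      (multisectL 6 (mulL (expandL 2 H) (F 1)))]

/-- The truncation of the Jacobian matrix at the evaluation point. -/
def jacL (i s : Fin 9) : List ℕ :=
  smulL (if s = 0 then formIndex i else 1)
    (formL (prodL 25 (List.replicate 4 th3L)) (0 :: prodL 25 (List.replicate 4 th2L))
      (prodL 25 (List.replicate 2 h0L)) (thetaL s) i)

/-- Coefficients of a left inverse, up to `X ^ 4`, of the Jacobian matrix, found by computer. -/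
def leftInv : Fin 9 → Fin 9 → List ℕ :=
  ![![[0, 0, 0, 0, 19], [], [], [], [], [], [], [], []],
    ![[14, 23, 10, 8, 1], [23, 22, 9, 28], [3, 7, 2, 16], [7, 31, 4, 15], [0, 7, 29, 2],
      [32, 17, 9], [21, 30], [24, 30, 23], [0, 20]],
    ![[22, 10, 34, 33, 31], [15, 8, 35, 10], [10, 7, 31, 23], [11, 17, 14, 32], [0, 11, 36, 34],
      [8, 27, 18], [33, 22], [6, 26, 30], [0, 5]],
    ![[4, 13, 21, 33, 11], [33, 11, 3, 24], [22, 23, 19, 19], [2, 30, 6, 10], [0, 2, 7, 28],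
      [25, 6, 34], [6, 19], [28, 35, 22], [0, 11]],
    ![[23, 26, 14, 2, 1], [14, 9, 30, 34], [34, 10, 35, 28], [30, 6, 14, 7], [0, 30, 13, 23],
      [5, 32, 25], [16, 24], [13, 7, 8], [0, 17]],
    ![[35, 34, 35, 0, 29], [2, 2, 2, 2], [26, 32, 5, 25], [36, 22, 25, 4], [0, 36, 18, 1],
      [6, 19, 7], [34, 34], [23, 1, 29], [0, 13]],
    ![[20, 7, 9, 33, 12], [17, 10, 28, 11], [36, 2, 12, 30], [10, 2, 10, 13], [0, 10, 17, 4],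
      [14, 9, 29], [30, 19], [29, 27, 15], [0, 18]],
    ![[19, 32, 1, 27, 5], [18, 7, 35, 4], [12, 17, 16, 34], [28, 13, 12, 10], [0, 28, 17, 4],
      [17, 8, 16], [10, 35], [22, 9, 23], [0, 6]],
    ![[6, 4, 28, 26, 5], [31, 15, 28, 1], [33, 11, 1, 29], [3, 8, 8, 26], [0, 3, 21, 18],
      [19, 12, 33], [9, 5], [5, 34, 30], [0, 35]]]

/-- The product of the left inverse and the Jacobian matrix, truncated. -/
def leftInvMulJac (i j : Fin 9) : List ℕ :=
  (List.ofFn fun k : Fin 9 => mulL (leftInv i k ++ List.replicate 5 0) (jacL k j)).foldr addL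
    (List.replicate 5 0)

theorem leftInvMulJac_eq : ∀ j i : Fin 9,
    leftInvMulJac i j = if i = j then [0, 0, 0, 0, 1] else [0, 0, 0, 0, 0] := by
  decide +kernel

namespace Rep

theorem even (n : ℕ) (d : Bool) {x y : ℕ} {x' y' : ZMod 37} (hx : x' = x) (hy : y' = y) :
    Rep (evenL n d x y) (evenThetaSeries d x' y') := by
  refine sparse n _ fun r => ?_
  subst hx hy
  rw [sub_eq_add_neg, ← neg_one_mul, ← natCast_thirtySix]
  split_ifs <;> push_cast <;> ring

theorem odd (n : ℕ) (d : Bool) {e x y : ℕ} {e' x' y' : ZMod 37} (he : e' = e) (hx : x' = x)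
    (hy : y' = y) : Rep (oddL n e d x y) (oddThetaSeries e' d x' y') := by
  refine sparse n _ fun r => ?_
  subst he hx hy
  rw [sub_eq_add_neg, ← neg_one_mul, ← natCast_thirtySix]
  split_ifs <;> push_cast <;> ring

theorem theta (s : Fin 9) (b : ℕ) :
    Rep (thetaL s b) (thetaSeries (fun j => 2 ^ evExp j) (fun j => 19 ^ evExp j) s b) := by
  have hpow (a e : ℕ) : ((a : ZMod 37) ^ e) ^ b = (((a ^ e) ^ b % 37 : ℕ) : ZMod 37) := by
    rw [ZMod.natCast_mod, Nat.cast_pow, Nat.cast_pow]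
  have hscale : (if s = 0 then 1 else (b : PowerSeries (ZMod 37))) =
      ((if s = 0 then 1 else b : ℕ) : PowerSeries (ZMod 37)) := by split_ifs <;> simp
  have heven (j : Fin 8) (n : ℕ) := even n (s = j.succ) (hpow 2 (evExp j)) (hpow 19 (evExp j))
  have hodd (j : Fin 8) (n : ℕ) {e : ℕ} {e' : ZMod 37} (he : e' = e) :=
    odd n (s = j.succ) he (hpow 2 (evExp j)) (hpow 19 (evExp j))
  rw [thetaSeries, hscale]
  exact smul _ (add (ofNat_mul 2 (multisect two_ne_zero (prod_ofFn _ fun j => heven j _)))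
    (X_mul (add (prod_ofFn _ fun j => hodd j _ Nat.cast_one.symm)
      (prod_ofFn _ fun j => hodd j _ natCast_thirtySix.symm))))

theorem th3 : Rep th3L th3Series := even _ _ Nat.cast_one.symm Nat.cast_one.symm

theorem th2 : Rep th2L th2Series :=
  expand two_ne_zero (odd _ _ Nat.cast_one.symm Nat.cast_one.symm Nat.cast_one.symm)

theorem h0 : Rep h0L h0Series :=
  add (mul th3 (expand three_ne_zero th3)) (X_mul (mul th2 (expand three_ne_zero th2)))

variable {Fl : ℕ → List ℕ} {F : ℕ → PowerSeries (ZMod 37)}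

theorem am {m : ℕ} (hm : m ≠ 0) (h : ∀ b, Rep (Fl b) (F b)) : Rep (amL m Fl) (amSeries hm F) :=
  add (smul _ (expand hm (h m))) (multisect hm (h 1))

theorem form (h : ∀ b, Rep (Fl b) (F b)) {A B H : List ℕ} (hA : Rep A (th3Series ^ 4))
    (hB : Rep B (PowerSeries.X * th2Series ^ 4)) (hH : Rep H (h0Series ^ 2)) (i : Fin 9) :
    Rep (formL A B H Fl i) (formSeries F i) := by
  have six_ne_zero := OfNat.ofNat_ne_zero (R := ℕ) 6
  fin_cases i
  · exact h 1
  · exact am two_ne_zero h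
  · exact am three_ne_zero h
  · exact h 2
  · exact am (OfNat.ofNat_ne_zero 5) h
  · exact sub (ofNat_mul 16 (mul (multisect two_ne_zero hA) (expand two_ne_zero (h 2))))
      (multisect two_ne_zero (mul (add hB hA) (h 1)))
  · exact sub (ofNat_mul 81 (mul hH (expand three_ne_zero (h 3))))
      (multisect three_ne_zero (mul hH (h 1)))
  · exact sub (sub
      (ofNat_mul 256 (mul (rescale_neg_one hA) (expand four_ne_zero (h 4))))
      (ofNat_mul 16 (rescale_neg_one (mul hA (h 2))))) (multisect four_ne_zero (mul hB (h 1)))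
  · exact sub (sub (add (ofNat_mul 648 (mul hH (expand six_ne_zero (h 6))))
      (ofNat_mul 81 (multisect two_ne_zero
        (mul (expand two_ne_zero hH) (expand three_ne_zero (h 3))))))
      (ofNat_mul 8 (multisect three_ne_zero (mul hH (expand two_ne_zero (h 2))))))
      (multisect six_ne_zero (mul (expand two_ne_zero hH) (h 1)))

theorem mk_getD (l : List ℕ) (n : ℕ) :
    Rep (l ++ List.replicate n 0) (PowerSeries.mk fun m => ((l.getD m 0 : ℕ) : ZMod 37)) := by
  intro m _
  rw [PowerSeries.coeff_mk]
  rcases lt_or_ge m l.length with h | h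
  · rw [List.getD_append _ _ _ _ h]
  · rw [List.getD_append_right _ _ _ _ h, List.getD_eq_default _ _ h]
    simp

end Rep

/-! ### The formal Jacobian determinant -/

section Jacobian

variable {k l : Type*}

/-- The formal Jacobian matrix of the nine forms, up to the scale `formScale`: the first column
consists of the derivatives in the direction of the index, the others of those in the eight
coordinates. -/
def jacSeries [CommRing k] (x y : Fin 8 → k) : Matrix (Fin 9) (Fin 9) (PowerSeries k) := fun i s =>
  ((if s = 0 then formIndex i else 1 : ℕ) : PowerSeries k) * formSeries (thetaSeries x y s) i

theorem map_jacSeries [CommRing k] [CommRing l] (φ : k →+* l) (x y : Fin 8 → k) :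
    (PowerSeries.map φ).mapMatrix (jacSeries x y) =
      jacSeries (fun j => φ (x j)) (fun j => φ (y j)) := by
  ext1 i s
  simp only [jacSeries, RingHom.mapMatrix_apply, Matrix.map_apply, map_mul, map_natCast,
    map_formSeries, map_thetaSeries]

theorem map_det_jacSeries [CommRing k] [CommRing l] (φ : k →+* l) (x y : Fin 8 → k) :
    PowerSeries.map φ (jacSeries x y).det =
      (jacSeries (fun j => φ (x j)) (fun j => φ (y j))).det := by
  rw [RingHom.map_det, map_jacSeries]

theorem Rep.jac (i s : Fin 9) :
    Rep (jacL i s) (jacSeries (fun j => 2 ^ evExp j) (fun j => 19 ^ evExp j) i s) :=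
  smul _ (form (theta s) (pow _ _ th3) (X_mul (pow _ _ th2)) (pow _ _ h0) i)

theorem det_ne_zero_of_coeff_mul [CommRing k] [IsDomain k] {ι : Type*} [Fintype ι] [DecidableEq ι]
    {T M : Matrix ι ι (PowerSeries k)} {n : ℕ}
    (hlt : ∀ m < n, ∀ i j, PowerSeries.coeff m ((T * M) i j) = 0)
    (heq : ∀ i j, PowerSeries.coeff n ((T * M) i j) = (1 : Matrix ι ι k) i j) : M.det ≠ 0 := by
  let W : Matrix ι ι (PowerSeries k) := fun i j =>
    PowerSeries.mk fun m => PowerSeries.coeff (m + n) ((T * M) i j)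
  have hTM : T * M = (PowerSeries.X ^ n : PowerSeries k) • W := by
    ext1 i j
    ext m
    rw [Matrix.smul_apply, smul_eq_mul, PowerSeries.coeff_X_pow_mul']
    split_ifs with h
    · rw [PowerSeries.coeff_mk, Nat.sub_add_cancel h]
    · exact hlt m (not_le.1 h) i j
  have hconst : (PowerSeries.constantCoeff (R := k)).mapMatrix W = 1 := by
    ext i j
    rw [RingHom.mapMatrix_apply, Matrix.map_apply, ← PowerSeries.coeff_zero_eq_constantCoeff_apply,
      PowerSeries.coeff_mk, zero_add, heq]
  have hW : W.det ≠ 0 := fun h => one_ne_zero (α := k) <| by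
    rw [← Matrix.det_one (n := ι), ← hconst, ← RingHom.map_det, h, map_zero]
  intro h
  have hdet := congrArg Matrix.det hTM
  rw [Matrix.det_mul, h, mul_zero, Matrix.det_smul] at hdet
  exact mul_ne_zero (pow_ne_zero _ (pow_ne_zero _ PowerSeries.X_ne_zero)) hW hdet.symm

theorem det_jacSeries_mod_ne_zero :
    (jacSeries (fun j => 2 ^ evExp j) (fun j => 19 ^ evExp j) :
      Matrix (Fin 9) (Fin 9) (PowerSeries (ZMod 37))).det ≠ 0 := by
  have : Fact (Nat.Prime 37) := ⟨by norm_num⟩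
  let T : Matrix (Fin 9) (Fin 9) (PowerSeries (ZMod 37)) := fun i k =>
    PowerSeries.mk fun n => ((leftInv i k).getD n 0 : ℕ)
  have hTM (i j : Fin 9) : Rep (if i = j then [0, 0, 0, 0, 1] else [0, 0, 0, 0, 0])
      ((T * jacSeries (fun j => 2 ^ evExp j) fun j => 19 ^ evExp j : Matrix _ _ _) i j) := by
    rw [Matrix.mul_apply, ← leftInvMulJac_eq]
    exact Rep.sum_ofFn _ fun k => (Rep.mk_getD _ _).mul (Rep.jac k j)
  refine det_ne_zero_of_coeff_mul (T := T) (n := 4) (fun m hm i j => ?_) fun i j => ?_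
  · have h := hTM i j m
    split_ifs at h <;> interval_cases m <;> simpa using h
  · have h := hTM i j 4
    rw [Matrix.one_apply]
    split_ifs at h ⊢ <;> simpa using h

variable (k) in
/-- The canonical map from `ℤ[1 / 2]` to a field in which `2` is invertible. -/
def awayTwoHom [Field k] [NeZero (2 : k)] : Localization.Away (2 : ℤ) →+* k :=
  IsLocalization.Away.lift (2 : ℤ) (g := Int.castRingHom k) (by simp [NeZero.ne])

theorem awayTwoHom_invSelf [Field k] [NeZero (2 : k)] :
    awayTwoHom k (IsLocalization.Away.invSelf (2 : ℤ)) = 2⁻¹ := by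
  refine eq_inv_of_mul_eq_one_right ?_
  have h := congrArg (awayTwoHom k)
    (IsLocalization.Away.mul_invSelf (S := Localization.Away (2 : ℤ)) (2 : ℤ))
  simpa only [map_mul, algebraMap_int_eq, eq_intCast, Int.cast_ofNat, map_ofNat, map_one] using h

theorem awayTwoHom_injective [Field k] [CharZero k] : Function.Injective (awayTwoHom k) := by
  refine (IsLocalization.lift_injective_iff _).2 fun x y => ?_
  have h : Function.Injective (algebraMap ℤ (Localization.Away (2 : ℤ))) :=
    IsLocalization.injective _ (powers_le_nonZeroDivisors_of_noZeroDivisors two_ne_zero)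
  rw [h.eq_iff, eq_intCast, eq_intCast, Int.cast_inj]

theorem map_awayTwoHom_det_jacSeries [Field k] [NeZero (2 : k)] :
    PowerSeries.map (awayTwoHom k) (jacSeries (fun j => 2 ^ evExp j)
        fun j => IsLocalization.Away.invSelf (2 : ℤ) ^ evExp j).det =
      (jacSeries (fun j => 2 ^ evExp j) (fun j => 2⁻¹ ^ evExp j)).det := by
  simp only [map_det_jacSeries, map_pow, map_ofNat, awayTwoHom_invSelf]

/-- The determinant lives over `ℤ[1 / 2]`, so that it can be tested modulo 37. -/
theorem det_jacSeries_ne_zero [Field k] [CharZero k] :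
    (jacSeries (fun j => 2 ^ evExp j) (fun j => 2⁻¹ ^ evExp j) :
      Matrix (Fin 9) (Fin 9) (PowerSeries k)).det ≠ 0 := by
  have : Fact (Nat.Prime 37) := ⟨by norm_num⟩
  have htwo : (2 : ZMod 37) * 19 = 1 := rfl
  have : NeZero (2 : ZMod 37) := ⟨left_ne_zero_of_mul_eq_one htwo⟩
  have hinv : (2 : ZMod 37)⁻¹ = 19 := inv_eq_of_mul_eq_one_right htwo
  rw [← map_awayTwoHom_det_jacSeries,
    map_ne_zero_iff _ (PowerSeries.map_injective _ awayTwoHom_injective)]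
  refine ne_of_apply_ne (PowerSeries.map (awayTwoHom (ZMod 37))) ?_
  rw [map_awayTwoHom_det_jacSeries, map_zero, hinv]
  exact det_jacSeries_mod_ne_zero

end Jacobian

/-! ### Quasi-periodicity and the index grading -/

theorem add_single_two_mul_mem_E8Lattice {w : Fin 8 → ℝ} (hw : w ∈ E8Lattice) (i : Fin 8) (k : ℤ) :
    w + Pi.single i (2 * k : ℝ) ∈ E8Lattice := by
  have hshift (j : Fin 8) : ∃ l : ℤ, (Pi.single i (2 * k : ℝ) : Fin 8 → ℝ) j = l :=
    ⟨Pi.single (M := fun _ => ℤ) i (2 * k) j, by simp only [Pi.single_apply]; split_ifs <;> simp⟩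
  obtain ⟨hint, m, hm⟩ := hw
  refine ⟨hint.imp (fun h j => ?_) fun h j => ?_, m + k, ?_⟩
  · obtain ⟨⟨n, hn⟩, l, hl⟩ := And.intro (h j) (hshift j)
    exact ⟨n + l, by rw [Pi.add_apply, hn, hl]; push_cast; rfl⟩
  · obtain ⟨⟨n, hn⟩, l, hl⟩ := And.intro (h j) (hshift j)
    exact ⟨n + l, by rw [Pi.add_apply, hn, hl]; push_cast; ring⟩
  · simp only [Pi.add_apply, sum_add_distrib, hm, sum_pi_single', mem_univ, if_true]
    push_cast
    ring

/-- Translation of the lattice by `2 k` times the first coordinate vector. -/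
def latticeShift (k : ℤ) : E8Lattice ≃ E8Lattice where
  toFun w := ⟨w.1 + Pi.single 0 (2 * k : ℝ), add_single_two_mul_mem_E8Lattice w.2 0 k⟩
  invFun w := ⟨w.1 + Pi.single 0 (2 * (-k : ℤ) : ℝ), add_single_two_mul_mem_E8Lattice w.2 0 (-k)⟩
  left_inv w := by simp [add_assoc, ← Pi.single_add]
  right_inv w := by simp [add_assoc, ← Pi.single_add]

theorem exists_intCast_eq_two_mul {w : Fin 8 → ℝ} (hw : w ∈ E8Lattice) (i : Fin 8) :
    ∃ m : ℤ, 2 * cv w i = m := by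
  rcases hw.1 with h | h <;> obtain ⟨n, hn⟩ := h i
  · exact ⟨2 * n, by rw [cv, hn]; push_cast; ring⟩
  · exact ⟨2 * n + 1, by rw [cv, hn]; push_cast; ring⟩

/-- The translation of `z` by `2 N τ` in the first coordinate. -/
def shiftPoint (τ : ℂ) (N : ℕ) (z : Fin 8 → ℂ) : Fin 8 → ℂ :=
  z + Pi.single 0 (2 * N * τ)

/-- The automorphy factor of index one of the translation `shiftPoint`, where `u` is the first
coordinate of the point. -/
def shiftFactor (τ : ℂ) (N : ℕ) (u : ℂ) : ℂ :=
  Complex.exp (-(4 * πC * I * (N ^ 2 * τ + N * u)))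

theorem Theta_shiftPoint (z : Fin 8 → ℂ) (N b A : ℕ) (C : ℤ) {τ τ' : ℂ}
    (h : b * τ = A * τ' + C) :
    Theta τ' (fun i => b * shiftPoint τ N z i) =
      shiftFactor τ N (z 0) ^ (A * b) * Theta τ' fun i => b * z i := by
  rw [Theta, Theta, ← tsum_mul_left, ← (latticeShift (N * A)).tsum_eq fun w : E8Lattice =>
    shiftFactor τ N (z 0) ^ (A * b) * Complex.exp (πC * I * τ' * dotC (cv w.1) (cv w.1) +
      2 * πC * I * dotC (fun i => b * z i) (cv w.1))]
  refine tsum_congr fun w => ?_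
  obtain ⟨m, hm⟩ := exists_intCast_eq_two_mul w.2 0
  have hperiod : Complex.exp ((C * N * m + 2 * N ^ 2 * A * C : ℤ) * (2 * πC * I)) = 1 :=
    Complex.exp_int_mul_two_pi_mul_I _
  rw [shiftFactor, ← Complex.exp_nat_mul, ← Complex.exp_add, ← mul_one (Complex.exp (_ + (_ + _))),
    ← hperiod, ← Complex.exp_add]
  congr 1
  have hzero : cv (latticeShift (N * A) w).1 0 = cv w.1 0 + 2 * (N * A) := by
    simp [latticeShift, cv]
  have hsucc (j : Fin 7) : cv (latticeShift (N * A) w).1 j.succ = cv w.1 j.succ := by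
    simp [latticeShift, cv]
  simp only [dotC, shiftPoint, Fin.sum_univ_succ (n := 7), hzero, hsucc, Pi.add_apply,
    Pi.single_eq_same, Pi.single_eq_of_ne (Fin.succ_ne_zero _), add_zero]
  push_cast
  linear_combination (4 * πC * I * N * cv w.1 0 + 4 * πC * I * A * N ^ 2) * h +
    2 * πC * I * N * C * hm

theorem nineForms_shiftPoint {τ : ℂ} (hτ : 0 < τ.im) (N : ℕ) (z : Fin 8 → ℂ) (i : Fin 9) :
    nineForms i τ (shiftPoint τ N z) =
      shiftFactor τ N (z 0) ^ formIndex i * nineForms i τ z := by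
  rw [nineForms_eq_formComb, nineForms_eq_formComb]
  exact (ThetaComb.formComb hτ i).scale fun b τ' _ A C h => Theta_shiftPoint z N b A C h

theorem norm_shiftFactor (τ : ℂ) (N : ℕ) (u : ℂ) :
    ‖shiftFactor τ N u‖ = Real.exp (4 * Real.pi * N * (N * τ.im + u.im)) := by
  have hexponent : -(4 * πC * I * (N ^ 2 * τ + N * u)) =
      ((4 * Real.pi * N : ℝ) : ℂ) * -(I * ((N : ℝ) * τ + u)) := by
    rw [πC]
    push_cast
    ring
  rw [shiftFactor, Complex.norm_exp, hexponent, Complex.re_ofReal_mul]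
  simp

theorem tendsto_norm_shiftFactor {τ : ℂ} (hτ : 0 < τ.im) (u : ℂ) :
    Filter.Tendsto (fun N => ‖shiftFactor τ N u‖) Filter.atTop Filter.atTop := by
  simp only [norm_shiftFactor]
  refine Real.tendsto_exp_atTop.comp (Filter.Tendsto.atTop_mul_atTop₀ ?_ ?_)
  · exact tendsto_natCast_atTop_atTop.const_mul_atTop (by positivity)
  · exact Filter.tendsto_atTop_add_const_right _ _
      (tendsto_natCast_atTop_atTop.atTop_mul_const hτ)

theorem infinite_range_shiftFactor {τ : ℂ} (hτ : 0 < τ.im) (u : ℂ) :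
    (Set.range fun N => shiftFactor τ N u).Infinite := by
  intro hfin
  refine Filter.not_bddAbove_of_tendsto_atTop (tendsto_norm_shiftFactor hτ u) ?_
  simpa only [← Set.range_comp, Function.comp_def] using (hfin.image fun x : ℂ => ‖x‖).bddAbove

/-! ### The generators as polynomials in the nine forms -/

/-- The generators `a_0, a_2, …, b_6` as functions of the values `e, g, d` of `E4, E6, Δ` and of
the nine forms `A_1, …, A_5, B_2, B_3, B_4, B_6`. -/
def generatorsOfForms (e g d : ℂ) (x : Fin 9 → ℂ) : Fin 11 → ℂ
  | 0 => e / 12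
  | 1 => 6 / (e * d) * (-(e) * x 1 + x 0 ^ 2)
  | 2 => 1 / (9 * e ^ 2 * d ^ 2) *
      (-7 * e ^ 2 * g * x 2 - 20 * e ^ 3 * x 6
        - 9 * e * g * x 0 * x 1 + 30 * e ^ 2 * x 0 * x 5
        + 6 * g * x 0 ^ 3)
  | 3 => 1 / (288 * e ^ 3 * d ^ 3) *
      (576 * e ^ 3 * d * x 3 + 32256 * e ^ 2 * d * x 0 * x 2
        - 9 * e ^ 5 * x 1 ^ 2 - 30 * e ^ 3 * g * x 1 * x 5
        - 25 * e ^ 4 * x 5 ^ 2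
        + (60 * e ^ 4 - 12 * e * g ^ 2) * x 0 ^ 2 * x 1
        + 80 * e ^ 2 * g * x 0 ^ 2 * x 5
        + (-70 * e ^ 3 + 6 * g ^ 2) * x 0 ^ 4)
  | 4 => g / 216
  | 5 => -4 / e * x 0
  | 6 => 5 / (6 * e ^ 2 * d) * (e ^ 2 * x 5 - g * x 0 ^ 2)
  | 7 => 1 / (108 * e ^ 3 * d ^ 2) *
      (-7 * e ^ 5 * x 2 - 20 * e ^ 3 * g * x 6
        - 9 * e ^ 4 * x 0 * x 1 + 30 * e ^ 2 * g * x 0 * x 5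
        + (16 * e ^ 3 - 10 * g ^ 2) * x 0 ^ 3)
  | 8 => 1 / (1728 * e ^ 4 * d ^ 3) *
      (-8640 * e ^ 4 * d * x 7 + 138240 * e ^ 3 * d * x 0 * x 6
        + 9 * e ^ 5 * g * x 1 ^ 2 + 30 * e ^ 6 * x 1 * x 5
        + 25 * e ^ 4 * g * x 5 ^ 2
        - 48 * e ^ 4 * g * x 0 ^ 2 * x 1
        + (-140 * e ^ 5 + 60 * e ^ 2 * g ^ 2) * x 0 ^ 2 * x 5
        + (74 * e ^ 3 * g - 10 * g ^ 3) * x 0 ^ 4)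
  | 9 => 1 / (72 * e ^ 5 * d ^ 3) *
      (-36288 * e ^ 4 * d * x 4 - 294 * e ^ 6 * x 1 * x 2
        - 770 * e ^ 4 * g * x 5 * x 2 - 840 * e ^ 4 * g * x 1 * x 6
        - 2200 * e ^ 5 * x 5 * x 6 + 168 * e ^ 5 * x 0 ^ 2 * x 2
        + 480 * e ^ 3 * g * x 0 ^ 2 * x 6 - 621 * e ^ 5 * x 0 * x 1 ^ 2
        + 3525 * e ^ 4 * x 0 * x 5 ^ 2 + 1224 * e ^ 4 * x 0 ^ 3 * x 1
        - 240 * e ^ 2 * g * x 0 ^ 3 * x 5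
        + (-456 * e ^ 3 + 24 * g ^ 2) * x 0 ^ 5)
  | 10 => 1 / (4478976 * e ^ 6 * d ^ 5) *
      (-19906560 * e ^ 6 * d ^ 2 * x 8
        - 188116992 * e ^ 4 * g * d ^ 2 * x 0 * x 4
        - 5184 * e ^ 7 * g * d * x 1 * x 3
        - 8640 * e ^ 8 * d * x 5 * x 3
        - 103680 * e ^ 8 * d * x 1 * x 7
        - 172800 * e ^ 6 * g * d * x 5 * x 7
        + 12672 * e ^ 6 * g * d * x 0 ^ 2 * x 3
        + 17280 * (5 * e ^ 7 + 9 * e ^ 4 * g ^ 2) * d * x 0 ^ 2 * x 7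
        + 112896 * e ^ 7 * g * d * x 2 ^ 2
        + 645120 * e ^ 8 * d * x 2 * x 6
        + 921600 * e ^ 6 * g * d * x 6 ^ 2
        - 1717632 * e ^ 6 * g * d * x 0 * x 1 * x 2
        - 362880 * (4 * e ^ 7 + 11 * e ^ 4 * g ^ 2) * d * x 0 * x 5 * x 2
        + 483840 * (4 * e ^ 7 - 9 * e ^ 4 * g ^ 2) * d * x 0 * x 1 * x 6
        - 11404800 * e ^ 5 * g * d * x 0 * x 5 * x 6
        + 1161216 * e ^ 5 * g * d * x 0 ^ 3 * x 2
        - 92160 * (37 * e ^ 6 - 9 * e ^ 3 * g ^ 2) * d * x 0 ^ 3 * x 6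
        + (135 * e ^ 9 * g + 54 * e ^ 6 * g ^ 3) * x 1 ^ 3
        + (405 * e ^ 10 + 540 * e ^ 7 * g ^ 2) * x 1 ^ 2 * x 5
        + 1575 * e ^ 8 * g * x 1 * x 5 ^ 2
        + (375 * e ^ 9 + 500 * e ^ 6 * g ^ 2) * x 5 ^ 3
        + (-3159 * e ^ 8 * g + 1701 * e ^ 5 * g ^ 3) * x 0 ^ 2 * x 1 ^ 2
        + (-3060 * e ^ 9 - 1800 * e ^ 6 * g ^ 2) * x 0 ^ 2 * x 1 * x 5
        + (6975 * e ^ 7 * g - 11025 * e ^ 4 * g ^ 3) * x 0 ^ 2 * x 5 ^ 2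
        + (6768 * e ^ 7 * g - 3024 * e ^ 4 * g ^ 3) * x 0 ^ 4 * x 1
        + (4260 * e ^ 8 + 1800 * e ^ 5 * g ^ 2 + 180 * e ^ 2 * g ^ 4) * x 0 ^ 4 * x 5
        + (-3692 * e ^ 6 * g + 504 * e ^ 3 * g ^ 3 - 12 * g ^ 5) * x 0 ^ 6)

/-- The indices of the generators `a_0, a_2, …, b_6`. -/
def generatorIndex : Fin 11 → ℕ := ![0, 2, 3, 4, 0, 1, 2, 3, 4, 5, 6]

theorem abGens_eq_generatorsOfForms (i : Fin 11) (τ : ℂ) (z : Fin 8 → ℂ) :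
    abGens i τ z = generatorsOfForms (E4 τ) (E6 τ) (Dl τ) (fun j => nineForms j τ z) i := by
  fin_cases i <;> rfl

theorem generatorsOfForms_scale (e g d t : ℂ) (x : Fin 9 → ℂ) (i : Fin 11) :
    generatorsOfForms e g d (fun j => t ^ formIndex j * x j) i =
      t ^ generatorIndex i * generatorsOfForms e g d x i := by
  fin_cases i <;> simp [generatorsOfForms, formIndex, generatorIndex] <;> ring

theorem analyticOnNhd_generatorsOfForms (e g d : ℂ) (i : Fin 11) :
    AnalyticOnNhd ℂ (fun x => generatorsOfForms e g d x i) Set.univ := by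
  refine ContDiff.analyticOnNhd ?_
  fin_cases i <;> dsimp [generatorsOfForms] <;> fun_prop

section Affine

variable {K : Type*} [Field K]

theorem exists_eq_of_affine {F : K → K} {c : K} (hc : c ≠ 0) (hF : ∀ x, F x = F 0 + c * x)
    (y : K) : ∃ x, F x = y :=
  ⟨(y - F 0) / c, by rw [hF, mul_div_cancel₀ _ hc, add_sub_cancel]⟩

theorem exists_eq_of_affine₂ {F G : K → K → K} {a b c d : K} (hdet : a * d - b * c ≠ 0)
    (hF : ∀ u v, F u v = F 0 0 + (a * u + b * v)) (hG : ∀ u v, G u v = G 0 0 + (c * u + d * v))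
    (y y' : K) : ∃ u v, F u v = y ∧ G u v = y' := by
  refine ⟨((y - F 0 0) * d - b * (y' - G 0 0)) / (a * d - b * c),
    (a * (y' - G 0 0) - (y - F 0 0) * c) / (a * d - b * c), ?_, ?_⟩
  · rw [hF, mul_div_assoc', mul_div_assoc', ← add_div, ← eq_sub_iff_add_eq', div_eq_iff hdet]
    ring
  · rw [hG, mul_div_assoc', mul_div_assoc', ← add_div, ← eq_sub_iff_add_eq', div_eq_iff hdet]
    ring

end Affine

section Inversion

variable {e g d : ℂ}

theorem exists_generatorsOfForms_low_eq (he : e ≠ 0) (hd : d ≠ 0)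
    (hegd : e ^ 3 - g ^ 2 = 1728 * d) (y : Fin 11 → ℂ) :
    ∃ x0 x1 x2 x5 x6, ∀ x3 x4 x7 x8, ∀ i ∈ ({1, 2, 5, 6, 7} : Finset (Fin 11)),
      generatorsOfForms e g d ![x0, x1, x2, x3, x4, x5, x6, x7, x8] i = y i := by
  obtain ⟨x0, hx0⟩ := exists_eq_of_affine
    (F := fun u => generatorsOfForms e g d ![u, 0, 0, 0, 0, 0, 0, 0, 0] 5)
    (c := -4 / e) (by simp [he]) (fun u => by simp [generatorsOfForms]) (y 5)
  obtain ⟨x1, hx1⟩ := exists_eq_of_affine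
    (F := fun u => generatorsOfForms e g d ![x0, u, 0, 0, 0, 0, 0, 0, 0] 1)
    (c := 6 / (e * d) * -e) (by simp [he, hd]) (fun u => by simp [generatorsOfForms]; ring) (y 1)
  obtain ⟨x5, hx5⟩ := exists_eq_of_affine
    (F := fun u => generatorsOfForms e g d ![x0, x1, 0, 0, 0, u, 0, 0, 0] 6)
    (c := 5 / (6 * e ^ 2 * d) * e ^ 2) (by simp [he, hd])
    (fun u => by simp [generatorsOfForms]; ring) (y 6)
  have hdet : 1 / (9 * e ^ 2 * d ^ 2) * (-7 * e ^ 2 * g) *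
      (1 / (108 * e ^ 3 * d ^ 2) * (-20 * e ^ 3 * g)) -
      1 / (9 * e ^ 2 * d ^ 2) * (-20 * e ^ 3) * (1 / (108 * e ^ 3 * d ^ 2) * (-7 * e ^ 5)) ≠ 0 := by
    have : -140 * e ^ 5 * (e ^ 3 - g ^ 2) ≠ 0 := by simp [hegd, he, hd]
    refine ne_of_eq_of_ne (b := 1 / (9 * e ^ 2 * d ^ 2) * (1 / (108 * e ^ 3 * d ^ 2)) *
      (-140 * e ^ 5 * (e ^ 3 - g ^ 2))) (by ring) (mul_ne_zero (by simp [he, hd]) this)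
  obtain ⟨x2, x6, hx2, hx6⟩ := exists_eq_of_affine₂
    (F := fun u v => generatorsOfForms e g d ![x0, x1, u, 0, 0, x5, v, 0, 0] 2)
    (G := fun u v => generatorsOfForms e g d ![x0, x1, u, 0, 0, x5, v, 0, 0] 7) hdet
    (fun u v => by simp [generatorsOfForms]; ring) (fun u v => by simp [generatorsOfForms]; ring)
    (y 2) (y 7)
  refine ⟨x0, x1, x2, x5, x6, fun _ _ _ _ i hi => ?_⟩
  simp only [mem_insert, mem_singleton] at hi
  rcases hi with rfl | rfl | rfl | rfl | rfl
  · simp [← hx1, generatorsOfForms]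
  · simp [← hx2, generatorsOfForms]
  · simp [← hx0, generatorsOfForms]
  · simp [← hx5, generatorsOfForms]
  · simp [← hx6, generatorsOfForms]

theorem exists_generatorsOfForms_high_eq (he : e ≠ 0) (hd : d ≠ 0) (x0 x1 x2 x5 x6 : ℂ)
    (y : Fin 11 → ℂ) :
    ∃ x3 x4 x7 x8, ∀ i ∈ ({3, 8, 9, 10} : Finset (Fin 11)),
      generatorsOfForms e g d ![x0, x1, x2, x3, x4, x5, x6, x7, x8] i = y i := by
  obtain ⟨x3, hx3⟩ := exists_eq_of_affine
    (F := fun u => generatorsOfForms e g d ![x0, x1, x2, u, 0, x5, x6, 0, 0] 3)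
    (c := 1 / (288 * e ^ 3 * d ^ 3) * (576 * e ^ 3 * d)) (by simp [he, hd])
    (fun u => by simp [generatorsOfForms]; ring) (y 3)
  obtain ⟨x7, hx7⟩ := exists_eq_of_affine
    (F := fun u => generatorsOfForms e g d ![x0, x1, x2, x3, 0, x5, x6, u, 0] 8)
    (c := 1 / (1728 * e ^ 4 * d ^ 3) * (-8640 * e ^ 4 * d)) (by simp [he, hd])
    (fun u => by simp [generatorsOfForms]; ring) (y 8)
  obtain ⟨x4, hx4⟩ := exists_eq_of_affine
    (F := fun u => generatorsOfForms e g d ![x0, x1, x2, x3, u, x5, x6, x7, 0] 9)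
    (c := 1 / (72 * e ^ 5 * d ^ 3) * (-36288 * e ^ 4 * d)) (by simp [he, hd])
    (fun u => by simp [generatorsOfForms]; ring) (y 9)
  obtain ⟨x8, hx8⟩ := exists_eq_of_affine
    (F := fun u => generatorsOfForms e g d ![x0, x1, x2, x3, x4, x5, x6, x7, u] 10)
    (c := 1 / (4478976 * e ^ 6 * d ^ 5) * (-19906560 * e ^ 6 * d ^ 2)) (by simp [he, hd])
    (fun u => by simp [generatorsOfForms]; ring) (y 10)
  refine ⟨x3, x4, x7, x8, fun i hi => ?_⟩
  simp only [mem_insert, mem_singleton] at hi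
  rcases hi with rfl | rfl | rfl | rfl
  · simp [← hx3, generatorsOfForms]
  · simp [← hx7, generatorsOfForms]
  · simp [← hx4, generatorsOfForms]
  · simp [← hx8, generatorsOfForms]

theorem exists_generatorsOfForms_eq (he : e ≠ 0) (hd : d ≠ 0) (hegd : e ^ 3 - g ^ 2 = 1728 * d)
    (y : Fin 11 → ℂ) (hy0 : y 0 = e / 12) (hy4 : y 4 = g / 216) :
    ∃ x, generatorsOfForms e g d x = y := by
  obtain ⟨x0, x1, x2, x5, x6, hlow⟩ := exists_generatorsOfForms_low_eq he hd hegd y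
  obtain ⟨x3, x4, x7, x8, hhigh⟩ :=
    exists_generatorsOfForms_high_eq (g := g) he hd x0 x1 x2 x5 x6 y
  refine ⟨![x0, x1, x2, x3, x4, x5, x6, x7, x8], funext fun i => ?_⟩
  by_cases hi : i ∈ ({1, 2, 5, 6, 7} : Finset (Fin 11))
  · exact hlow x3 x4 x7 x8 i hi
  by_cases hi' : i ∈ ({3, 8, 9, 10} : Finset (Fin 11))
  · exact hhigh i hi'
  obtain rfl | rfl : i = 0 ∨ i = 4 := by
    decide +revert
  exacts [hy0.symm, hy4.symm]

end Inversion

/-! ### The nine forms fill an open set -/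

open Topology

theorem contDiff_thetaChar (e δ : ℂ) {τ : ℂ} (hτ : 0 < τ.im) :
    ContDiff ℂ 1 fun u => thetaChar e δ u τ :=
  Differentiable.contDiff fun u => (hasDerivAt_thetaChar e δ u hτ).differentiableAt

theorem contDiff_Theta {τ : ℂ} (hτ : 0 < τ.im) : ContDiff ℂ 1 (Theta τ) := by
  have hprod (e δ : ℂ) : ContDiff ℂ 1 fun z : Fin 8 → ℂ => ∏ j, thetaChar e δ (z j) τ :=
    contDiff_prod fun j _ => (contDiff_thetaChar e δ hτ).comp (contDiff_apply ℂ ℂ j)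
  rw [show Theta τ = _ from funext fun z => (hasSum_Theta hτ z).tsum_eq]
  exact (contDiff_const.mul ((hprod _ _).add (hprod _ _))).add
    (contDiff_const.mul ((hprod _ _).add (hprod _ _)))

/-- The nine forms at `(τ, (v 1, …, v 8))`, a form of index `m` being multiplied by `v 0 ^ m`. -/
def scaledForms (τ : ℂ) (v : Fin 9 → ℂ) : Fin 9 → ℂ :=
  fun i => v 0 ^ formIndex i * nineForms i τ fun j => v j.succ

theorem contDiff_scaledForms {τ : ℂ} (hτ : 0 < τ.im) : ContDiff ℂ 1 (scaledForms τ) := by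
  refine contDiff_pi.2 fun i => ((contDiff_apply ℂ ℂ 0).pow _).mul ?_
  simp only [nineForms_eq_formComb]
  refine (ThetaComb.formComb hτ i).contDiff fun b τ' hτ' => (contDiff_Theta hτ').comp ?_
  exact contDiff_pi.2 fun j => contDiff_const.mul (contDiff_apply ℂ ℂ j.succ)

/-- The ratio between the value (`s = 0`) or partial derivative (`s = j.succ`) of the theta function
of the lattice and the corresponding `thetaJet`. -/
def jetScale (s : Fin 9) : ℂ := if s = 0 then 1 / 2 else πC * I / 2

theorem jetScale_ne_zero (s : Fin 9) : jetScale s ≠ 0 := by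
  rw [jetScale]
  split_ifs <;> simp [πC_ne_zero]

/-- The Jacobian matrix of `scaledForms τ` at `(1, z)`. -/
def formJacobian (τ : ℂ) (z : Fin 8 → ℂ) : Matrix (Fin 9) (Fin 9) ℂ := fun i s =>
  ((if s = 0 then formIndex i else 1 : ℕ) : ℂ) * (jetScale s * formComb τ (thetaJet z s) i)

theorem nineForms_eq_jetScale_mul {τ : ℂ} (hτ : 0 < τ.im) (z : Fin 8 → ℂ) (i : Fin 9) :
    nineForms i τ z = jetScale 0 * formComb τ (thetaJet z 0) i := by
  rw [nineForms_eq_formComb]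
  refine (ThetaComb.formComb hτ i).const_mul_arg _ fun b τ' hτ' => ?_
  rw [thetaJet_zero z b hτ', jetScale, if_pos rfl]
  ring

theorem hasDerivAt_nineForms_update {τ : ℂ} (hτ : 0 < τ.im) (z : Fin 8 → ℂ) (i : Fin 9)
    (j : Fin 8) : HasDerivAt (fun u => nineForms i τ (Function.update z j u))
      (jetScale j.succ * formComb τ (thetaJet z j.succ) i) (z j) := by
  have hc := ThetaComb.formComb hτ i
  simp only [nineForms_eq_formComb]
  rw [← hc.const_mul_arg (jetScale j.succ) (Φ := thetaJet z j.succ)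
    (Ψ := fun b τ' => jetScale j.succ * thetaJet z j.succ b τ') fun _ _ _ => rfl]
  refine hc.hasDerivAt fun b τ' hτ' => ?_
  rw [jetScale, if_neg (Fin.succ_ne_zero j)]
  exact hasDerivAt_Theta z j b hτ'

theorem hasDerivAt_scaledForms {τ : ℂ} (hτ : 0 < τ.im) (z : Fin 8 → ℂ) (i s : Fin 9) :
    HasDerivAt (fun u => scaledForms τ (Function.update (Fin.cons 1 z : Fin 9 → ℂ) s u) i)
      (formJacobian τ z i s) ((Fin.cons 1 z : Fin 9 → ℂ) s) := by
  cases s using Fin.cases with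
  | zero =>
    have h := (hasDerivAt_pow (formIndex i) (1 : ℂ)).mul_const (nineForms i τ z)
    simpa [scaledForms, formJacobian, nineForms_eq_jetScale_mul hτ] using h
  | succ j =>
    simpa [scaledForms, formJacobian, ← Fin.cons_update] using hasDerivAt_nineForms_update hτ z i j

theorem map_nhds_eq_of_det_ne_zero {𝕜 ι : Type*} [RCLike 𝕜] [Fintype ι] [DecidableEq ι]
    {f : (ι → 𝕜) → ι → 𝕜} {x : ι → 𝕜} {J : Matrix ι ι 𝕜} (hf : ContDiffAt 𝕜 1 f x)
    (hJ : ∀ i s, HasDerivAt (fun u => f (Function.update x s u) i) (J i s) (x s))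
    (hdet : J.det ≠ 0) : Filter.map f (𝓝 x) = 𝓝 (f x) := by
  have hstrict : HasStrictFDerivAt f (fderiv 𝕜 f x) x := hf.hasStrictFDerivAt one_ne_zero
  have hfderiv : (fderiv 𝕜 f x : (ι → 𝕜) →ₗ[𝕜] ι → 𝕜) = Matrix.toLin' J := by
    refine (Pi.basisFun 𝕜 ι).ext fun s => funext fun i => ?_
    have hpartial := (hasFDerivAt_pi'.1 hstrict.hasFDerivAt i).comp_hasDerivAt_of_eq
      (x s) (hasDerivAt_update x s _) (Function.update_eq_self s x).symm
    simpa using hpartial.unique (hJ i s)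
  refine hstrict.map_nhds_eq_of_surj (LinearMap.range_eq_top.2 ?_)
  rw [hfderiv]
  exact Matrix.mulVec_surjective_iff_isUnit.2
    ((Matrix.isUnit_iff_isUnit_det _).2 (isUnit_iff_ne_zero.2 hdet))

theorem map_nhds_scaledForms {τ : ℂ} (hτ : 0 < τ.im) {z : Fin 8 → ℂ}
    (hdet : (formJacobian τ z).det ≠ 0) :
    Filter.map (scaledForms τ) (𝓝 (Fin.cons 1 z)) = 𝓝 (scaledForms τ (Fin.cons 1 z)) :=
  map_nhds_eq_of_det_ne_zero (contDiff_scaledForms hτ).contDiffAt (hasDerivAt_scaledForms hτ z) hdet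

/-! ### Nonvanishing of the Jacobian near the cusp -/

/-- The filter on `ℂ` of approach to the cusp `i∞`. -/
abbrev cusp : Filter ℂ := Filter.comap im Filter.atTop

theorem eventually_cusp_im_pos : ∀ᶠ τ in cusp, 0 < τ.im :=
  Filter.tendsto_comap.eventually (Filter.eventually_gt_atTop 0)

theorem map_qExp_cusp : Filter.map qExp cusp = 𝓝[≠] 0 := by
  have hq : qExp = Function.Periodic.qParam 1 := by
    funext τ
    simp [qExp, πC, Function.Periodic.qParam]
  rw [hq]
  refine le_antisymm (Function.Periodic.qParam_tendsto one_pos) fun s hs => ?_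
  filter_upwards [Function.Periodic.invQParam_tendsto one_pos hs, self_mem_nhdsWithin] with y hy hy0
  simpa [Function.Periodic.qParam_right_inv one_ne_zero hy0] using hy

instance : cusp.NeBot :=
  Filter.map_neBot_iff qExp |>.1 (map_qExp_cusp ▸ inferInstance)

/-- The point, with coordinates multiples of `log 2 / (π i)`, at which the Jacobian of the nine
forms is evaluated. -/
def evPoint (j : Fin 8) : ℂ := evExp j * Complex.log 2 / (πC * I)

theorem exp_evPoint (j : Fin 8) : Complex.exp (πC * I * evPoint j) = 2 ^ evExp j := by
  have h : πC * I ≠ 0 := mul_ne_zero πC_ne_zero I_ne_zero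
  rw [evPoint, mul_div_cancel₀ _ h, Complex.exp_nat_mul, Complex.exp_log two_ne_zero]

theorem hasEv_jacSeries {τ : ℂ} (hτ : 0 < τ.im) (i s : Fin 9) :
    HasEv (qExp τ) (jacSeries (fun j => 2 ^ evExp j) (fun j => 2⁻¹ ^ evExp j) i s)
      (formScale i * ((jetScale s)⁻¹ * formJacobian τ evPoint i s)) := by
  have htheta (b : ℕ) := fun τ' hτ' => hasEv_thetaSeries (τ := τ') evPoint s b hτ'
  simp only [Complex.exp_neg, exp_evPoint, ← inv_pow] at htheta
  have hjac := (HasEv.natCast (if s = 0 then formIndex i else 1)).mul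
    (isQExpansion_formSeries (fun b => htheta b) i hτ)
  rwa [mul_left_comm, ← inv_mul_cancel_left₀ (jetScale_ne_zero s) (_ * formComb _ _ _),
    mul_left_comm (jetScale s)] at hjac

theorem eventually_det_formJacobian_ne_zero :
    ∀ᶠ τ in cusp, (formJacobian τ evPoint).det ≠ 0 := by
  have hdet {τ : ℂ} (hτ : 0 < τ.im) :
      HasEv (qExp τ) (jacSeries (fun j => 2 ^ evExp j) (fun j => 2⁻¹ ^ evExp j)).det
        ((∏ i, formScale i) * ((∏ s, (jetScale s)⁻¹) * (formJacobian τ evPoint).det)) := by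
    rw [← Matrix.det_mul_row, ← Matrix.det_mul_column]
    exact HasEv.det (hasEv_jacSeries hτ)
  have hne := HasEv.eventually_ne_zero det_jacSeries_ne_zero <| by
    rw [← map_qExp_cusp, Filter.eventually_map]
    exact eventually_cusp_im_pos.mono fun τ hτ => ⟨_, hdet hτ⟩
  rw [← map_qExp_cusp, Filter.eventually_map] at hne
  filter_upwards [hne, eventually_cusp_im_pos] with τ h hτ
  exact right_ne_zero_of_mul (right_ne_zero_of_mul (h _ (hdet hτ)))

/-! ### Independence at a fixed `τ` -/

theorem eval_pow_mul_eq_zero {R σ : Type*} [CommRing R] [IsDomain R] {P : MvPolynomial σ R}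
    {m : σ → ℕ} {x : σ → R} {S : Set R} (hS : S.Infinite)
    (h : ∀ t ∈ S, MvPolynomial.eval (fun i => t ^ m i * x i) P = 0) (t : R) :
    MvPolynomial.eval (fun i => t ^ m i * x i) P = 0 := by
  let p : Polynomial R :=
    MvPolynomial.aeval (fun i => Polynomial.X ^ m i * Polynomial.C (x i)) P
  have eval_p (t : R) : p.eval t = MvPolynomial.eval (fun i => t ^ m i * x i) P := by
    rw [← Polynomial.coe_aeval_eq_eval, ← MvPolynomial.aeval_eq_eval, ← AlgHom.comp_apply,
      MvPolynomial.comp_aeval]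
    simp only [map_mul, map_pow, Polynomial.aeval_X, Polynomial.aeval_C,
      Algebra.algebraMap_self_apply]
  have hp : p = 0 := p.eq_zero_of_infinite_isRoot (hS.mono fun t ht => (eval_p t).trans (h t ht))
  rw [← eval_p, hp, Polynomial.eval_zero]

theorem eval_generatorsOfForms_scaledForms {P : MvPolynomial (Fin 11) ℂ} {τ : ℂ} (hτ : 0 < τ.im)
    (hP : ∀ z, MvPolynomial.eval (fun i => abGens i τ z) P = 0) (v : Fin 9 → ℂ) :
    MvPolynomial.eval (generatorsOfForms (E4 τ) (E6 τ) (Dl τ) (scaledForms τ v)) P = 0 := by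
  simp_rw [abGens_eq_generatorsOfForms] at hP
  unfold scaledForms
  rw [funext (generatorsOfForms_scale _ _ _ _ _)]
  refine eval_pow_mul_eq_zero (infinite_range_shiftFactor hτ (v 1)) ?_ (v 0)
  rintro _ ⟨N, rfl⟩
  rw [← hP (shiftPoint τ N fun j => v j.succ)]
  simp_rw [nineForms_shiftPoint hτ, generatorsOfForms_scale]
  rfl

theorem eval_eq_zero_of_forall_abGens {P : MvPolynomial (Fin 11) ℂ} {τ : ℂ} (hτ : GoodTau τ)
    (hP : ∀ z, MvPolynomial.eval (fun i => abGens i τ z) P = 0) {z : Fin 8 → ℂ}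
    (hdet : (formJacobian τ z).det ≠ 0) {y : Fin 11 → ℂ} (hy0 : y 0 = E4 τ / 12)
    (hy4 : y 4 = E6 τ / 216) : MvPolynomial.eval y P = 0 := by
  obtain ⟨hτ, he, -, hd⟩ := hτ
  obtain ⟨x, rfl⟩ := exists_generatorsOfForms_eq he hd (by rw [Dl]; ring) y hy0 hy4
  have analytic : AnalyticOnNhd ℂ
      (fun x => MvPolynomial.aeval (generatorsOfForms (E4 τ) (E6 τ) (Dl τ) x) P) Set.univ :=
    AnalyticOnNhd.aeval_mvPolynomial (analyticOnNhd_generatorsOfForms _ _ _) P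
  have vanishes_near : ∀ᶠ x in 𝓝 (scaledForms τ (Fin.cons 1 z)),
      MvPolynomial.aeval (generatorsOfForms (E4 τ) (E6 τ) (Dl τ) x) P = 0 := by
    rw [← map_nhds_scaledForms hτ hdet, Filter.eventually_map]
    exact .of_forall (eval_generatorsOfForms_scaledForms hτ hP)
  exact analytic.eqOn_zero_of_preconnected_of_eventuallyEq_zero isPreconnected_univ
    (Set.mem_univ _) vanishes_near (Set.mem_univ x)

/-! ### Independence of the Eisenstein series -/

theorem E4_eq (τ : UpperHalfPlane) : E4 τ = ModularForm.E₄ τ := by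
  have hq : ‖qExp τ‖ < 1 := UpperHalfPlane.norm_exp_two_pi_I_lt_one τ
  rw [ModularForm.E₄, EisensteinSeries.q_expansion_bernoulli _ (by decide), E4,
    tsum_pow_div_one_sub_eq_tsum_sigma hq, bernoulli_eq_bernoulli'_of_ne_one (by norm_num),
    bernoulli'_four]
  simp only [zpow_natCast, qExp, πC]
  norm_num

theorem E6_eq (τ : UpperHalfPlane) : E6 τ = ModularForm.E₆ τ := by
  have hq : ‖qExp τ‖ < 1 := UpperHalfPlane.norm_exp_two_pi_I_lt_one τ
  have hb : bernoulli 6 = 1 / 42 := by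
    rw [bernoulli_eq_bernoulli'_of_ne_one (by norm_num)]
    simp [bernoulli'_def 6, Finset.sum_range_succ, Nat.choose,
      bernoulli'_eq_zero_of_odd (n := 5) (by decide) (by norm_num)]
    norm_num
  rw [ModularForm.E₆, EisensteinSeries.q_expansion_bernoulli _ (by decide), E6,
    tsum_pow_div_one_sub_eq_tsum_sigma hq, hb]
  simp only [zpow_natCast, qExp, πC]
  norm_num

theorem Dl_ne_zero {τ : ℂ} (hτ : 0 < τ.im) : Dl τ ≠ 0 := by
  rw [Dl, E4_eq ⟨τ, hτ⟩, E6_eq ⟨τ, hτ⟩, ← ModularForm.discriminant_eq_E₄_cube_sub_E₆_sq]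
  exact ModularForm.discriminant_ne_zero _

theorem E4_eq_comp_ofComplex {τ : ℂ} (hτ : 0 < τ.im) :
    E4 τ = (ModularForm.E₄ ∘ UpperHalfPlane.ofComplex) τ := by
  rw [Function.comp_apply, UpperHalfPlane.ofComplex_apply_of_im_pos hτ, ← E4_eq]

theorem E6_eq_comp_ofComplex {τ : ℂ} (hτ : 0 < τ.im) :
    E6 τ = (ModularForm.E₆ ∘ UpperHalfPlane.ofComplex) τ := by
  rw [Function.comp_apply, UpperHalfPlane.ofComplex_apply_of_im_pos hτ, ← E6_eq]

theorem analyticOnNhd_E4 : AnalyticOnNhd ℂ E4 {τ | 0 < τ.im} :=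
  ((UpperHalfPlane.mdifferentiable_iff.1 ModularForm.E₄.holo').congr fun _ =>
    E4_eq_comp_ofComplex).analyticOnNhd UpperHalfPlane.isOpen_upperHalfPlaneSet

theorem analyticOnNhd_E6 : AnalyticOnNhd ℂ E6 {τ | 0 < τ.im} :=
  ((UpperHalfPlane.mdifferentiable_iff.1 ModularForm.E₆.holo').congr fun _ =>
    E6_eq_comp_ofComplex).analyticOnNhd UpperHalfPlane.isOpen_upperHalfPlaneSet

theorem tendsto_E_cusp {k : ℕ} (hk : 3 ≤ k) (hk2 : Even k) :
    Filter.Tendsto (ModularForm.E hk ∘ UpperHalfPlane.ofComplex) cusp (𝓝 1) := by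
  have hanalytic := ModularFormClass.analyticAt_cuspFunction_zero (ModularForm.E hk) one_pos
    one_mem_strictPeriods_SL
  have hzero : UpperHalfPlane.cuspFunction 1 (ModularForm.E hk) 0 = 1 := by
    rw [← EisensteinSeries.E_qExpansion_coeff_zero hk hk2, UpperHalfPlane.qExpansion_coeff]
    simp
  refine Filter.Tendsto.comp ?_ UpperHalfPlane.tendsto_comap_im_ofComplex
  rw [← hzero]
  exact (hanalytic.continuousAt.tendsto.comp
    (UpperHalfPlane.qParam_tendsto_atImInfty one_pos)).congr fun τ =>
      SlashInvariantFormClass.eq_cuspFunction (ModularForm.E hk) τ one_mem_strictPeriods_SL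
        one_ne_zero

theorem tendsto_E4_cusp : Filter.Tendsto E4 cusp (𝓝 1) :=
  (tendsto_E_cusp (by norm_num) (by decide)).congr' <|
    eventually_cusp_im_pos.mono fun _ hτ => (E4_eq_comp_ofComplex hτ).symm

theorem tendsto_E6_cusp : Filter.Tendsto E6 cusp (𝓝 1) :=
  (tendsto_E_cusp (by norm_num) (by decide)).congr' <|
    eventually_cusp_im_pos.mono fun _ hτ => (E6_eq_comp_ofComplex hτ).symm

theorem eventually_cusp_goodTau : ∀ᶠ τ in cusp, GoodTau τ := by
  filter_upwards [eventually_cusp_im_pos, tendsto_E4_cusp.eventually_ne one_ne_zero,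
    tendsto_E6_cusp.eventually_ne one_ne_zero] with τ hτ h4 h6
  exact ⟨hτ, h4, h6, Dl_ne_zero hτ⟩

/-- The matrix with rows `(1, 0)` and `(N, 1)`, whose automorphy factor `Nτ + 1` takes infinitely
many values. -/
def lowerUnip (N : ℕ) : Matrix.SpecialLinearGroup (Fin 2) ℤ :=
  ⟨!![1, 0; N, 1], by simp⟩

theorem E_lowerUnip_smul {k : ℕ} (hk : 3 ≤ k) (N : ℕ) (τ : UpperHalfPlane) :
    ModularForm.E hk (lowerUnip N • τ) = (N * τ + 1) ^ k * ModularForm.E hk τ := by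
  have := SlashInvariantForm.slash_action_eqn'' (Γ := (Matrix.SpecialLinearGroup.mapGL ℝ).range)
    (ModularForm.E hk) (MonoidHom.mem_range.2 ⟨lowerUnip N, rfl⟩) τ
  rw [← zpow_natCast]
  refine this.trans (congrArg (· ^ (k : ℤ) * _) ?_)
  change (((N : ℤ) : ℝ) : ℂ) * τ + (((1 : ℤ) : ℝ) : ℂ) = _
  simp

theorem E4_lowerUnip_smul (N : ℕ) (τ : UpperHalfPlane) :
    E4 ↑(lowerUnip N • τ) = (N * τ + 1) ^ 4 * E4 τ := by
  rw [E4_eq, E4_eq, E_lowerUnip_smul]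

theorem E6_lowerUnip_smul (N : ℕ) (τ : UpperHalfPlane) :
    E6 ↑(lowerUnip N • τ) = (N * τ + 1) ^ 6 * E6 τ := by
  rw [E6_eq, E6_eq, E_lowerUnip_smul]

theorem eval_E4_E6_eq_zero_of_eventually {F : MvPolynomial (Fin 2) ℂ}
    (hF : ∀ᶠ τ in cusp, MvPolynomial.eval ![E4 τ, E6 τ] F = 0) {τ : ℂ} (hτ : 0 < τ.im) :
    MvPolynomial.eval ![E4 τ, E6 τ] F = 0 := by
  have analytic :
      AnalyticOnNhd ℂ (fun τ => MvPolynomial.aeval ![E4 τ, E6 τ] F) {τ | 0 < τ.im} := by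
    refine AnalyticOnNhd.aeval_mvPolynomial (fun i => ?_) F
    fin_cases i
    exacts [analyticOnNhd_E4, analyticOnNhd_E6]
  obtain ⟨B, -, hB⟩ := (Filter.atTop_basis_Ioi.comap im).eventually_iff.1 hF
  set τ₀ : ℂ := (max 0 B + 1 : ℝ) * I
  have hτ₀ : max 0 B < τ₀.im := by
    simp only [τ₀, im_ofReal_mul, I_im, mul_one, lt_add_one]
  have vanishes_near : ∀ᶠ τ in 𝓝 τ₀, MvPolynomial.eval ![E4 τ, E6 τ] F = 0 := by
    filter_upwards [(isOpen_Ioi.preimage continuous_im).mem_nhds (max_lt_iff.1 hτ₀).2] with τ hτ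
    exact hB hτ
  exact analytic.eqOn_zero_of_preconnected_of_eventuallyEq_zero
    (convex_halfSpace_im_gt 0).isPreconnected (max_lt_iff.1 hτ₀).1 vanishes_near hτ

theorem eval_pow_mul_E4_E6_eq_zero {F : MvPolynomial (Fin 2) ℂ}
    (hF : ∀ τ : ℂ, 0 < τ.im → MvPolynomial.eval ![E4 τ, E6 τ] F = 0) {τ : ℂ} (hτ : 0 < τ.im)
    (t : ℂ) : MvPolynomial.eval ![t ^ 4 * E4 τ, t ^ 6 * E6 τ] F = 0 := by
  have scaled (t : ℂ) : (fun i => t ^ ![4, 6] i * ![E4 τ, E6 τ] i) =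
      ![t ^ 4 * E4 τ, t ^ 6 * E6 τ] := by
    ext i
    fin_cases i <;> rfl
  have hinj : Function.Injective fun N : ℕ => N * τ + 1 := fun M N h => by
    exact_mod_cast mul_right_cancel₀ (UpperHalfPlane.ne_zero ⟨τ, hτ⟩) (add_right_cancel h)
  rw [← scaled]
  refine eval_pow_mul_eq_zero (Set.infinite_range_of_injective hinj) ?_ t
  rintro _ ⟨N, rfl⟩
  lift τ to UpperHalfPlane using hτ
  rw [scaled, ← E4_lowerUnip_smul, ← E6_lowerUnip_smul]
  exact hF _ (UpperHalfPlane.im_pos _)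

theorem infinite_image_of_tendsto {X Y : Type*} [TopologicalSpace Y] [T1Space Y] {l : Filter X}
    [l.NeBot] {f : X → Y} {y : Y} {s : Set X} (hf : Filter.Tendsto f l (𝓝 y))
    (hs : ∀ᶠ x in l, x ∈ s) (hy : ∀ x ∈ s, f x ≠ y) : (f '' s).Infinite := by
  intro hfin
  have hmem : y ∉ f '' s := fun ⟨x, hx, hxy⟩ => hy x hx hxy
  obtain ⟨x, hx, hxs⟩ := ((hf.eventually (hfin.isClosed.isOpen_compl.mem_nhds hmem)).and hs).exists
  exact hx ⟨x, hxs, rfl⟩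

theorem infinite_image_E6_sq_div_E4_cube :
    ((fun τ => E6 τ ^ 2 / E4 τ ^ 3) '' {τ | 0 < τ.im ∧ E4 τ ≠ 0}).Infinite := by
  refine infinite_image_of_tendsto (l := cusp) (y := 1) ?_ ?_ ?_
  · simpa [Pi.div_def] using (tendsto_E6_cusp.pow 2).div (tendsto_E4_cusp.pow 3) (by simp)
  · exact eventually_cusp_goodTau.mono fun τ hτ => ⟨hτ.1, hτ.2.1⟩
  · rintro τ ⟨hτ, h4⟩ h
    rw [div_eq_one_iff_eq (pow_ne_zero 3 h4)] at h
    exact Dl_ne_zero hτ (by rw [Dl, h, sub_self, zero_div])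

theorem eval_eq_zero_of_forall_pow_mul {F : MvPolynomial (Fin 2) ℂ}
    (hF : ∀ τ : ℂ, 0 < τ.im → ∀ t, MvPolynomial.eval ![t ^ 4 * E4 τ, t ^ 6 * E6 τ] F = 0) {x : ℂ}
    (hx : x ≠ 0) (y : ℂ) : MvPolynomial.eval ![x, y] F = 0 := by
  let p : Polynomial ℂ := MvPolynomial.aeval ![Polynomial.C x, Polynomial.X] F
  have eval_p (y : ℂ) : p.eval y = MvPolynomial.eval ![x, y] F := by
    rw [← Polynomial.coe_aeval_eq_eval, ← MvPolynomial.aeval_eq_eval, ← AlgHom.comp_apply,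
      MvPolynomial.comp_aeval]
    congr 2
    ext i
    fin_cases i <;> simp
  have roots_infinite : {y | p.IsRoot y}.Infinite := by
    refine Set.Infinite.of_image (fun y => y ^ 2 / x ^ 3)
      (infinite_image_E6_sq_div_E4_cube.mono ?_)
    rintro _ ⟨τ, ⟨hτ, h4⟩, rfl⟩
    obtain ⟨t, ht⟩ := IsAlgClosed.exists_pow_nat_eq (x / E4 τ) (show 0 < 4 by norm_num)
    obtain rfl : t ^ 4 * E4 τ = x := by rw [ht, div_mul_cancel₀ x h4]
    have ht0 : t ≠ 0 := by
      rintro rfl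
      simp at hx
    refine ⟨t ^ 6 * E6 τ, (eval_p _).trans (hF τ hτ t), ?_⟩
    field_simp
  rw [← eval_p, p.eq_zero_of_infinite_isRoot roots_infinite, Polynomial.eval_zero]

theorem eq_zero_of_eventually_eval_E4_E6 {F : MvPolynomial (Fin 2) ℂ}
    (hF : ∀ᶠ τ in cusp, MvPolynomial.eval ![E4 τ, E6 τ] F = 0) : F = 0 := by
  refine eq_of_eval_eq_of_eval_ne_zero (MvPolynomial.X_ne_zero 0) fun v hv => ?_
  obtain ⟨x, y, rfl⟩ : ∃ x y, v = ![x, y] := ⟨v 0, v 1, by ext i; fin_cases i <;> rfl⟩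
  rw [MvPolynomial.eval_X] at hv
  rw [map_zero]
  exact eval_eq_zero_of_forall_pow_mul (fun _ => eval_pow_mul_E4_E6_eq_zero fun _ =>
    eval_E4_E6_eq_zero_of_eventually hF) hv y

theorem algebraicIndependent_abFun : AlgebraicIndependent ℂ abFun := by
  refine algebraicIndependent_iff.2 fun P hP => MvPolynomial.funext fun w => ?_
  let G : MvPolynomial (Fin 2) ℂ := MvPolynomial.bind₁ (Function.update (Function.update
    (fun i => MvPolynomial.C (w i)) 0 (MvPolynomial.C (1 / 12) * MvPolynomial.X 0)) 4
      (MvPolynomial.C (1 / 216) * MvPolynomial.X 1)) P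
  have eval_G (x y : ℂ) : MvPolynomial.eval ![x, y] G =
      MvPolynomial.eval (Function.update (Function.update w 0 (x / 12)) 4 (y / 216)) P := by
    rw [← MvPolynomial.aeval_eq_eval, MvPolynomial.aeval_bind₁, MvPolynomial.aeval_eq_eval]
    congr 2
    ext i
    fin_cases i <;> simp [div_eq_inv_mul]
  have hG : G = 0 := by
    refine eq_zero_of_eventually_eval_E4_E6 ?_
    filter_upwards [eventually_cusp_goodTau, eventually_det_formJacobian_ne_zero] with τ hτ hdet
    rw [eval_G]
    refine eval_eq_zero_of_forall_abGens hτ (fun z => ?_) hdet (by simp) (by simp)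
    rw [← eval_abFun P (⟨τ, hτ⟩, z), hP, Pi.zero_apply]
  have := eval_G (12 * w 0) (216 * w 4)
  simpa [hG] using this.symm

/-- ψ and ψ̃ are injective ℂ-algebra homomorphisms, with inverses on their
images given by the substitutions α_i ↦ a_i (α_1 ↦ 0), β_j ↦ b_j, resp. α_i ↦ c_i,
β_j ↦ d_j (β_1 ↦ 0); their restrictions to J^{E8}_{*,*} = R ∩ R̃ coincide and give an
injection of J^{E8}_{*,*} into ℂ[α_0,…,α_4,β_0,…,β_6]. -/
theorem psi_psitilde_properties :
    (∀ Q Q' : MvPolynomial (Fin 11) ℂ, ∀ α β : ℕ → ℂ,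
      MvPolynomial.eval (hatGens α β) (Q + Q') =
        MvPolynomial.eval (hatGens α β) Q + MvPolynomial.eval (hatGens α β) Q' ∧
      MvPolynomial.eval (hatGens α β) (Q * Q') =
        MvPolynomial.eval (hatGens α β) Q * MvPolynomial.eval (hatGens α β) Q' ∧
      MvPolynomial.eval (cdhatGens α β) (Q + Q') =
        MvPolynomial.eval (cdhatGens α β) Q + MvPolynomial.eval (cdhatGens α β) Q' ∧
      MvPolynomial.eval (cdhatGens α β) (Q * Q') =
        MvPolynomial.eval (cdhatGens α β) Q * MvPolynomial.eval (cdhatGens α β) Q') ∧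
    (∀ c : ℂ, ∀ α β : ℕ → ℂ,
      MvPolynomial.eval (hatGens α β) (MvPolynomial.C c : MvPolynomial (Fin 11) ℂ) = c ∧
      MvPolynomial.eval (cdhatGens α β) (MvPolynomial.C c : MvPolynomial (Fin 11) ℂ) = c) ∧
    (∀ Q Q' : MvPolynomial (Fin 11) ℂ,
      (∀ α β : ℕ → ℂ, α 0 ≠ 0 →
        MvPolynomial.eval (hatGens α β) Q = MvPolynomial.eval (hatGens α β) Q') →
      Q = Q') ∧
    (∀ Q Q' : MvPolynomial (Fin 11) ℂ,
      (∀ α β : ℕ → ℂ, β 0 ≠ 0 →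
        MvPolynomial.eval (cdhatGens α β) Q = MvPolynomial.eval (cdhatGens α β) Q') →
      Q = Q') ∧
    (∀ Q : MvPolynomial (Fin 11) ℂ, ∀ τ : ℂ, GoodTau τ → ∀ z,
      MvPolynomial.eval (hatGens (fun i => aSW i τ z) (fun j => bSW j τ z)) Q =
        MvPolynomial.eval (fun i => abGens i τ z) Q) ∧
    (∀ Q : MvPolynomial (Fin 11) ℂ, ∀ τ : ℂ, GoodTau τ → ∀ z,
      MvPolynomial.eval (cdhatGens (fun i => cSW i τ z) (fun j => dSW j τ z)) Q =
        MvPolynomial.eval (fun i => cdGens i τ z) Q) ∧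
    (∀ Q Q' : MvPolynomial (Fin 11) ℂ,
      (∀ τ : ℂ, GoodTau τ → ∀ z,
        MvPolynomial.eval (fun i => abGens i τ z) Q =
          MvPolynomial.eval (fun i => cdGens i τ z) Q') →
      (∀ α β : ℕ → ℂ, α 0 ≠ 0 → β 0 ≠ 0 →
        MvPolynomial.eval (hatGens α β) Q = MvPolynomial.eval (cdhatGens α β) Q') ∧
      ∃ Φ : MvPolynomial SV ℂ, ∀ α β : ℕ → ℂ, α 0 ≠ 0 → β 0 ≠ 0 →
        evalSV Φ α β = MvPolynomial.eval (hatGens α β) Q) := by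
  refine ⟨fun Q Q' α β => ⟨map_add _ _ _, map_mul _ _ _, map_add _ _ _, map_mul _ _ _⟩,
    fun c α β => ⟨MvPolynomial.eval_C _, MvPolynomial.eval_C _⟩,
    fun _ _ => eq_of_eval_hatGens_eq, fun _ _ => eq_of_eval_cdhatGens_eq,
    fun Q τ _ z => by rw [hatGens_SW], fun Q τ hτ z => by rw [cdhatGens_cSW_dSW hτ],
    fun Q Q' h => ?_⟩
  have hagree := fun α β => eval_hatGens_eq_eval_cdhatGens (α := α) (β := β)
    algebraicIndependent_abFun h
  obtain ⟨Φ, hΦ⟩ := exists_evalSV_eq_eval_hatGens hagree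
  exact ⟨hagree, Φ, fun α β hα _ => hΦ α β hα⟩

end E8Jacobi
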